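/- Let Ω and Ω' be the interiors of compact convex sets in ℝ³ (viewed inside ℝP³) which are isometric with respect to their Hilbert metrics. If Ω is not a cone, then Ω' is not a cone and every isometry from (Ω,d_Ω) to (Ω',d_{Ω'}) is a projective transformation, i.e. Isom(Ω,Ω') = PGL(Ω,Ω'). -/

import Mathlib

/-!
The isometry `τ` is studied along rays ending at extreme points of `closure Ω`. A chord with an
extreme end is, between any two of its points, the only geodesic, so `τ` maps the ray from `o` to
an extreme point `e` onto a ray from `τ o` to a boundary point `foc Ω' τ e o`, and it acts on the
projective parameter of the ray by a linear change (`RayTo`, `foc_spec`). The extreme point `e`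
*focuses* on a set if `foc Ω' τ e` is constant there.

If three extreme points, affinely independent together with some point `o`, focus on a common
open set around `o` (`LocFoc`), then moving successively towards these three points writes `τ` in
barycentric form, so that `τ` is projective near `o` (`good_of_locFoc`). The projective map then
propagates to all of `Ω`: on a ray to an extreme point it is determined by a piece of that ray, so
the set of points near which it induces `τ` is stable under homotheties centred at extreme points.
Four affinely independent extreme points suffice to connect nearby points by such homotheties, and
`Ω` is connected (`good_global`, `projective_of_locFoc`).

Local focusing comes from two sources. Two extreme points joined by a segment through `Ω` both
focus on `Ω` (`foc_visible`), and they yield a third one focusing locally (`locFoc_of_visible`).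
If no two extreme points see each other through `Ω` (`NoVis`), then linear algebra in the
barycentric coordinates of four affinely independent extreme points shows that either all extreme
points but one are coplanar, or there are exactly six of them, the vertices of a projective
triangular prism (`NoVis.exists_prism`). In a prism, chords between skew edges are unique
geodesics, which makes the three vertices of a base focus on a common open set (`NoVis.locFoc`).

The exceptional case, all extreme points but one on a plane avoiding the last one (`ExtCone`), is
the case of a cone (`isCone_of_extCone`, `extCone_of_isCone`). Projective maps preserve cross
ratios, hence the Hilbert metric (`isometry_of_projective`), and they preserve `ExtCone`
(`extCone_of_projective`), so `Ω'` is not a cone either.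
-/


open Set
open scoped LinearAlgebra.Projectivization
open scoped Classical

noncomputable section

abbrev Euc (n : ℕ) := EuclideanSpace ℝ (Fin n)

/-- `α` and `β` are the two points where the straight line through `x` and `y`
meets the boundary of `Ω`, labeled so that `|α−x| < |α−y|` and `|β−y| < |β−x|`. -/
def IsHilbertPair {n : ℕ} (Ω : Set (Euc n)) (x y α β : Euc n) : Prop :=
  α ∈ frontier Ω ∧ β ∈ frontier Ω ∧
    Collinear ℝ ({α, x, y} : Set (Euc n)) ∧ Collinear ℝ ({β, x, y} : Set (Euc n)) ∧
    dist α x < dist α y ∧ dist β y < dist β x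

/-- The Hilbert metric of `Ω`: `d_Ω(x,y) = ln((|α−y|/|α−x|)·(|β−x|/|β−y|))` for `x ≠ y`
(where `α, β` are as in `IsHilbertPair`; for `x ≠ y` in a convex domain `Ω` such a pair
exists and is unique), and `d_Ω(x,x) = 0` (no such pair exists when `x = y`). -/
def hilbertDist {n : ℕ} (Ω : Set (Euc n)) (x y : Euc n) : ℝ :=
  if h : ∃ p : Euc n × Euc n, IsHilbertPair Ω x y p.1 p.2 then
    Real.log ((dist h.choose.1 y / dist h.choose.1 x) * (dist h.choose.2 x / dist h.choose.2 y))
  else 0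

/-- An isometry of Hilbert geometries: a surjective distance preserving map. -/
def IsHilbertIsometry {n : ℕ} (Ω Ω' : Set (Euc n)) (τ : Euc n → Euc n) : Prop :=
  Set.MapsTo τ Ω Ω' ∧ Set.SurjOn τ Ω Ω' ∧
    ∀ x ∈ Ω, ∀ y ∈ Ω, hilbertDist Ω' (τ x) (τ y) = hilbertDist Ω x y

/-- The standard affine chart `ℝⁿ → ℝPⁿ`, `x ↦ [x : 1]`. -/
def chart {n : ℕ} (x : Euc n) : Projectivization ℝ (Fin (n + 1) → ℝ) :=
  Projectivization.mk ℝ ((Fin.snoc (fun i => x i) 1 : Fin (n + 1) → ℝ))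
    (fun h => one_ne_zero (α := ℝ) (by simpa using congrFun h (Fin.last n)))

/-- The projective transformation of `ℝPⁿ` induced by an element of `GL_{n+1}(ℝ)`
(every element of `PGL_{n+1}(ℝ)` arises this way). -/
def projMap {n : ℕ} (g : (Fin (n + 1) → ℝ) ≃ₗ[ℝ] (Fin (n + 1) → ℝ)) :
    Projectivization ℝ (Fin (n + 1) → ℝ) → Projectivization ℝ (Fin (n + 1) → ℝ) :=
  Projectivization.map (g : (Fin (n + 1) → ℝ) →ₗ[ℝ] (Fin (n + 1) → ℝ)) g.injective

/-- `τ` agrees on `Ω` with (the restriction of) a projective transformation of `ℝPⁿ`. -/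
def IsProjectiveOn {n : ℕ} (Ω : Set (Euc n)) (τ : Euc n → Euc n) : Prop :=
  ∃ g : (Fin (n + 1) → ℝ) ≃ₗ[ℝ] (Fin (n + 1) → ℝ),
    ∀ x ∈ Ω, chart (τ x) = projMap g (chart x)

/-- A ray in `Ω`: the intersection with `Ω` of a Euclidean ray starting at a point of `Ω`. -/
def IsRayIn {n : ℕ} (Ω r : Set (Euc n)) : Prop :=
  ∃ p ∈ Ω, ∃ d : Euc n, d ≠ 0 ∧ r = {x | ∃ t : ℝ, 0 ≤ t ∧ x = p + t • d} ∩ Ω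

/-- A line in `Ω`: the nonempty intersection of a straight line with `Ω`. -/
def IsLineIn {n : ℕ} (Ω L : Set (Euc n)) : Prop :=
  L.Nonempty ∧ ∃ p d : Euc n, d ≠ 0 ∧ L = {x | ∃ t : ℝ, x = p + t • d} ∩ Ω

/-- `a` is an accumulation point of the set `s ⊆ Ω` on the boundary of `Ω`.
For a ray `r` in a convex domain `Ω` there is exactly one such point, denoted `a(r)`. -/
def IsBdryLimit {n : ℕ} (Ω s : Set (Euc n)) (a : Euc n) : Prop :=
  a ∈ frontier Ω ∧ a ∈ closure s

/-- `e` is a focusing point of the isometry `τ : Ω → Ω'`: an extreme point of the closure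
of `Ω` such that for any two rays `r₁, r₂` in `Ω` with `a(r₁) = a(r₂) = e` one has
`a(τ(r₁)) = a(τ(r₂))`. -/
def IsFocusingPoint {n : ℕ} (Ω Ω' : Set (Euc n)) (τ : Euc n → Euc n) (e : Euc n) : Prop :=
  e ∈ Set.extremePoints ℝ (closure Ω) ∧
    ∀ r₁ r₂ : Set (Euc n), IsRayIn Ω r₁ → IsRayIn Ω r₂ →
      IsBdryLimit Ω r₁ e → IsBdryLimit Ω r₂ e →
      ∀ a₁ a₂ : Euc n, IsBdryLimit Ω' (τ '' r₁) a₁ → IsBdryLimit Ω' (τ '' r₂) a₂ → a₁ = a₂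

/-- An extreme line in `Ω`: a line in `Ω` whose closure meets `∂Ω` in extreme points
of the closure of `Ω`. -/
def IsExtremeLine {n : ℕ} (Ω L : Set (Euc n)) : Prop :=
  IsLineIn Ω L ∧ ∀ x ∈ closure L ∩ frontier Ω, x ∈ Set.extremePoints ℝ (closure Ω)

/-- `s` is rigid in `Ω`: for any two points `a, b` of `s` the segment `[a,b]` is the
unique geodesic from `a` to `b` in `(Ω, d_Ω)`, i.e. every point `z` with
`d(a,z) + d(z,b) = d(a,b)` lies on the segment `[a,b]`. -/
def IsRigidSet {n : ℕ} (Ω s : Set (Euc n)) : Prop :=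
  ∀ a ∈ s, ∀ b ∈ s, ∀ z ∈ Ω,
    hilbertDist Ω a z + hilbertDist Ω z b = hilbertDist Ω a b → z ∈ segment ℝ a b

/-- A face of a closed convex set `C`: a convex subset `F ⊆ C` such that whenever an open
segment between two points of `C` meets `F`, the whole closed segment lies in `F`. -/
def IsFace {n : ℕ} (C F : Set (Euc n)) : Prop :=
  Convex ℝ F ∧ IsExtreme ℝ C F

/-- A face of `C` which is neither empty nor all of `C`. -/
def IsProperFace {n : ℕ} (C F : Set (Euc n)) : Prop :=
  IsFace C F ∧ F.Nonempty ∧ F ≠ C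

/-- `Ω` is a cone with vertex `v` and base `B`: `B` is an `(n−1)`-dimensional convex
domain lying in a hyperplane not containing `v`, and `Ω` is the union of the open
segments from `v` to the points of `B`. -/
def IsConeWith {n : ℕ} (Ω : Set (Euc n)) (v : Euc n) (B : Set (Euc n)) : Prop :=
  ∃ (f : Euc n →ₗ[ℝ] ℝ) (c : ℝ), f ≠ 0 ∧ (∀ b ∈ B, f b = c) ∧ f v ≠ c ∧
    B.Nonempty ∧ Convex ℝ B ∧ Bornology.IsBounded B ∧
    B = intrinsicInterior ℝ B ∧
    (affineSpan ℝ B : Set (Euc n)) = {x | f x = c} ∧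
    Ω = ⋃ b ∈ B, openSegment ℝ v b

/-- `Ω` is a cone. -/
def IsCone {n : ℕ} (Ω : Set (Euc n)) : Prop :=
  ∃ v B, IsConeWith Ω v B

/-- `τ` is the restriction to `Ω` of a projective transformation mapping `Ω` onto `Ω'`. -/
def IsProjectiveBetween {n : ℕ} (Ω Ω' : Set (Euc n)) (τ : Euc n → Euc n) : Prop :=
  ∃ g : (Fin (n + 1) → ℝ) ≃ₗ[ℝ] (Fin (n + 1) → ℝ),
    (∀ x ∈ Ω, chart (τ x) = projMap g (chart x)) ∧
    projMap g '' (chart '' Ω) = chart '' Ω'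

/-! ### Convex domains, chords and supporting functionals -/

/-- A (nonempty) convex domain: open, convex and bounded. -/
structure Dom {n : ℕ} (Ω : Set (Euc n)) : Prop where
  op : IsOpen Ω
  cv : Convex ℝ Ω
  bd : Bornology.IsBounded Ω
  ne : Ω.Nonempty

/-- The affine function `ψ` is positive on `Ω`. -/
def PosAff {n : ℕ} (Ω : Set (Euc n)) (ψ : Euc n →ᵃ[ℝ] ℝ) : Prop := ∀ x ∈ Ω, 0 < ψ x

/-- The point `[o + u e]`, in projective notation, of the segment from `o` to `e`: as `u` runs
through `[0, ∞)` it moves from `o` towards `e`. -/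
def pt {n : ℕ} (o e : Euc n) (u : ℝ) : Euc n := (1 + u)⁻¹ • (o + u • e)

/-- `(α, β)` is a chord of `Ω`: two boundary points whose open segment lies in `Ω`. -/
def Chord {n : ℕ} (Ω : Set (Euc n)) (α β : Euc n) : Prop :=
  α ∈ frontier Ω ∧ β ∈ frontier Ω ∧ ∀ t : ℝ, 0 < t → t < 1 → (1 - t) • α + t • β ∈ Ω

section basics
variable {n : ℕ} {Ω : Set (Euc n)}

lemma aff_dec (ψ : Euc n →ᵃ[ℝ] ℝ) (x : Euc n) : ψ x = ψ.linear x + ψ 0 := by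
  have := ψ.map_vadd 0 x
  simpa using this

lemma aff2 (ψ : Euc n →ᵃ[ℝ] ℝ) (x y : Euc n) {a b : ℝ} (h : a + b = 1) :
    ψ (a • x + b • y) = a * ψ x + b * ψ y := by
  rw [aff_dec ψ (a • x + b • y), aff_dec ψ x, aff_dec ψ y, map_add, map_smul, map_smul]
  simp only [smul_eq_mul]
  linear_combination (-ψ 0) * h

lemma aff_line (ψ : Euc n →ᵃ[ℝ] ℝ) (x y : Euc n) (t : ℝ) :
    ψ (x + t • (y - x)) = ψ x + t * (ψ y - ψ x) := by
  rw [aff_dec ψ (x + t • (y - x)), aff_dec ψ x, aff_dec ψ y, map_add, map_smul, map_sub]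
  simp only [smul_eq_mul]
  ring

lemma aff_pt (ψ : Euc n →ᵃ[ℝ] ℝ) (o e : Euc n) {u : ℝ} (hu : 1 + u ≠ 0) :
    ψ (pt o e u) = (1 + u)⁻¹ * (ψ o + u * ψ e) := by
  have : pt o e u = (1 + u)⁻¹ • o + ((1 + u)⁻¹ * u) • e := by
    simp only [pt]; module
  rw [this, aff2 ψ]
  · ring
  · field_simp

lemma Dom.interior_eq (h : Dom Ω) : interior Ω = Ω := h.op.interior_eq

lemma Dom.combo (h : Dom Ω) {x y : Euc n} (hx : x ∈ Ω) (hy : y ∈ closure Ω) {a b : ℝ}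
    (ha : 0 < a) (hb : 0 ≤ b) (hab : a + b = 1) : a • x + b • y ∈ Ω := by
  have := h.cv.combo_interior_closure_mem_interior (by rwa [h.interior_eq]) hy ha hb hab
  rwa [h.interior_eq] at this

lemma Dom.not_frontier (h : Dom Ω) {x : Euc n} (hx : x ∈ Ω) : x ∉ frontier Ω := by
  rw [h.op.frontier_eq]; exact fun h' => h'.2 hx

lemma Dom.frontier_closure {x : Euc n} (hx : x ∈ frontier Ω) : x ∈ closure Ω :=
  frontier_subset_closure hx

lemma Dom.interior_closure (h : Dom Ω) : interior (closure Ω) = Ω := by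
  rw [h.cv.interior_closure_eq_interior_of_nonempty_interior
    (by rw [h.interior_eq]; exact h.ne), h.interior_eq]

lemma Dom.pt_mem (h : Dom Ω) {x y : Euc n} (hx : x ∈ Ω) (hy : y ∈ closure Ω) {u : ℝ}
    (hu : 0 ≤ u) : pt x y u ∈ Ω := by
  have h1 : (0:ℝ) < 1 + u := by linarith
  have : pt x y u = (1 + u)⁻¹ • x + ((1 + u)⁻¹ * u) • y := by
    simp only [pt]; module
  rw [this]
  exact h.combo hx hy (by positivity) (by positivity) (by field_simp)

lemma Dom.compact (h : Dom Ω) : IsCompact (closure Ω) := h.bd.isCompact_closure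

lemma Dom.mem_frontier (h : Dom Ω) {x : Euc n} : x ∈ frontier Ω ↔ x ∈ closure Ω ∧ x ∉ Ω := by
  rw [h.op.frontier_eq]; rfl

/-- A ray issuing from a point of a convex domain meets the boundary at most once. -/
lemma Dom.ray_unique (h : Dom Ω) {p v : Euc n} (hp : p ∈ Ω) {s t : ℝ} (hs : 0 < s) (ht : 0 < t)
    (h1 : p + s • v ∈ frontier Ω) (h2 : p + t • v ∈ frontier Ω) : s = t := by
  have key : ∀ s t : ℝ, 0 < s → 0 < t → p + s • v ∈ frontier Ω → p + t • v ∈ frontier Ω →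
      ¬ s < t := by
    intro s t hs ht h1 h2 hst
    refine h.not_frontier ?_ h1
    have : p + s • v = (1 - s / t) • p + (s / t) • (p + t • v) := by
      have : s = s / t * t := by field_simp
      nth_rw 1 [this]; module
    rw [this]
    refine h.combo hp (Dom.frontier_closure h2) ?_ (by positivity) (by ring)
    rw [sub_pos, div_lt_one ht]; exact hst
  exact le_antisymm (not_lt.1 (key t s ht hs h2 h1)) (not_lt.1 (key s t hs ht h1 h2))

/-- A ray issuing from a point of a convex domain meets the boundary. -/
lemma Dom.ray_exists (h : Dom Ω) {p v : Euc n} (hp : p ∈ Ω) (hv : v ≠ 0) :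
    ∃ t : ℝ, 0 < t ∧ p + t • v ∈ frontier Ω := by
  obtain ⟨R, hR⟩ := h.bd.subset_ball p
  have hvn : 0 < ‖v‖ := norm_pos_iff.2 hv
  set T : ℝ := |R| / ‖v‖ with hT
  have hT0 : 0 ≤ T := by positivity
  have hfar : p + T • v ∉ Ω := by
    intro hmem
    have := hR hmem
    rw [Metric.mem_ball, dist_eq_norm, add_sub_cancel_left, norm_smul, Real.norm_of_nonneg hT0,
      hT, div_mul_cancel₀ _ hvn.ne'] at this
    exact absurd this (not_lt.2 (le_abs_self R))
  have hpre : IsPreconnected ((fun t : ℝ => p + t • v) '' Icc 0 T) :=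
    isPreconnected_Icc.image _ (by fun_prop)
  obtain ⟨t, ht, hz⟩ : ∃ t ∈ Icc 0 T, p + t • v ∈ frontier Ω := by
    by_contra hno
    push Not at hno
    have hcl : p + T • v ∉ closure Ω := fun hc =>
      hno T ⟨hT0, le_rfl⟩ (h.mem_frontier.2 ⟨hc, hfar⟩)
    obtain ⟨z, -, hz1, hz2⟩ := hpre Ω (closure Ω)ᶜ h.op isClosed_closure.isOpen_compl (by
        rintro _ ⟨t, ht, rfl⟩
        by_cases hm : p + t • v ∈ Ω
        · exact Or.inl hm
        · exact Or.inr fun hc => hno t ht (h.mem_frontier.2 ⟨hc, hm⟩))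
      ⟨p, ⟨0, ⟨le_rfl, hT0⟩, by simp⟩, hp⟩ ⟨p + T • v, ⟨T, ⟨hT0, le_rfl⟩, rfl⟩, hcl⟩
    exact hz2 (subset_closure hz1)
  refine ⟨t, lt_of_le_of_ne ht.1 ?_, hz⟩
  rintro rfl
  exact h.not_frontier hp (by simpa using hz)

lemma Dom.exists_chord (h : Dom Ω) {x y : Euc n} (hx : x ∈ Ω) (hy : y ∈ Ω) (hxy : x ≠ y) :
    ∃ α β, Chord Ω α β ∧ ∃ s t : ℝ, 0 < s ∧ s < t ∧ t < 1 ∧ x = (1 - s) • α + s • β ∧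
      y = (1 - t) • α + t • β := by
  obtain ⟨b, hb, hB⟩ := h.ray_exists hy (sub_ne_zero.2 hxy.symm)
  obtain ⟨a, ha, hA⟩ := h.ray_exists hx (sub_ne_zero.2 hxy)
  have hd : 0 < 1 + a + b := by positivity
  have ex : x = (1 - a / (1 + a + b)) • (x + a • (x - y)) +
      (a / (1 + a + b)) • (y + b • (y - x)) := by
    match_scalars <;> field_simp <;> ring
  have ey : y = (1 - (1 + a) / (1 + a + b)) • (x + a • (x - y)) +
      ((1 + a) / (1 + a + b)) • (y + b • (y - x)) := by
    match_scalars <;> field_simp <;> ring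
  refine ⟨x + a • (x - y), y + b • (y - x), ⟨hA, hB, ?_⟩, a / (1 + a + b), (1 + a) / (1 + a + b),
    by positivity, by gcongr; linarith, by rw [div_lt_one hd]; linarith, ex, ey⟩
  intro t ht0 ht1
  set α := x + a • (x - y) with hα
  set β := y + b • (y - x) with hβ
  by_cases hc : t ≤ a / (1 + a + b)
  · set s := a / (1 + a + b) with hs
    have hs0 : 0 < s := by positivity
    have e : (1 - t) • α + t • β = (t / s) • x + (1 - t / s) • α := by
      rw [ex]; match_scalars <;> field_simp <;> ring
    rw [e]
    exact h.combo hx (Dom.frontier_closure hA) (by positivity)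
      (by rw [sub_nonneg, div_le_one hs0]; exact hc) (by ring)
  · push Not at hc
    set s := a / (1 + a + b) with hs
    have hs1 : 0 < 1 - s := by rw [sub_pos, hs, div_lt_one hd]; linarith
    have e : (1 - t) • α + t • β = ((1 - t) / (1 - s)) • x + ((t - s) / (1 - s)) • β := by
      rw [ex]; match_scalars <;> field_simp <;> ring
    rw [e]
    refine h.combo hx (Dom.frontier_closure hB) (div_pos (by linarith) hs1)
      (div_nonneg (by linarith) hs1.le) ?_
    rw [← add_div, div_eq_one_iff_eq hs1.ne']; ring

lemma PosAff.closure {ψ : Euc n →ᵃ[ℝ] ℝ} (hψ : PosAff Ω ψ) {x : Euc n} (hx : x ∈ closure Ω) :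
    0 ≤ ψ x := by
  have hc : Continuous ψ := ψ.continuous_of_finiteDimensional
  exact closure_minimal (fun y hy => (hψ y hy).le) (isClosed_le continuous_const hc) hx

lemma posAff_one : PosAff Ω (AffineMap.const ℝ (Euc n) (1 : ℝ)) := fun _ _ => by simp

/-- Supporting hyperplane at a boundary point, as an affine function positive on `Ω`. -/
lemma Dom.support (h : Dom Ω) {b : Euc n} (hb : b ∉ Ω) :
    ∃ ψ : Euc n →ᵃ[ℝ] ℝ, PosAff Ω ψ ∧ ψ b = 0 := by
  obtain ⟨f, hf⟩ := geometric_hahn_banach_open_point h.cv h.op hb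
  refine ⟨AffineMap.const ℝ (Euc n) (f b) - (f : Euc n →ₗ[ℝ] ℝ).toAffineMap, ?_, by simp⟩
  intro x hx
  simpa using hf x hx

end basics

/-! ### The Hilbert metric through chords and through positive affine functions -/

section hilbert
variable {n : ℕ} {Ω : Set (Euc n)}

lemma Dom.side (h : Dom Ω) {x y α : Euc n} (hx : x ∈ Ω) (hy : y ∈ Ω) (hxy : x ≠ y)
    (hα : α ∈ frontier Ω) (hc : Collinear ℝ ({α, x, y} : Set (Euc n)))
    (hd : dist α x < dist α y) : ∃ s : ℝ, 0 < s ∧ α = x + s • (x - y) := by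
  obtain ⟨v, hv⟩ := (collinear_iff_of_mem (p₀ := x) (by simp)).1 hc
  obtain ⟨r, hr⟩ := hv y (by simp)
  obtain ⟨q, hq⟩ := hv α (by simp)
  simp only [vadd_eq_add] at hr hq
  have hr0 : r ≠ 0 := by
    rintro rfl
    apply hxy; rw [hr]; simp
  have e : α = x + (q / r) • (y - x) := by
    rw [hq, hr]; match_scalars <;> field_simp <;> ring
  set s := q / r with hs
  have e2 : α - y = (s - 1) • (y - x) := by rw [e]; module
  have e1 : α - x = s • (y - x) := by rw [e]; module
  rw [dist_eq_norm, dist_eq_norm, e1, e2, norm_smul, norm_smul] at hd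
  have hlt := lt_of_mul_lt_mul_right hd (norm_nonneg _)
  rw [Real.norm_eq_abs, Real.norm_eq_abs] at hlt
  have hs2 : s < 1 / 2 := by
    have := sq_lt_sq.2 hlt
    nlinarith
  have hs0 : s < 0 := by
    by_contra hneg
    push Not at hneg
    refine h.not_frontier ?_ hα
    have : α = (1 - s) • x + s • y := by rw [e]; module
    rw [this]
    exact h.combo hx (subset_closure hy) (by linarith) hneg (by ring)
  exact ⟨-s, by linarith, by rw [e]; module⟩

lemma Dom.side_unique (h : Dom Ω) {x y α α' : Euc n} (hx : x ∈ Ω) (hy : y ∈ Ω) (hxy : x ≠ y)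
    (hα : α ∈ frontier Ω) (hc : Collinear ℝ ({α, x, y} : Set (Euc n)))
    (hd : dist α x < dist α y)
    (hα' : α' ∈ frontier Ω) (hc' : Collinear ℝ ({α', x, y} : Set (Euc n)))
    (hd' : dist α' x < dist α' y) : α = α' := by
  obtain ⟨s, hs, e⟩ := h.side hx hy hxy hα hc hd
  obtain ⟨t, ht, e'⟩ := h.side hx hy hxy hα' hc' hd'
  rw [e] at hα; rw [e'] at hα'
  rw [e, e', h.ray_unique hx hs ht hα hα']

lemma chord_ne (h : Dom Ω) {α β : Euc n} (hc : Chord Ω α β) : α ≠ β := by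
  rintro rfl
  refine h.not_frontier (hc.2.2 (1 / 2) (by norm_num) (by norm_num)) ?_
  convert hc.1 using 1
  module

/-- The Hilbert distance of two points of a chord, in terms of an affine parameter. -/
lemma Dom.dist_chord (h : Dom Ω) {α β : Euc n} (hc : Chord Ω α β) {s t : ℝ} (hs : 0 < s)
    (hst : s < t) (ht : t < 1) :
    hilbertDist Ω ((1 - s) • α + s • β) ((1 - t) • α + t • β) =
      Real.log (t / s * ((1 - s) / (1 - t))) := by
  have hne := chord_ne h hc
  have hN : 0 < ‖β - α‖ := norm_pos_iff.2 (sub_ne_zero.2 hne.symm)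
  set x := (1 - s) • α + s • β with hx
  set y := (1 - t) • α + t • β with hy
  have hxΩ : x ∈ Ω := hc.2.2 s hs (by linarith)
  have hyΩ : y ∈ Ω := hc.2.2 t (by linarith) ht
  have da : ∀ r : ℝ, 0 < r → dist α ((1 - r) • α + r • β) = r * ‖β - α‖ := by
    intro r hr
    have : (1 - r) • α + r • β - α = r • (β - α) := by module
    rw [dist_comm, dist_eq_norm, this, norm_smul, Real.norm_of_nonneg hr.le]
  have db : ∀ r : ℝ, r < 1 → dist β ((1 - r) • α + r • β) = (1 - r) * ‖β - α‖ := by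
    intro r hr
    have : β - ((1 - r) • α + r • β) = (1 - r) • (β - α) := by module
    rw [dist_eq_norm, this, norm_smul, Real.norm_of_nonneg (by linarith)]
  have hxy : x ≠ y := by
    intro hE
    have h1 := da s hs
    have h2 := da t (by linarith)
    rw [← hx] at h1; rw [← hy, ← hE, h1] at h2
    exact hst.ne (mul_right_cancel₀ hN.ne' h2)
  have hcol : ∀ r : ℝ, Collinear ℝ ({(1 - r) • α + r • β, x, y} : Set (Euc n)) := by
    intro r
    rw [collinear_iff_of_mem (p₀ := x) (by simp)]
    refine ⟨β - α, ?_⟩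
    intro p hp
    rcases hp with rfl | rfl | rfl
    · exact ⟨r - s, by simp only [vadd_eq_add, hx]; module⟩
    · exact ⟨0, by simp⟩
    · exact ⟨t - s, by simp only [vadd_eq_add, hx, hy]; module⟩
  have hP : IsHilbertPair Ω x y α β := by
    refine ⟨hc.1, hc.2.1, by simpa using hcol 0, by simpa using hcol 1, ?_, ?_⟩
    · rw [hx, hy, da s hs, da t (by linarith)]; gcongr
    · rw [hx, hy, db s (by linarith), db t ht]; gcongr
  have hex : ∃ p : Euc n × Euc n, IsHilbertPair Ω x y p.1 p.2 := ⟨(α, β), hP⟩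
  have hsp := hex.choose_spec
  have e1 : hex.choose.1 = α :=
    h.side_unique hxΩ hyΩ hxy hsp.1 hsp.2.2.1 hsp.2.2.2.2.1 hP.1 hP.2.2.1 hP.2.2.2.2.1
  have e2 : hex.choose.2 = β := by
    refine h.side_unique hyΩ hxΩ hxy.symm hsp.2.1 ?_ hsp.2.2.2.2.2 hP.2.1 ?_ hP.2.2.2.2.2
    · have := hsp.2.2.2.1; rwa [Set.pair_comm x y] at this
    · have := hP.2.2.2.1; rwa [Set.pair_comm x y] at this
  rw [hilbertDist, dif_pos hex, e1, e2, hx, hy, da s hs, da t (by linarith), db s (by linarith),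
    db t ht, mul_div_mul_right _ _ hN.ne', mul_div_mul_right _ _ hN.ne']

lemma hilbertDist_self (x : Euc n) : hilbertDist Ω x x = 0 := by
  rw [hilbertDist, dif_neg]
  rintro ⟨p, hp⟩
  exact lt_irrefl _ hp.2.2.2.2.1

/-- Half of the lower bound for the metric: the ratio of a positive affine function along a chord
is largest for a function vanishing at the far end. -/
lemma chord_ratio {ψ : Euc n →ᵃ[ℝ] ℝ} (hψ : PosAff Ω ψ) {α β : Euc n}
    (hβ : β ∈ closure Ω) {s t : ℝ} (hst : s ≤ t) (ht : t < 1) :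
    (1 - t) * ψ ((1 - s) • α + s • β) ≤ (1 - s) * ψ ((1 - t) • α + t • β) := by
  rw [aff2 ψ α β (by ring), aff2 ψ α β (by ring)]
  have := hψ.closure hβ
  nlinarith

lemma chord_ratio' {ψ : Euc n →ᵃ[ℝ] ℝ} (hψ : PosAff Ω ψ) {α β : Euc n}
    (hα : α ∈ closure Ω) {s t : ℝ} (hst : s ≤ t) (hs : 0 < s) :
    s * ψ ((1 - t) • α + t • β) ≤ t * ψ ((1 - s) • α + s • β) := by
  rw [aff2 ψ α β (by ring), aff2 ψ α β (by ring)]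
  have := hψ.closure hα
  nlinarith

/-- Every pair of positive affine functions bounds the Hilbert distance from below. -/
lemma Dom.lower (h : Dom Ω) {ψ χ : Euc n →ᵃ[ℝ] ℝ} (hψ : PosAff Ω ψ) (hχ : PosAff Ω χ)
    {x y : Euc n} (hx : x ∈ Ω) (hy : y ∈ Ω) :
    ψ x * χ y ≤ Real.exp (hilbertDist Ω x y) * (ψ y * χ x) := by
  by_cases hxy : x = y
  · subst hxy; simp [hilbertDist_self]
  obtain ⟨α, β, hc, s, t, hs, hst, ht, rfl, rfl⟩ := h.exists_chord hx hy hxy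
  have ht0 : 0 < t := by linarith
  have h1s : 0 < 1 - s := by linarith
  have h1t : 0 < 1 - t := by linarith
  rw [h.dist_chord hc hs hst ht, Real.exp_log (by positivity)]
  have h1 := chord_ratio (α := α) hψ (Dom.frontier_closure hc.2.1) hst.le ht
  have h2 := chord_ratio' (β := β) hχ (Dom.frontier_closure hc.1) hst.le hs
  set X := (1 - s) • α + s • β
  set Y := (1 - t) • α + t • β
  have := mul_le_mul h1 h2 (mul_nonneg hs.le (hχ _ hy).le) (mul_nonneg h1s.le (hψ _ hy).le)
  have e : t / s * ((1 - s) / (1 - t)) * (ψ Y * χ X) =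
      ((1 - s) * ψ Y * (t * χ X)) / (s * (1 - t)) := by field_simp
  rw [e, le_div_iff₀ (by positivity)]
  linarith

/-- On a chord, functions vanishing at the two ends realize the Hilbert distance. -/
lemma Dom.attain_chord (h : Dom Ω) {α β : Euc n} (hc : Chord Ω α β) {ψ χ : Euc n →ᵃ[ℝ] ℝ}
    (hψ : ψ β = 0) (hχ : χ α = 0) {s t : ℝ} (hs : 0 < s) (hst : s < t) (ht : t < 1) :
    ψ ((1 - s) • α + s • β) * χ ((1 - t) • α + t • β) =
      Real.exp (hilbertDist Ω ((1 - s) • α + s • β) ((1 - t) • α + t • β)) *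
        (ψ ((1 - t) • α + t • β) * χ ((1 - s) • α + s • β)) := by
  have ht0 : 0 < t := by linarith
  have h1s : 0 < 1 - s := by linarith
  have h1t : 0 < 1 - t := by linarith
  rw [h.dist_chord hc hs hst ht, Real.exp_log (by positivity)]
  simp only [aff2 ψ α β (show (1 - s) + s = 1 by ring), aff2 ψ α β (show (1 - t) + t = 1 by ring),
    aff2 χ α β (show (1 - s) + s = 1 by ring), aff2 χ α β (show (1 - t) + t = 1 by ring), hψ, hχ]
  field_simp
  ring

lemma Dom.attain (h : Dom Ω) {x y : Euc n} (hx : x ∈ Ω) (hy : y ∈ Ω) :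
    ∃ ψ χ : Euc n →ᵃ[ℝ] ℝ, PosAff Ω ψ ∧ PosAff Ω χ ∧
      ψ x * χ y = Real.exp (hilbertDist Ω x y) * (ψ y * χ x) := by
  by_cases hxy : x = y
  · subst hxy
    exact ⟨_, _, posAff_one, posAff_one, by simp [hilbertDist_self]⟩
  obtain ⟨α, β, hc, s, t, hs, hst, ht, rfl, rfl⟩ := h.exists_chord hx hy hxy
  obtain ⟨ψ, hψ, e1⟩ := h.support (h.mem_frontier.1 hc.2.1).2
  obtain ⟨χ, hχ, e2⟩ := h.support (h.mem_frontier.1 hc.1).2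
  exact ⟨ψ, χ, hψ, hχ, h.attain_chord hc e1 e2 hs hst ht⟩

lemma Dom.dist_le (h : Dom Ω) {x y : Euc n} (hx : x ∈ Ω) (hy : y ∈ Ω) {C : ℝ}
    (hC : ∀ ψ χ : Euc n →ᵃ[ℝ] ℝ, PosAff Ω ψ → PosAff Ω χ → ψ x * χ y ≤ C * (ψ y * χ x)) :
    Real.exp (hilbertDist Ω x y) ≤ C := by
  obtain ⟨ψ, χ, hψ, hχ, e⟩ := h.attain hx hy
  have := hC ψ χ hψ hχ
  rw [e] at this
  exact le_of_mul_le_mul_right this (mul_pos (hψ _ hy) (hχ _ hx))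

lemma Dom.symm (h : Dom Ω) {x y : Euc n} (hx : x ∈ Ω) (hy : y ∈ Ω) :
    hilbertDist Ω x y = hilbertDist Ω y x := by
  have key : ∀ x ∈ Ω, ∀ y ∈ Ω, hilbertDist Ω x y ≤ hilbertDist Ω y x := by
    intro x hx y hy
    rw [← Real.exp_le_exp]
    refine h.dist_le hx hy fun ψ χ hψ hχ => ?_
    have := h.lower hχ hψ hy hx
    linarith [mul_comm (χ y) (ψ x), mul_comm (χ x) (ψ y)]
  exact le_antisymm (key x hx y hy) (key y hy x hx)

lemma Dom.triangle (h : Dom Ω) {x y z : Euc n} (hx : x ∈ Ω) (hy : y ∈ Ω) (hz : z ∈ Ω) :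
    hilbertDist Ω x y ≤ hilbertDist Ω x z + hilbertDist Ω z y := by
  rw [← Real.exp_le_exp, Real.exp_add]
  refine h.dist_le hx hy fun ψ χ hψ hχ => ?_
  have h1 := h.lower hψ hχ hx hz
  have h2 := h.lower hψ hχ hz hy
  have hz1 := hψ _ hz
  have hz2 := hχ _ hz
  have hy1 := hψ _ hy
  have hx2 := hχ _ hx
  have hzz : 0 < ψ z * χ z := mul_pos hz1 hz2
  have hm := mul_le_mul h1 h2 (mul_nonneg hz1.le (hχ _ hy).le)
    (mul_nonneg (Real.exp_pos _).le (mul_nonneg hz1.le hx2.le))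
  refine le_of_mul_le_mul_right (le_trans (le_of_eq ?_) (le_trans hm (le_of_eq ?_))) hzz
  · ring
  · ring

/-- Euclidean distances are controlled by Hilbert distances. -/
lemma Dom.euc_le (h : Dom Ω) : ∃ D : ℝ, 0 < D ∧ ∀ x ∈ Ω, ∀ y ∈ Ω,
    dist x y ≤ D * (Real.exp (hilbertDist Ω x y) - 1) := by
  obtain ⟨D, hD⟩ := (Metric.isBounded_iff.1 h.bd.closure)
  refine ⟨max D 1, by positivity, ?_⟩
  intro x hx y hy
  by_cases hxy : x = y
  · subst hxy; simp [hilbertDist_self]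
  obtain ⟨α, β, hc, s, t, hs, hst, ht, rfl, rfl⟩ := h.exists_chord hx hy hxy
  have hαβ : ‖β - α‖ ≤ max D 1 := by
    rw [← dist_eq_norm]
    exact (hD (Dom.frontier_closure hc.2.1) (Dom.frontier_closure hc.1)).trans (le_max_left _ _)
  have ht0 : 0 < t := by linarith
  have h1s : 0 < 1 - s := by linarith
  have h1t : 0 < 1 - t := by linarith
  have e : (1 - s) • α + s • β - ((1 - t) • α + t • β) = (s - t) • (β - α) := by module
  rw [h.dist_chord hc hs hst ht, Real.exp_log (by positivity), dist_eq_norm, e, norm_smul,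
    Real.norm_eq_abs, abs_of_neg (by linarith), mul_comm]
  have h3 : -(s - t) ≤ t / s * ((1 - s) / (1 - t)) - 1 := by
    rw [div_mul_div_comm, le_sub_iff_add_le, le_div_iff₀ (by positivity)]
    have h5 : s * (1 - t) ≤ 1 := by nlinarith
    nlinarith [mul_le_mul_of_nonneg_left h5 (show 0 ≤ t - s by linarith)]
  exact mul_le_mul hαβ h3 (by linarith) (by positivity)

lemma Dom.nonneg (h : Dom Ω) {x y : Euc n} (hx : x ∈ Ω) (hy : y ∈ Ω) :
    0 ≤ hilbertDist Ω x y := by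
  have := h.lower posAff_one posAff_one hx hy
  simp at this
  exact this

lemma Dom.eq_of_dist (h : Dom Ω) {x y : Euc n} (hx : x ∈ Ω) (hy : y ∈ Ω)
    (h0 : hilbertDist Ω x y = 0) : x = y := by
  obtain ⟨D, -, hD⟩ := h.euc_le
  have := hD x hx y hy
  rw [h0] at this
  simp at this
  exact this

/-- Near a point `x` of the domain, Hilbert distances to `x` are small. -/
lemma Dom.dist_small (h : Dom Ω) {x : Euc n} (hx : x ∈ Ω) {ε : ℝ} (hε : 0 < ε) :
    ∃ δ > 0, ∀ y ∈ Ω, dist y x < δ → hilbertDist Ω x y < ε := by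
  obtain ⟨r, hr, hball⟩ := Metric.isOpen_iff.1 h.op x hx
  have hexp : 1 < Real.exp ε := Real.one_lt_exp_iff.2 hε
  -- `η` with `(1 + η) / (1 - η) < exp ε`
  obtain ⟨η, hη, hη1, hη2⟩ : ∃ η : ℝ, 0 < η ∧ η < 1 ∧ 1 + η < Real.exp ε * (1 - η) := by
    refine ⟨(Real.exp ε - 1) / (2 * (Real.exp ε + 1)), ?_, ?_, ?_⟩
    · apply div_pos <;> linarith
    · rw [div_lt_one (by linarith)]; linarith
    · rw [← sub_pos]
      have : Real.exp ε * (1 - (Real.exp ε - 1) / (2 * (Real.exp ε + 1))) -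
        (1 + (Real.exp ε - 1) / (2 * (Real.exp ε + 1))) = (Real.exp ε - 1) / 2 := by
        field_simp; ring
      rw [this]; linarith
  refine ⟨η * r, by positivity, ?_⟩
  intro y hy hyx
  have hbd : ∀ ψ : Euc n →ᵃ[ℝ] ℝ, PosAff Ω ψ → (1 - η) * ψ x ≤ ψ y ∧ ψ y ≤ (1 + η) * ψ x := by
    intro ψ hψ
    have hm : ∀ σ : ℝ, |σ| = 1 → x + (σ / η) • (y - x) ∈ Ω := by
      intro σ hσ
      apply hball
      rw [Metric.mem_ball, dist_eq_norm, add_sub_cancel_left, norm_smul, norm_div,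
        Real.norm_eq_abs, hσ, Real.norm_of_nonneg hη.le, ← dist_eq_norm, one_div,
        inv_mul_lt_iff₀ hη]
      exact hyx
    have h1 := hψ _ (hm 1 (by simp))
    have h2 := hψ _ (hm (-1) (by simp))
    rw [aff_line] at h1 h2
    have h1' := mul_pos hη h1
    have h2' := mul_pos hη h2
    have e1 : η * (ψ x + 1 / η * (ψ y - ψ x)) = η * ψ x + (ψ y - ψ x) := by field_simp
    have e2 : η * (ψ x + -1 / η * (ψ y - ψ x)) = η * ψ x - (ψ y - ψ x) := by field_simp; ring
    rw [e1] at h1'; rw [e2] at h2'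
    constructor <;> linarith
  rw [← Real.exp_lt_exp]
  have hη' : 0 < 1 - η := by linarith
  refine lt_of_le_of_lt (h.dist_le hx hy (C := (1 + η) / (1 - η)) ?_)
    (by rw [div_lt_iff₀ hη']; exact hη2)
  intro ψ χ hψ hχ
  have h1 := (hbd ψ hψ).1
  have h2 := (hbd χ hχ).2
  have := mul_le_mul h1 h2 (hχ _ hy).le (hψ _ hy).le
  rw [div_mul_eq_mul_div, le_div_iff₀ hη']
  linarith

end hilbert

/-! ### Unique geodesics -/

/-- The segment `[x, y]` is the only geodesic from `x` to `y`. -/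
def Rigid {n : ℕ} (Ω : Set (Euc n)) (x y : Euc n) : Prop :=
  ∀ z ∈ Ω, hilbertDist Ω x z + hilbertDist Ω z y = hilbertDist Ω x y → z ∈ segment ℝ x y

/-- Every segment of `closure Ω` through `β` is parallel to `D`; for `D = 0` this says that `β` is
not interior to any nontrivial segment. -/
def EdgeAt {n : ℕ} (Ω : Set (Euc n)) (β D : Euc n) : Prop :=
  ∀ p ∈ closure Ω, ∀ q ∈ closure Ω, β ∈ openSegment ℝ p q → ∃ c : ℝ, q - p = c • D

section rigid
variable {n : ℕ} {Ω : Set (Euc n)}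

/-- A chord through `x ≠ y` in the form `x - a (y - x)`, `x + b (y - x)`, and the equality case of
the lower bound `Dom.lower`. -/
lemma Dom.chord_eq (h : Dom Ω) {x y : Euc n} (hx : x ∈ Ω) (hy : y ∈ Ω) (hxy : x ≠ y) :
    ∃ a b : ℝ, 0 < a ∧ 1 < b ∧ x - a • (y - x) ∈ frontier Ω ∧ x + b • (y - x) ∈ frontier Ω ∧
      ∀ ψ χ : Euc n →ᵃ[ℝ] ℝ, PosAff Ω ψ → PosAff Ω χ →
        (ψ x * χ y = Real.exp (hilbertDist Ω x y) * (ψ y * χ x) ↔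
        ψ (x + b • (y - x)) = 0 ∧ χ (x - a • (y - x)) = 0) := by
  obtain ⟨α, β, hc, s, t, hs, hst, ht, ex, ey⟩ := h.exists_chord hx hy hxy
  have hts : 0 < t - s := by linarith
  have ea : x - (s / (t - s)) • (y - x) = α := by
    rw [ex, ey]
    match_scalars <;> field_simp <;> ring
  have eb : x + ((1 - s) / (t - s)) • (y - x) = β := by
    rw [ex, ey]
    match_scalars <;> field_simp <;> ring
  refine ⟨s / (t - s), (1 - s) / (t - s), by positivity, ?_, ?_, ?_, ?_⟩
  · rw [lt_div_iff₀ hts]; linarith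
  · rw [ea]; exact hc.1
  · rw [eb]; exact hc.2.1
  · intro ψ χ hψ hχ
    rw [ea, eb]
    constructor
    · intro e
      have ht0 : 0 < t := by linarith
      have h1s : 0 < 1 - s := by linarith
      have h1t : 0 < 1 - t := by linarith
      have k1 := chord_ratio hψ (α := α) (Dom.frontier_closure hc.2.1) hst.le ht
      have k2 := chord_ratio' hχ (β := β) (Dom.frontier_closure hc.1) hst.le hs
      have hd := h.dist_chord hc hs hst ht
      rw [← ex, ← ey] at k1 k2 hd
      rw [hd, Real.exp_log (by positivity)] at e
      have px := hψ x hx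
      have py := hψ y hy
      have qx := hχ x hx
      have qy := hχ y hy
      have e' : ((1 - t) * ψ x) * (s * χ y) = ((1 - s) * ψ y) * (t * χ x) := by
        field_simp at e
        linear_combination e
      have e1 : (1 - t) * ψ x = (1 - s) * ψ y := by
        by_contra hne
        have : (1 - t) * ψ x < (1 - s) * ψ y := lt_of_le_of_ne k1 hne
        have := mul_lt_mul'' this (lt_of_le_of_ne k2 ?_) (by positivity) (by positivity)
        · linarith
        · intro e2
          rw [e2] at e'
          exact hne (mul_right_cancel₀ (by positivity) e')
      have e2 : s * χ y = t * χ x := by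
        rw [e1] at e'
        exact mul_left_cancel₀ (by positivity) e'
      rw [ex, ey, aff2 _ _ _ (by ring), aff2 _ _ _ (by ring)] at e1 e2
      constructor
      · have : (t - s) * ψ β = 0 := by linear_combination -e1
        exact (mul_eq_zero.1 this).resolve_left hts.ne'
      · have : (t - s) * χ α = 0 := by linear_combination -e2
        exact (mul_eq_zero.1 this).resolve_left hts.ne'
    · rintro ⟨e1, e2⟩
      have := h.attain_chord hc e1 e2 hs hst ht
      rwa [← ex, ← ey] at this

lemma Dom.ray_end (h : Dom Ω) {x y : Euc n} (hx : x ∈ Ω) {a b : ℝ} (ha : 0 < a) (hb : 0 < b)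
    (h1 : x + a • (y - x) ∈ frontier Ω) (h2 : x + b • (y - x) ∈ frontier Ω) : a = b :=
  h.ray_unique hx ha hb h1 h2

/-- If `z` lies between `x` and `y` metrically, then the endpoint `β` of the chord from `x` through
`y` lies between the endpoints `β₁`, `β₂` of the chords from `x` through `z` and from `z` through
`y`; the last equation is what this means for the affine parameters. -/
lemma Dom.rigid_half (h : Dom Ω) {x y z : Euc n} (hx : x ∈ Ω) (hy : y ∈ Ω) (hz : z ∈ Ω)
    (hxz : x ≠ z) (hzy : z ≠ y)
    (hd : hilbertDist Ω x z + hilbertDist Ω z y = hilbertDist Ω x y) {p : ℝ} (hp : 1 < p)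
    (hβ : x + p • (y - x) ∈ frontier Ω) :
    ∃ r q : ℝ, 1 < r ∧ 1 < q ∧ x + r • (z - x) ∈ frontier Ω ∧ z + q • (y - z) ∈ frontier Ω ∧
      q * r = p * (r + q - 1) := by
  have hxy : x ≠ y := by
    rintro rfl
    have h1 := h.nonneg hx hz
    have h2 := h.nonneg hz hx
    rw [hilbertDist_self] at hd
    exact hxz (h.eq_of_dist hx hz (by linarith))
  obtain ⟨a, b, ha, hb, hA, hB, key⟩ := h.chord_eq hx hy hxy
  obtain rfl := h.ray_end hx (by linarith) (by linarith) hβ hB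
  obtain ⟨a1, r, ha1, hr, hA1, hB1, key1⟩ := h.chord_eq hx hz hxz
  obtain ⟨a2, q, ha2, hq, hA2, hB2, key2⟩ := h.chord_eq hz hy hzy
  obtain ⟨ψ, hψ, ψ0⟩ := h.support (h.mem_frontier.1 hB).2
  obtain ⟨χ, hχ, χ0⟩ := h.support (h.mem_frontier.1 hA).2
  have e := (key ψ χ hψ hχ).2 ⟨ψ0, χ0⟩
  have l1 := h.lower hψ hχ hx hz
  have l2 := h.lower hψ hχ hz hy
  rw [← hd, Real.exp_add] at e
  have := hψ x hx
  have := hψ y hy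
  have := hψ z hz
  have := hχ x hx
  have := hχ y hy
  have := hχ z hz
  set E1 := Real.exp (hilbertDist Ω x z)
  set E2 := Real.exp (hilbertDist Ω z y)
  have hE1 : 0 < E1 := Real.exp_pos _
  have hE2 : 0 < E2 := Real.exp_pos _
  have e' : (ψ x * χ z) * (ψ z * χ y) = (E1 * (ψ z * χ x)) * (E2 * (ψ y * χ z)) := by
    linear_combination (ψ z * χ z) * e
  have f1 : ψ x * χ z = E1 * (ψ z * χ x) := by
    refine le_antisymm l1 ?_
    by_contra hlt
    push Not at hlt
    have := mul_lt_mul hlt l2 (by positivity) (by positivity)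
    linarith
  have f2 : ψ z * χ y = E2 * (ψ y * χ z) := by
    rw [f1] at e'
    exact mul_left_cancel₀ (by positivity) e'
  have g1 := ((key1 ψ χ hψ hχ).1 f1).1
  have g2 := ((key2 ψ χ hψ hχ).1 f2).1
  refine ⟨r, q, hr, hq, hB1, hB2, ?_⟩
  rw [aff_line] at g1 g2 ψ0
  have : ψ x * (q * r - p * (r + q - 1)) = 0 := by
    -- eliminate `ψ z`, `ψ y` from the three linear relations
    linear_combination (r * q) * ψ0 + (p * (1 - q)) * g1 - (p * r) * g2
  have := (mul_eq_zero.1 this).resolve_left (by positivity)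
  linarith

/-- Dichotomy for a point `z` on a geodesic from `x` to `y`: either it is on the segment or the
endpoint `β` of the chord is interior to a nontrivial segment of the boundary, whose direction lies
in the plane of `x`, `y`, `z`. -/
lemma Dom.rigid_dich (h : Dom Ω) {x y z : Euc n} (hx : x ∈ Ω) (hy : y ∈ Ω) (hz : z ∈ Ω)
    (hd : hilbertDist Ω x z + hilbertDist Ω z y = hilbertDist Ω x y) {p : ℝ} (hp : 1 < p)
    (hβ : x + p • (y - x) ∈ frontier Ω) :
    z ∈ segment ℝ x y ∨ ∃ β₁ ∈ closure Ω, ∃ β₂ ∈ closure Ω, β₁ ≠ β₂ ∧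
      x + p • (y - x) ∈ openSegment ℝ β₁ β₂ ∧
      ∃ A B : ℝ, β₂ - β₁ = A • (y - x) + B • (z - x) := by
  by_cases hxz : x = z
  · subst hxz; exact Or.inl (left_mem_segment _ _ _)
  by_cases hzy : z = y
  · subst hzy; exact Or.inl (right_mem_segment _ _ _)
  obtain ⟨r, q, hr, hq, h1, h2, e⟩ := h.rigid_half hx hy hz hxz hzy hd hp hβ
  have hq0 : 0 < q := by linarith
  have hr0 : 0 < r := by linarith
  have hpq : p < q := by
    have : p * (r + q - 1) < q * (r + q - 1) := by rw [← e]; nlinarith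
    exact lt_of_mul_lt_mul_right this (by linarith)
  have hpr : p ≤ r := by
    have : p * (r + q - 1) ≤ r * (r + q - 1) := by rw [← e]; nlinarith
    exact le_of_mul_le_mul_right this (by linarith)
  have hcomb : x + p • (y - x) = (1 - p / q) • (x + r • (z - x)) + (p / q) • (z + q • (y - z)) := by
    have k1 : (1 - p / q) * r + p / q * (1 - q) = 0 := by
      field_simp; linear_combination e
    have k3 : p / q * q = p := by field_simp
    have : (1 - p / q) • (x + r • (z - x)) + (p / q) • (z + q • (y - z)) =
        ((1 - p / q) - (1 - p / q) * r) • x + ((1 - p / q) * r + p / q * (1 - q)) • z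
          + (p / q * q) • y := by module
    rw [this, k1, k3]
    have k4 : (1 - p / q) - (1 - p / q) * r = 1 - p := by linear_combination -k1 - k3
    rw [k4]; module
  by_cases hb : x + r • (z - x) = z + q • (y - z)
  · left
    rw [← hb] at hcomb
    have hz' : r • (z - x) = p • (y - x) := by
      have : x + p • (y - x) = x + r • (z - x) := by rw [hcomb]; module
      exact (add_left_cancel this).symm
    have : z = x + (p / r) • (y - x) := by
      have : z - x = (p / r) • (y - x) := by
        rw [div_eq_inv_mul, mul_smul, ← hz', smul_smul, inv_mul_cancel₀ hr0.ne', one_smul]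
      rw [← this]; module
    rw [this]
    refine ⟨1 - p / r, p / r, ?_, by positivity, by ring, by module⟩
    rw [sub_nonneg, div_le_one hr0]; exact hpr
  · right
    refine ⟨_, Dom.frontier_closure h1, _, Dom.frontier_closure h2, hb, ?_, q, 1 - q - r + 0, ?_⟩
    · rw [hcomb]
      refine ⟨1 - p / q, p / q, ?_, by positivity, by ring, rfl⟩
      rw [sub_pos, div_lt_one hq0]; exact hpq
    · module

lemma Dom.rigid_of_ext (h : Dom Ω) {x y : Euc n} (hx : x ∈ Ω) (hy : y ∈ Ω) {p : ℝ} (hp : 1 < p)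
    (hβ : x + p • (y - x) ∈ frontier Ω)
    (he : x + p • (y - x) ∈ extremePoints ℝ (closure Ω)) : Rigid Ω x y := by
  intro z hz hd
  rcases h.rigid_dich hx hy hz hd hp hβ with hh | ⟨b1, h1, b2, h2, hne, hseg, -⟩
  · exact hh
  · exact absurd ((mem_extremePoints.1 he).2 b1 h1 b2 h2 hseg) (fun e => hne (e.1.trans e.2.symm))

lemma Rigid.symm (h : Dom Ω) {x y : Euc n} (hx : x ∈ Ω) (hy : y ∈ Ω) (hr : Rigid Ω x y) :
    Rigid Ω y x := by
  intro z hz hd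
  rw [segment_symm]
  refine hr z hz ?_
  rw [h.symm hx hz, h.symm hz hy, h.symm hx hy]; linarith

/-- A chord whose ends lie on two skew edges is a unique geodesic. -/
lemma Dom.rigid_of_skew (h : Dom Ω) {x y : Euc n} (hx : x ∈ Ω) (hy : y ∈ Ω) {p p' : ℝ}
    (hp : 1 < p) (hβ : x + p • (y - x) ∈ frontier Ω)
    (hp' : 1 < p') (hα : y + p' • (x - y) ∈ frontier Ω) {D₁ D₂ : Euc n}
    (e1 : EdgeAt Ω (x + p • (y - x)) D₁) (e2 : EdgeAt Ω (y + p' • (x - y)) D₂)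
    (ind : ∀ a b c : ℝ, a • D₁ + b • D₂ + c • (y - x) = 0 → a = 0 ∧ b = 0 ∧ c = 0) :
    Rigid Ω x y := by
  intro z hz hd
  rcases h.rigid_dich hx hy hz hd hp hβ with hh | ⟨b1, h1, b2, h2, hne, hseg, A, B, hAB⟩
  · exact hh
  have hd' : hilbertDist Ω y z + hilbertDist Ω z x = hilbertDist Ω y x := by
    rw [h.symm hy hz, h.symm hz hx, h.symm hy hx]; linarith
  rcases h.rigid_dich hy hx hz hd' hp' hα with hh | ⟨a1, k1, a2, k2, hne', hseg', C, D, hCD⟩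
  · rwa [segment_symm]
  exfalso
  obtain ⟨c1, hc1⟩ := e1 b1 h1 b2 h2 hseg
  obtain ⟨c2, hc2⟩ := e2 a1 k1 a2 k2 hseg'
  have hc10 : c1 ≠ 0 := by
    rintro rfl
    rw [zero_smul, sub_eq_zero] at hc1
    exact hne hc1.symm
  have hc20 : c2 ≠ 0 := by
    rintro rfl
    rw [zero_smul, sub_eq_zero] at hc2
    exact hne' hc2.symm
  rw [hc1] at hAB
  rw [hc2] at hCD
  have := ind (D * c1) (-(B * c2)) (-(D * A) + B * (-C - D)) (by
    linear_combination (norm := module) D • hAB - B • hCD)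
  have hD : D = 0 := (mul_eq_zero.1 this.1).resolve_right hc10
  have hB : B = 0 := (mul_eq_zero.1 (neg_eq_zero.1 this.2.1)).resolve_right hc20
  have := ind c1 0 (-A) (by rw [hB] at hAB; linear_combination (norm := module) hAB)
  exact hc10 this.1

/-- The Hilbert metric is additive along segments. -/
lemma Dom.seg_add (h : Dom Ω) {x y z : Euc n} (hx : x ∈ Ω) (hy : y ∈ Ω)
    (hz : z ∈ segment ℝ x y) :
    hilbertDist Ω x z + hilbertDist Ω z y = hilbertDist Ω x y := by
  by_cases hxy : x = y
  · subst hxy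
    rw [segment_same, mem_singleton_iff] at hz
    subst hz; simp [hilbertDist_self]
  by_cases hxz : x = z
  · subst hxz; simp [hilbertDist_self]
  by_cases hzy : z = y
  · subst hzy; simp [hilbertDist_self]
  obtain ⟨α, β, hc, s, t, hs, hst, ht, ex, ey⟩ := h.exists_chord hx hy hxy
  obtain ⟨a, b, ha, hb, hab, e⟩ := hz
  have ha0 : a ≠ 0 := by
    rintro rfl
    exact hzy (by rw [← e, show b = 1 by linarith]; module)
  have hb0 : b ≠ 0 := by
    rintro rfl
    exact hxz (by rw [← e, show a = 1 by linarith]; module)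
  have ha' : 0 < a := lt_of_le_of_ne ha ha0.symm
  have hb' : 0 < b := lt_of_le_of_ne hb hb0.symm
  set w := a * s + b * t with hw
  have ez : z = (1 - w) • α + w • β := by
    rw [← e, ex, ey]
    match_scalars
    · linear_combination hab
    · ring
  have hsw : s < w := by
    have : w = s + b * (t - s) := by rw [hw]; linear_combination s * hab
    rw [this]; nlinarith
  have hwt : w < t := by
    have : w = t - a * (t - s) := by rw [hw]; linear_combination t * hab
    rw [this]; nlinarith
  have h1 := h.dist_chord hc hs hsw (by linarith)
  have h2 := h.dist_chord hc (by linarith) hwt ht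
  have h3 := h.dist_chord hc hs hst ht
  rw [← ex, ← ez] at h1
  rw [← ez, ← ey] at h2
  rw [← ex, ← ey] at h3
  have : 0 < w := by linarith
  have : 0 < t := by linarith
  have : 0 < 1 - w := by linarith
  have : 0 < 1 - t := by linarith
  have : 0 < 1 - s := by linarith
  rw [h1, h2, h3, ← Real.log_mul (by positivity) (by positivity)]
  congr 1
  field_simp

lemma Dom.continuousOn_dist (h : Dom Ω) {x : Euc n} (hx : x ∈ Ω) :
    ContinuousOn (fun y => hilbertDist Ω x y) Ω := by
  rw [Metric.continuousOn_iff]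
  intro y hy ε hε
  obtain ⟨δ, hδ, hd⟩ := h.dist_small hy hε
  refine ⟨δ, hδ, fun z hz hzd => ?_⟩
  have := hd z hz hzd
  have t1 := h.triangle hx hz hy
  have t2 := h.triangle hx hy hz
  rw [h.symm hz hy] at t2
  rw [Real.dist_eq, abs_lt]
  constructor <;> linarith

lemma Dom.seg_inj (h : Dom Ω) {x y z w : Euc n} (hx : x ∈ Ω) (hy : y ∈ Ω)
    (hz : z ∈ segment ℝ x y) (hw : w ∈ segment ℝ x y)
    (hd : hilbertDist Ω x z = hilbertDist Ω x w) : z = w := by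
  have key : ∀ s t : ℝ, 0 ≤ s → s ≤ t → t ≤ 1 →
      hilbertDist Ω x (x + s • (y - x)) = hilbertDist Ω x (x + t • (y - x)) →
      x + s • (y - x) = x + t • (y - x) := by
    intro s t hs hst ht e
    have m : ∀ t : ℝ, 0 ≤ t → t ≤ 1 → x + t • (y - x) ∈ Ω := by
      intro t h0 h1
      have := h.cv hx hy (show 0 ≤ 1 - t by linarith) h0 (by ring)
      convert this using 1; module
    by_cases ht0 : t = 0
    · have : s = 0 := by linarith
      rw [ht0, this]
    have ht' : 0 < t := lt_of_le_of_ne (by linarith) (Ne.symm ht0)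
    have hseg : x + s • (y - x) ∈ segment ℝ x (x + t • (y - x)) := by
      refine ⟨1 - s / t, s / t, ?_, by positivity, by ring, ?_⟩
      · rw [sub_nonneg, div_le_one ht']; exact hst
      · match_scalars <;> field_simp <;> ring
    have := h.seg_add hx (m t (by linarith) ht) hseg
    exact h.eq_of_dist (m s hs (by linarith)) (m t (by linarith) ht) (by linarith)
  rw [segment_eq_image'] at hz hw
  obtain ⟨s, hs, rfl⟩ := hz
  obtain ⟨t, ht, rfl⟩ := hw
  rcases le_total s t with hst | hst
  · exact key s t hs.1 hst ht.2 hd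
  · exact (key t s ht.1 hst hs.2 hd.symm).symm

lemma Dom.seg_sub (h : Dom Ω) {x y z : Euc n} (hx : x ∈ Ω) (hy : y ∈ Ω)
    (hz : z ∈ segment ℝ x y) : z ∈ Ω := h.cv.segment_subset hx hy hz

end rigid

/-! ### Isometries and their limits along rays to extreme points -/

section iso
variable {n : ℕ} {Ω Ω' : Set (Euc n)} {τ : Euc n → Euc n}

lemma iso_inj (h : Dom Ω) (hτ : IsHilbertIsometry Ω Ω' τ) {x y : Euc n} (hx : x ∈ Ω)
    (hy : y ∈ Ω) (e : τ x = τ y) : x = y := by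
  refine h.eq_of_dist hx hy ?_
  rw [← hτ.2.2 x hx y hy, e, hilbertDist_self]

lemma iso_inv (h : Dom Ω) (hτ : IsHilbertIsometry Ω Ω' τ) :
    ∃ σ, IsHilbertIsometry Ω' Ω σ ∧ (∀ x ∈ Ω, σ (τ x) = x) ∧ ∀ y ∈ Ω', τ (σ y) = y := by
  have h1 : ∀ y ∈ Ω', τ (Function.invFunOn τ Ω y) = y := fun y hy =>
    Function.invFunOn_eq (hτ.2.1 hy)
  have h2 : ∀ y ∈ Ω', Function.invFunOn τ Ω y ∈ Ω := fun y hy =>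
    Function.invFunOn_mem (hτ.2.1 hy)
  have h3 : ∀ x ∈ Ω, Function.invFunOn τ Ω (τ x) = x := fun x hx =>
    iso_inj h hτ (h2 _ (hτ.1 hx)) hx (h1 _ (hτ.1 hx))
  refine ⟨Function.invFunOn τ Ω, ⟨h2, ?_, ?_⟩, h3, h1⟩
  · intro x hx
    exact ⟨τ x, hτ.1 hx, h3 x hx⟩
  · intro x hx y hy
    rw [← hτ.2.2 _ (h2 x hx) _ (h2 y hy), h1 x hx, h1 y hy]

lemma iso_cont (h : Dom Ω) (h' : Dom Ω') (hτ : IsHilbertIsometry Ω Ω' τ) : ContinuousOn τ Ω := by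
  obtain ⟨D, hD, hE⟩ := h'.euc_le
  rw [Metric.continuousOn_iff]
  intro x hx ε hε
  have hpos : 0 < Real.log (1 + ε / D) := Real.log_pos (by
    have : 0 < ε / D := by positivity
    linarith)
  obtain ⟨δ, hδ, hd⟩ := h.dist_small hx hpos
  refine ⟨δ, hδ, fun y hy hyd => ?_⟩
  have h1 := hE _ (hτ.1 hx) _ (hτ.1 hy)
  rw [hτ.2.2 x hx y hy] at h1
  have h2 := Real.exp_lt_exp.2 (hd y hy hyd)
  rw [Real.exp_log (by positivity)] at h2
  rw [dist_comm]
  refine lt_of_le_of_lt h1 ?_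
  calc D * (Real.exp (hilbertDist Ω x y) - 1) < D * (ε / D) := by
        refine mul_lt_mul_of_pos_left ?_ hD; linarith
    _ = ε := by field_simp

lemma iso_open (h : Dom Ω) (h' : Dom Ω') (hτ : IsHilbertIsometry Ω Ω' τ) {U : Set (Euc n)}
    (hU : IsOpen U) (hUΩ : U ⊆ Ω) : IsOpen (τ '' U) := by
  obtain ⟨σ, hσ, h1, h2⟩ := iso_inv h hτ
  have hc := iso_cont h' h hσ
  have : τ '' U = Ω' ∩ σ ⁻¹' U := by
    ext y
    constructor
    · rintro ⟨x, hx, rfl⟩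
      exact ⟨hτ.1 (hUΩ hx), by rw [mem_preimage, h1 x (hUΩ hx)]; exact hx⟩
    · rintro ⟨hy, hyU⟩
      exact ⟨σ y, hyU, h2 y hy⟩
  rw [this]
  exact hc.isOpen_inter_preimage h'.op hU

/-- Isometries send a segment which is the only geodesic between its ends to a segment. -/
lemma iso_seg (h : Dom Ω) (h' : Dom Ω') (hτ : IsHilbertIsometry Ω Ω' τ) {x y z : Euc n}
    (hx : x ∈ Ω) (hy : y ∈ Ω) (hr : Rigid Ω x y) (hz : z ∈ segment ℝ x y) :
    τ z ∈ segment ℝ (τ x) (τ y) := by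
  have hzΩ := h.seg_sub hx hy hz
  have hx' := hτ.1 hx
  have hy' := hτ.1 hy
  have hadd := h.seg_add hx hy hz
  have hsub : segment ℝ (τ x) (τ y) ⊆ Ω' := h'.cv.segment_subset hx' hy'
  have hpre : IsPreconnected (segment ℝ (τ x) (τ y)) := (convex_segment _ _).isPreconnected
  have hcont := (h'.continuousOn_dist hx').mono hsub
  have hIVT := hpre.intermediate_value (left_mem_segment ℝ _ _) (right_mem_segment ℝ _ _) hcont
  have hmem : hilbertDist Ω x z ∈ Icc (hilbertDist Ω' (τ x) (τ x)) (hilbertDist Ω' (τ x) (τ y)) := by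
    rw [hilbertDist_self, hτ.2.2 x hx y hy]
    refine ⟨h.nonneg hx hzΩ, ?_⟩
    have := h.nonneg hzΩ hy
    linarith
  obtain ⟨z', hz', e⟩ := hIVT hmem
  obtain ⟨w, hw, rfl⟩ := hτ.2.1 (hsub hz')
  have e' : hilbertDist Ω x w = hilbertDist Ω x z := by
    rw [← hτ.2.2 x hx w hw]; exact e
  have hadd' := h'.seg_add hx' hy' hz'
  rw [hτ.2.2 x hx w hw, hτ.2.2 w hw y hy, hτ.2.2 x hx y hy] at hadd'
  have hws := hr w hw hadd'
  rw [← h.seg_inj hx hy hws hz e']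
  exact hz'

/-- `τ` maps the ray from `o` to `e` onto the ray from `τ o` to `a`, with a linear change of the
projective parameter. -/
def RayTo {n : ℕ} (Ω' : Set (Euc n)) (τ : Euc n → Euc n) (e o a : Euc n) : Prop :=
  a ∈ frontier Ω' ∧ ∃ c : ℝ, 0 < c ∧ ∀ u : ℝ, 0 ≤ u → τ (pt o e u) = pt (τ o) a (c * u)

lemma pt_zero (o e : Euc n) : pt o e 0 = o := by simp [pt]

lemma pt_eq (o e : Euc n) {u : ℝ} (hu : 0 ≤ u) : pt o e u = o + (u / (1 + u)) • (e - o) := by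
  have : 1 + u ≠ 0 := by positivity
  simp only [pt]
  match_scalars <;> field_simp
  ring

lemma pt_pt (o e : Euc n) {u v : ℝ} (hu : 0 ≤ u) (hv : 0 ≤ v) :
    pt (pt o e u) e v = pt o e (u + (1 + u) * v) := by
  have h1 : 1 + u ≠ 0 := by positivity
  have h2 : 1 + v ≠ 0 := by positivity
  have h3 : 1 + (u + (1 + u) * v) ≠ 0 := by positivity
  simp only [pt]
  match_scalars
  · field_simp; ring
  · field_simp; ring

lemma tendsto_pt (o e : Euc n) : Filter.Tendsto (fun u : ℝ => pt o e u) Filter.atTop (nhds e) := by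
  have h0 : Filter.Tendsto (fun u : ℝ => (1 + u)⁻¹) Filter.atTop (nhds 0) :=
    tendsto_inv_atTop_zero.comp (Filter.tendsto_atTop_add_const_left _ 1 Filter.tendsto_id)
  have h1 : Filter.Tendsto (fun u : ℝ => e + (1 + u)⁻¹ • (o - e)) Filter.atTop
      (nhds (e + (0 : ℝ) • (o - e))) := tendsto_const_nhds.add (h0.smul_const _)
  rw [zero_smul, add_zero] at h1
  refine h1.congr' ?_
  filter_upwards [Filter.eventually_gt_atTop 0] with u hu
  have : 1 + u ≠ 0 := by positivity
  simp only [pt]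
  match_scalars <;> field_simp
  ring

lemma dist_pt (h : Dom Ω) {o e : Euc n} (ho : o ∈ Ω) (he : e ∈ frontier Ω) :
    ∃ κ : ℝ, 0 < κ ∧ ∀ u : ℝ, 0 ≤ u → hilbertDist Ω o (pt o e u) = Real.log (1 + κ * u) := by
  have hoe : o ≠ e := fun hh => h.not_frontier ho (hh ▸ he)
  obtain ⟨a, ha, hA⟩ := h.ray_exists ho (sub_ne_zero.2 hoe)
  have hc : Chord Ω (o + a • (o - e)) e := by
    refine ⟨hA, he, fun t ht ht1 => ?_⟩
    -- the open segment is covered by the two half-open ones issuing from `o`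
    rcases le_total (t * (1 + a)) a with hh | hh
    · have := h.combo ho (Dom.frontier_closure hA) (a := t * (1 + a) / a)
        (b := 1 - t * (1 + a) / a) (by positivity) (by
          rw [sub_nonneg, div_le_one ha]; exact hh) (by ring)
      convert this using 1
      match_scalars <;> field_simp <;> ring
    · have := h.combo ho (Dom.frontier_closure he) (a := (1 - t) * (1 + a))
        (b := t * (1 + a) - a) (by
          have : 0 < 1 - t := by linarith
          positivity) (by linarith) (by ring)
      convert this using 1
      match_scalars <;> ring
  refine ⟨(1 + a) / a, by positivity, fun u hu => ?_⟩
  rcases eq_or_lt_of_le hu with rfl | hu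
  · simp [pt_zero, hilbertDist_self]
  set s := a / (1 + a) with hs
  set t := (s + u) / (1 + u) with ht
  have hs1 : s < 1 := by rw [hs, div_lt_one (by positivity)]; linarith
  have hs0 : 0 < s := by positivity
  have := h.dist_chord hc (s := s) (t := t) hs0
    (by rw [ht, lt_div_iff₀ (by positivity)]; nlinarith)
    (by rw [ht, div_lt_one (by positivity)]; linarith)
  have e1 : (1 - s) • (o + a • (o - e)) + s • e = o := by
    rw [hs]; match_scalars <;> field_simp <;> ring
  have e2 : (1 - t) • (o + a • (o - e)) + t • e = pt o e u := by
    rw [ht, hs]; simp only [pt]; match_scalars <;> field_simp <;> ring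
  rw [e1, e2] at this
  rw [this]
  congr 1
  have : 1 - t = (1 - s) / (1 + u) := by rw [ht]; field_simp; ring
  have h1s : 0 < 1 - s := by linarith
  rw [this, ht]
  have : (1 + a) / a = s⁻¹ := by rw [hs, inv_div]
  rw [this]
  field_simp

lemma ext_frontier (h : Dom Ω) {e o : Euc n} (ho : o ∈ Ω)
    (he : e ∈ extremePoints ℝ (closure Ω)) (hoe : o ≠ e) : e ∈ frontier Ω := by
  rw [h.mem_frontier]
  refine ⟨he.1, fun heΩ => ?_⟩
  obtain ⟨t, ht, hf⟩ := h.ray_exists heΩ (sub_ne_zero.2 hoe.symm)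
  have := (mem_extremePoints.1 he).2 o (subset_closure ho) _ (Dom.frontier_closure hf)
    ⟨t / (1 + t), 1 / (1 + t), by positivity, by positivity, by field_simp; ring, by
      match_scalars <;> field_simp <;> ring⟩
  exact hoe this.1

/-- In positive dimension the domain is not a point, so extreme points are on the boundary. -/
lemma ext_frontier' (h : Dom Ω) (hn : 0 < n) {e : Euc n}
    (he : e ∈ extremePoints ℝ (closure Ω)) : e ∈ frontier Ω := by
  have : Nontrivial (Euc n) := by
    have : Nonempty (Fin n) := ⟨⟨0, hn⟩⟩
    infer_instance
  obtain ⟨x, hx⟩ := h.ne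
  by_cases hxe : x = e
  · subst hxe
    obtain ⟨r, hr, hb⟩ := Metric.isOpen_iff.1 h.op x hx
    obtain ⟨v, hv⟩ := exists_ne (0 : Euc n)
    have hvn := norm_pos_iff.2 hv
    refine ext_frontier h (o := x + (r / (2 * ‖v‖)) • v) (hb ?_) he ?_
    · rw [Metric.mem_ball, dist_eq_norm, add_sub_cancel_left, norm_smul, Real.norm_eq_abs,
        abs_of_pos (by positivity)]
      field_simp
      linarith
    · intro hh
      have : (r / (2 * ‖v‖)) • v = 0 := by simpa using hh
      rw [smul_eq_zero] at this
      rcases this with h0 | h0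
      · have : 0 < r / (2 * ‖v‖) := by positivity
        linarith
      · exact hv h0
  · exact ext_frontier h hx he hxe

lemma pt_inj (h : Dom Ω) {o a : Euc n} (ho : o ∈ Ω) (ha : a ∈ frontier Ω) {u v : ℝ} (hu : 0 ≤ u)
    (hv : 0 ≤ v) (e : pt o a u = pt o a v) : u = v := by
  obtain ⟨κ, hκ, hd⟩ := dist_pt h ho ha
  have := hd u hu
  rw [e, hd v hv] at this
  have := Real.log_injOn_pos (show 1 + κ * v ∈ Ioi 0 by simp; positivity)
    (show 1 + κ * u ∈ Ioi 0 by simp; positivity) this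
  have : κ * u = κ * v := by linarith
  exact mul_left_cancel₀ hκ.ne' this

lemma ray_pt_unique (h : Dom Ω) {o a b : Euc n} (ho : o ∈ Ω) (ha : a ∈ frontier Ω)
    (hb : b ∈ frontier Ω) {u v : ℝ} (hu : 0 < u) (hv : 0 < v)
    (e : pt o a u = pt o b v) : a = b := by
  rw [pt_eq _ _ hu.le, pt_eq _ _ hv.le, add_right_inj] at e
  have hx : 0 < u / (1 + u) := by positivity
  have hy : 0 < v / (1 + v) := by positivity
  set x := u / (1 + u)
  set y := v / (1 + v)
  have e1 : b = o + (x / y) • (a - o) := by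
    have : b - o = (x / y) • (a - o) := by
      rw [div_eq_inv_mul, mul_smul, e, smul_smul, inv_mul_cancel₀ hy.ne', one_smul]
    rw [← this]; module
  have e0 : a = o + (1 : ℝ) • (a - o) := by module
  have := h.ray_unique ho one_pos (show 0 < x / y by positivity) (e0 ▸ ha) (e1 ▸ hb)
  rw [e1, ← this]; module

lemma exists_rayTo (h : Dom Ω) (h' : Dom Ω') (hτ : IsHilbertIsometry Ω Ω' τ) {o e : Euc n}
    (ho : o ∈ Ω) (he : e ∈ extremePoints ℝ (closure Ω)) (hef : e ∈ frontier Ω) :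
    ∃ a, RayTo Ω' τ e o a := by
  have hpt : ∀ u : ℝ, 0 ≤ u → pt o e u ∈ Ω := fun u hu => h.pt_mem ho he.1 hu
  have ho' := hτ.1 ho
  obtain ⟨κ, hκ, hd⟩ := dist_pt h ho hef
  have hseg : ∀ u v : ℝ, 0 ≤ u → u < v → τ (pt o e u) ∈ segment ℝ (τ o) (τ (pt o e v)) := by
    intro u v hu huv
    have hv : 0 < v := by linarith
    refine iso_seg h h' hτ ho (hpt v hv.le) ?_ ?_
    · have e1 : o + ((1 + v) / v) • (pt o e v - o) = e := by
        simp only [pt]; match_scalars <;> field_simp <;> ring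
      refine h.rigid_of_ext (p := (1 + v) / v) ho (hpt v hv.le) ?_ ?_ ?_
      · rw [lt_div_iff₀ hv]; linarith
      · rw [e1]; exact hef
      · rw [e1]; exact he
    · refine ⟨1 - u * (1 + v) / (v * (1 + u)), u * (1 + v) / (v * (1 + u)), ?_, by positivity,
        by ring, ?_⟩
      · rw [sub_nonneg, div_le_one (by positivity)]; nlinarith
      · simp only [pt]; match_scalars <;> field_simp <;> ring
  have hne : ∀ u : ℝ, 0 < u → τ (pt o e u) ≠ τ o := by
    intro u hu hh
    have h1 := iso_inj h hτ (hpt u hu.le) ho hh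
    have := pt_inj h ho hef hu.le le_rfl (h1.trans (pt_zero o e).symm)
    linarith
  have h1 := hne 1 one_pos
  obtain ⟨T, hT, ha⟩ := h'.ray_exists ho' (sub_ne_zero.2 h1)
  set w := τ (pt o e 1) - τ o with hw
  set a := τ o + T • w with haa
  have hray : ∀ u : ℝ, 0 ≤ u → ∃ s : ℝ, 0 ≤ s ∧ τ (pt o e u) = τ o + s • w := by
    intro u hu
    rcases lt_trichotomy u 1 with hlt | rfl | hgt
    · obtain ⟨p, q, hp, hq, hpq, hE⟩ := hseg u 1 hu hlt
      refine ⟨q, hq, ?_⟩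
      rw [← hE, hw, show p = 1 - q by linarith]; module
    · exact ⟨1, zero_le_one, by rw [hw]; module⟩
    · obtain ⟨p, q, hp, hq, hpq, hE⟩ := hseg 1 u zero_le_one hgt
      have hq0 : q ≠ 0 := by
        rintro rfl
        apply h1
        rw [← hE, show p = 1 by linarith]; module
      refine ⟨q⁻¹, by positivity, ?_⟩
      rw [hw, ← hE, show p = 1 - q by linarith]
      match_scalars <;> field_simp
      ring
  obtain ⟨κ', hκ', hd'⟩ := dist_pt h' ho' ha
  refine ⟨a, ha, κ / κ', by positivity, fun u hu => ?_⟩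
  obtain ⟨s, hs, e1⟩ := hray u hu
  have hmem := hτ.1 (hpt u hu)
  have hsT : s < T := by
    by_contra hcon
    push Not at hcon
    -- otherwise `a` would lie between two points of the domain
    have hs0 : 0 < s := by linarith
    have : a ∈ Ω' := by
      refine h'.seg_sub ho' hmem ⟨1 - T / s, T / s, ?_, by positivity, by ring, ?_⟩
      · rw [sub_nonneg, div_le_one hs0]; exact hcon
      · rw [e1, haa]; match_scalars <;> field_simp <;> ring
    exact h'.not_frontier this ha
  have hTs : 0 < T - s := by linarith
  have e2 : τ (pt o e u) = pt (τ o) a (s / (T - s)) := by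
    rw [e1, pt_eq _ _ (by positivity), haa]
    match_scalars <;> field_simp <;> ring
  have e3 := hd' (s / (T - s)) (by positivity)
  rw [← e2, hτ.2.2 o ho _ (hpt u hu), hd u hu] at e3
  have e4 := Real.log_injOn_pos (show 1 + κ * u ∈ Ioi 0 by simp; positivity)
    (show 1 + κ' * (s / (T - s)) ∈ Ioi 0 by simp; positivity) e3
  have e5 : s / (T - s) = κ / κ' * u := by
    have : κ' * (s / (T - s)) = κ * u := by linarith
    rw [div_mul_eq_mul_div, eq_div_iff hκ'.ne']
    linarith
  rw [e2, e5]

lemma RayTo.unique (h' : Dom Ω') {o e a b : Euc n} (ho : τ o ∈ Ω') (ha : RayTo Ω' τ e o a)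
    (hb : RayTo Ω' τ e o b) : a = b := by
  obtain ⟨ha, c, hc, h1⟩ := ha
  obtain ⟨hb, d, hd, h2⟩ := hb
  have := (h1 1 zero_le_one).symm.trans (h2 1 zero_le_one)
  exact ray_pt_unique h' ho ha hb (by positivity) (by positivity) this

/-- The limit in the boundary of the image of the ray from `o` to the extreme point `e`. -/
def foc {n : ℕ} (Ω' : Set (Euc n)) (τ : Euc n → Euc n) (e o : Euc n) : Euc n :=
  if h : ∃ a, RayTo Ω' τ e o a then h.choose else 0

lemma foc_spec (h : Dom Ω) (h' : Dom Ω') (hτ : IsHilbertIsometry Ω Ω' τ) {o e : Euc n}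
    (ho : o ∈ Ω) (he : e ∈ extremePoints ℝ (closure Ω)) (hef : e ∈ frontier Ω) :
    RayTo Ω' τ e o (foc Ω' τ e o) := by
  have hh := exists_rayTo h h' hτ ho he hef
  rw [foc, dif_pos hh]
  exact hh.choose_spec

lemma foc_eq (h : Dom Ω) (h' : Dom Ω') (hτ : IsHilbertIsometry Ω Ω' τ) {o e a : Euc n}
    (ho : o ∈ Ω) (he : e ∈ extremePoints ℝ (closure Ω)) (hef : e ∈ frontier Ω)
    (ha : RayTo Ω' τ e o a) : foc Ω' τ e o = a :=
  (foc_spec h h' hτ ho he hef).unique h' (hτ.1 ho) ha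

/-- The limit point does not change along a ray. -/
lemma foc_ray (h : Dom Ω) (h' : Dom Ω') (hτ : IsHilbertIsometry Ω Ω' τ) {o e : Euc n}
    (ho : o ∈ Ω) (he : e ∈ extremePoints ℝ (closure Ω)) (hef : e ∈ frontier Ω) {u : ℝ}
    (hu : 0 ≤ u) : foc Ω' τ e (pt o e u) = foc Ω' τ e o := by
  obtain ⟨hf, c, hc, hR⟩ := foc_spec h h' hτ ho he hef
  refine foc_eq h h' hτ (h.pt_mem ho he.1 hu) he hef ⟨hf, c * (1 + u) / (1 + c * u), by positivity,
    fun v hv => ?_⟩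
  rw [pt_pt _ _ hu hv, hR _ (by positivity), hR _ hu, pt_pt _ _ (by positivity) (by positivity)]
  congr 1
  field_simp

/-- If the segments from a fixed boundary point `g` to the points of the ray `oe` near `e` are
unique geodesics, the ray `oe` and the ray to `e` inside the chord `ge` have the same limit. -/
lemma foc_chord (h : Dom Ω) (h' : Dom Ω') (hτ : IsHilbertIsometry Ω Ω' τ) {o e g : Euc n}
    (ho : o ∈ Ω) (he : e ∈ extremePoints ℝ (closure Ω)) (hef : e ∈ frontier Ω)
    (hg : g ∈ closure Ω) (hq : e + (1 / 3 : ℝ) • (g - e) ∈ Ω)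
    (hr : ∀ᶠ u : ℝ in Filter.atTop,
      Rigid Ω (pt o e u) (pt o e u + (2 / 3 : ℝ) • (g - pt o e u))) :
    foc Ω' τ e o = foc Ω' τ e (e + (2 / 3 : ℝ) • (g - e)) := by
  set q := e + (1 / 3 : ℝ) • (g - e) with hq'
  set r := e + (2 / 3 : ℝ) • (g - e) with hr'
  have hrΩ : r ∈ Ω := by
    have := h.combo hq hg (a := 1 / 2) (b := 1 / 2) (by norm_num) (by norm_num) (by norm_num)
    convert this using 1
    rw [hr', hq']; module
  obtain ⟨ha, c, hc, hR⟩ := foc_spec h h' hτ ho he hef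
  set a := foc Ω' τ e o
  obtain ⟨hb, d, hd, hS⟩ := foc_spec h h' hτ hrΩ he hef
  set b := foc Ω' τ e r
  have hmem : ∀ u : ℝ, 0 ≤ u → ∀ s : ℝ, 0 ≤ s → s < 1 → pt o e u + s • (g - pt o e u) ∈ Ω := by
    intro u hu s hs hs1
    have := h.combo (h.pt_mem ho he.1 hu) hg (show 0 < 1 - s by linarith) hs (by ring)
    convert this using 1; module
  have T0 := tendsto_pt o e
  have Ts : ∀ s : ℝ, Filter.Tendsto (fun u => pt o e u + s • (g - pt o e u)) Filter.atTop
      (nhds (e + s • (g - e))) := fun s =>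
    T0.add ((tendsto_const_nhds.sub T0).const_smul s)
  have hcont := iso_cont h h' hτ
  have Tτ : ∀ s : ℝ, 0 ≤ s → s < 1 → e + s • (g - e) ∈ Ω →
      Filter.Tendsto (fun u => τ (pt o e u + s • (g - pt o e u))) Filter.atTop
        (nhds (τ (e + s • (g - e)))) := by
    intro s hs hs1 hm
    have := (hcont.continuousAt (h.op.mem_nhds hm)).tendsto
    exact this.comp (Ts s)
  have Tz : Filter.Tendsto (fun u => τ (pt o e u)) Filter.atTop (nhds a) := by
    have : Filter.Tendsto (fun u : ℝ => c * u) Filter.atTop Filter.atTop :=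
      Filter.tendsto_id.const_mul_atTop hc
    have := (tendsto_pt (τ o) a).comp this
    refine this.congr' ?_
    filter_upwards [Filter.eventually_ge_atTop 0] with u hu
    exact (hR u hu).symm
  have Tq := Tτ (1 / 3) (by norm_num) (by norm_num) hq
  have Tr := Tτ (2 / 3) (by norm_num) (by norm_num) hrΩ
  have hev : ∀ᶠ u : ℝ in Filter.atTop,
      dist (τ (pt o e u)) (τ (pt o e u + (1 / 3 : ℝ) • (g - pt o e u))) +
      dist (τ (pt o e u + (1 / 3 : ℝ) • (g - pt o e u)))
        (τ (pt o e u + (2 / 3 : ℝ) • (g - pt o e u))) =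
      dist (τ (pt o e u)) (τ (pt o e u + (2 / 3 : ℝ) • (g - pt o e u))) := by
    filter_upwards [hr, Filter.eventually_ge_atTop 0] with u hu hu0
    rw [dist_add_dist_eq_iff, ← mem_segment_iff_wbtw]
    refine iso_seg h h' hτ (h.pt_mem ho he.1 hu0) (hmem u hu0 _ (by norm_num) (by norm_num)) hu ?_
    exact ⟨1 / 2, 1 / 2, by norm_num, by norm_num, by norm_num, by module⟩
  have hlim : dist a (τ q) + dist (τ q) (τ r) = dist a (τ r) := by
    have l1 := (Tz.dist Tq).add (Tq.dist Tr)
    have l2 := Tz.dist Tr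
    exact tendsto_nhds_unique (l1.congr' hev) l2
  rw [dist_add_dist_eq_iff, ← mem_segment_iff_wbtw] at hlim
  have hqr : q = pt r e 1 := by
    rw [pt_eq _ _ zero_le_one, hq', hr']; module
  have eq1 := hS 1 zero_le_one
  rw [← hqr, pt_eq _ _ (by positivity)] at eq1
  have hqr' : τ q ≠ τ r := by
    intro hh
    have h1 := iso_inj h hτ hq hrΩ hh
    have := pt_inj h hrΩ hef zero_le_one le_rfl (hqr.symm.trans (h1.trans (pt_zero r e).symm))
    linarith
  obtain ⟨x, y, hx, hy, hxy, hE⟩ := hlim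
  have hx0 : 0 < x := by
    rcases eq_or_lt_of_le hx with rfl | hx
    · exfalso; apply hqr'
      rw [← hE, show y = 1 by linarith]; module
    · exact hx
  set m := d * 1 / (1 + d * 1) with hm
  have hm0 : 0 < m := by positivity
  have eb : b = τ r + m⁻¹ • (τ q - τ r) := by
    rw [eq1]; match_scalars <;> field_simp <;> ring
  have ea : a = τ r + x⁻¹ • (τ q - τ r) := by
    rw [← hE, show y = 1 - x by linarith]; match_scalars <;> field_simp
    ring
  have := h'.ray_unique (hτ.1 hrΩ) (show 0 < m⁻¹ by positivity) (show 0 < x⁻¹ by positivity)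
    (v := τ q - τ r) (eb ▸ hb) (ea ▸ ha)
  rw [ea, eb, this]

/-- An extreme point joined to another one through the interior is a focusing point. -/
lemma foc_visible (h : Dom Ω) (h' : Dom Ω') (hτ : IsHilbertIsometry Ω Ω' τ) {e f : Euc n}
    (he : e ∈ extremePoints ℝ (closure Ω)) (hef : e ∈ frontier Ω)
    (hf : f ∈ extremePoints ℝ (closure Ω)) (hff : f ∈ frontier Ω)
    (hm : (1 / 2 : ℝ) • e + (1 / 2 : ℝ) • f ∈ Ω) :
    ∃ a ∈ frontier Ω', ∀ o ∈ Ω, foc Ω' τ e o = a := by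
  have hq : e + (1 / 3 : ℝ) • (f - e) ∈ Ω := by
    have := h.combo hm he.1 (a := 2 / 3) (b := 1 / 3) (by norm_num) (by norm_num) (by norm_num)
    convert this using 1; module
  have hr : e + (2 / 3 : ℝ) • (f - e) ∈ Ω := by
    have := h.combo hm hf.1 (a := 2 / 3) (b := 1 / 3) (by norm_num) (by norm_num) (by norm_num)
    convert this using 1; module
  refine ⟨_, (foc_spec h h' hτ hr he hef).1, fun o ho => ?_⟩
  refine foc_chord h h' hτ ho he hef hf.1 hq ?_
  filter_upwards [Filter.eventually_ge_atTop 0] with u hu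
  have hz := h.pt_mem ho he.1 hu
  have e1 : pt o e u + (3 / 2 : ℝ) • (pt o e u + (2 / 3 : ℝ) • (f - pt o e u) - pt o e u) = f := by
    module
  refine h.rigid_of_ext (p := 3 / 2) hz ?_ (by norm_num) ?_ ?_
  · have := h.combo hz hf.1 (a := 1 / 3) (b := 2 / 3) (by norm_num) (by norm_num) (by norm_num)
    convert this using 1; module
  · rw [e1]; exact hff
  · rw [e1]; exact hf

end iso

/-! ### Moving along rays to a focusing point -/

/-- Affine independence of three points. -/
def Ind3 {n : ℕ} (p q r : Euc n) : Prop :=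
  ∀ a b c : ℝ, a + b + c = 0 → a • p + b • q + c • r = 0 → a = 0 ∧ b = 0 ∧ c = 0

section planar
variable {n : ℕ} {Ω Ω' : Set (Euc n)} {τ : Euc n → Euc n}

/-- Independence of three points is preserved, for rays from `o` to a focusing point `e` and to
another extreme point `f`. -/
lemma ind3_image (h : Dom Ω) (h' : Dom Ω') (hτ : IsHilbertIsometry Ω Ω' τ) {e f o e' f' : Euc n}
    (he : e ∈ closure Ω) (hf : f ∈ closure Ω) (ho : o ∈ Ω) (hind : Ind3 o e f)
    (hRe : ∀ x ∈ Ω, RayTo Ω' τ e x e') (hRf : RayTo Ω' τ f o f') : Ind3 (τ o) e' f' := by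
  have ho' := hτ.1 ho
  have he' : e' ∈ frontier Ω' := (hRe o ho).1
  have hoe' : τ o ≠ e' := fun hh => h'.not_frontier ho' (hh ▸ he')
  intro a b c habc hE
  have hc : c = 0 := by
    by_contra hc
    exfalso
    -- the image of a point `x` of the ray `of` would lie on the line through `τ o` and `e'`
    obtain ⟨-, k, hk, hR⟩ := hRf
    have hx : pt o f 1 ∈ Ω := h.pt_mem ho hf zero_le_one
    have hx' := hτ.1 hx
    have hf' : f' = τ o + (-b / c) • (e' - τ o) := by
      have : c • f' = c • (τ o + (-b / c) • (e' - τ o)) := by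
        rw [smul_add, smul_smul, mul_div_cancel₀ _ hc]
        have : a = -b - c := by linarith
        rw [this] at hE
        linear_combination (norm := module) hE
      exact smul_right_injective _ hc this
    obtain ⟨t, ht⟩ : ∃ t : ℝ, τ (pt o f 1) = τ o + t • (e' - τ o) := by
      refine ⟨k / (1 + k) * (-b / c), ?_⟩
      rw [hR 1 zero_le_one, mul_one, pt_eq _ _ hk.le]
      rw [hf']
      module
    rcases lt_or_ge t 0 with h0 | h0
    · obtain ⟨-, m, hm, hS⟩ := hRe _ hx
      have h1 : τ o = τ (pt (pt o f 1) e (-t / m)) := by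
        have : 0 < -t := by linarith
        have h1t : 1 - t ≠ 0 := by linarith
        have h1t' : 1 + -t ≠ 0 := by linarith
        rw [hS _ (by positivity), mul_div_cancel₀ _ hm.ne', pt_eq _ _ this.le, ht]
        match_scalars <;> field_simp <;> ring
      have hpos : 0 ≤ -t / m := div_nonneg (by linarith) hm.le
      have h2 := iso_inj h hτ ho (h.pt_mem hx he hpos) h1
      set w := -t / m
      have hw : 1 + w ≠ 0 := by positivity
      have := hind (1 / 2 - (1 + w)) w (1 / 2) (by ring) (by
        have : (1 + w) • o = (1 + w) • pt (pt o f 1) e w := by rw [← h2]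
        simp only [pt] at this
        rw [smul_smul, mul_inv_cancel₀ hw] at this
        linear_combination (norm := skip) -this
        match_scalars <;> ring)
      linarith [this.2.2]
    · rcases lt_or_ge t 1 with h1 | h1
      · obtain ⟨-, m, hm, hS⟩ := hRe o ho
        have h1t : 0 < 1 - t := by linarith
        have h2 : τ (pt o f 1) = τ (pt o e (t / (1 - t) / m)) := by
          rw [hS _ (by positivity), mul_div_cancel₀ _ hm.ne', ht, pt_eq (τ o) e' (by positivity)]
          match_scalars <;> field_simp <;> ring
        have hpos : 0 ≤ t / (1 - t) / m := by positivity
        have h3 := iso_inj h hτ hx (h.pt_mem ho he hpos) h2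
        set w := t / (1 - t) / m
        have hw : 1 + w ≠ 0 := by positivity
        have := hind (1 / 2 * (1 + w) - 1) (-w) (1 / 2 * (1 + w)) (by ring) (by
          have : (1 + w) • pt o f 1 = (1 + w) • pt o e w := by rw [← h3]
          simp only [pt] at this
          rw [smul_smul _ _ (o + w • e), mul_inv_cancel₀ hw] at this
          linear_combination (norm := skip) this
          match_scalars <;> ring)
        have : (1 + w) = 0 := by linarith [this.2.2]
        exact hw this
      · have : e' ∈ Ω' := by
          have ht0 : 0 < t := by linarith
          refine h'.seg_sub ho' hx' ⟨1 - 1 / t, 1 / t, ?_, by positivity, by ring, ?_⟩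
          · rw [sub_nonneg, div_le_one ht0]; exact h1
          · rw [ht]; match_scalars <;> field_simp <;> ring
        exact h'.not_frontier this he'
  subst hc
  have hb : b = -a := by linarith
  subst hb
  have : a • (τ o - e') = 0 := by linear_combination (norm := module) hE
  rw [smul_eq_zero] at this
  rcases this with h0 | h0
  · simp [h0]
  · exact absurd (sub_eq_zero.1 h0) hoe'

/-- The point `[o + u e + v f]`. -/
def mv {n : ℕ} (o e f : Euc n) (u v : ℝ) : Euc n := (1 + u + v)⁻¹ • (o + u • e + v • f)

lemma mv_eq (o e f : Euc n) {u v : ℝ} (hu : 0 ≤ u) (hv : 0 ≤ v) :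
    mv o e f u v = pt (pt o f v) e (u / (1 + v)) := by
  simp only [mv, pt]
  match_scalars <;> field_simp <;> ring

lemma mv_eq' (o e f : Euc n) {u v : ℝ} (hu : 0 ≤ u) (hv : 0 ≤ v) :
    mv o e f u v = pt (pt o e u) f (v / (1 + u)) := by
  simp only [mv, pt]
  match_scalars <;> field_simp

lemma Dom.mv_mem (h : Dom Ω) {o e f : Euc n} (ho : o ∈ Ω) (he : e ∈ closure Ω)
    (hf : f ∈ closure Ω) {u v : ℝ} (hu : 0 ≤ u) (hv : 0 ≤ v) : mv o e f u v ∈ Ω := by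
  rw [mv_eq _ _ _ hu hv]
  exact h.pt_mem (h.pt_mem ho hf hv) he (by positivity)

lemma aff_mv (ψ : Euc n →ᵃ[ℝ] ℝ) (o e f : Euc n) {u v : ℝ} (hu : 0 ≤ u) (hv : 0 ≤ v) :
    ψ (mv o e f u v) = (1 + u + v)⁻¹ * (ψ o + u * ψ e + v * ψ f) := by
  rw [mv_eq _ _ _ hu hv, aff_pt _ _ _ (by positivity), aff_pt _ _ _ (by positivity)]
  field_simp
  ring

/-- The limits of the rays to `f` do not change when the base point moves towards a focusing
point `e`. -/
lemma foc_move (h : Dom Ω) (h' : Dom Ω') (hτ : IsHilbertIsometry Ω Ω' τ) {e f o e' : Euc n}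
    (he : e ∈ extremePoints ℝ (closure Ω)) (hf : f ∈ extremePoints ℝ (closure Ω))
    (hff : f ∈ frontier Ω) (hRe : ∀ x ∈ Ω, RayTo Ω' τ e x e') (ho : o ∈ Ω)
    (hind : Ind3 o e f) {u : ℝ} (hu : 0 ≤ u) :
    foc Ω' τ f (pt o e u) = foc Ω' τ f o := by
  rcases eq_or_lt_of_le hu with rfl | hu
  · rw [pt_zero]
  have hou := h.pt_mem ho he.1 hu.le
  have hR0 := foc_spec h h' hτ ho hf hff
  have hind' := ind3_image h h' hτ he.1 hf.1 ho hind hRe hR0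
  obtain ⟨hf0, c, hc, hR0⟩ := hR0
  obtain ⟨hfu, D, hD, hRu⟩ := foc_spec h h' hτ hou hf hff
  set f0 := foc Ω' τ f o
  set fu := foc Ω' τ f (pt o e u)
  set o' := τ o with ho'def
  have ho' : o' ∈ Ω' := hτ.1 ho
  have hA : ∀ v : ℝ, ∃ A : ℝ, 0 ≤ v → 0 < A ∧ ∀ u : ℝ, 0 ≤ u → τ (mv o e f u v) =
      (1 + c * v + A * u)⁻¹ • (o' + (c * v) • f0 + (A * u) • e') := by
    intro v
    by_cases hv : 0 ≤ v
    swap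
    · exact ⟨0, fun hh => absurd hh hv⟩
    obtain ⟨-, C, hC, hS⟩ := hRe _ (h.pt_mem ho hf.1 hv)
    refine ⟨C * (1 + c * v) / (1 + v), fun _ => ⟨by positivity, fun u hu => ?_⟩⟩
    rw [mv_eq _ _ _ hu hv, hS _ (by positivity), hR0 v hv]
    simp only [pt]
    match_scalars <;> field_simp
  choose A hA using hA
  have A0 := (hA 0 le_rfl).1
  set B := D * (1 + A 0 * u) / (1 + u) with hB
  have hBpos : 0 < B := by positivity
  have hM : ∀ v : ℝ, 0 ≤ v → τ (mv o e f u v) =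
      (1 + A 0 * u + B * v)⁻¹ • (o' + (A 0 * u) • e' + (B * v) • fu) := by
    intro v hv
    rw [mv_eq' _ _ _ hu.le hv, hRu _ (by positivity)]
    have e0 : pt o e u = mv o e f u 0 := by simp [mv, pt]
    rw [e0, (hA 0 le_rfl).2 u hu.le]
    simp only [pt, hB]
    match_scalars <;> field_simp <;> ring
  have hcomp : ∀ v : ℝ, 0 < v →
      (1 + A 0 * u + B * v) • (o' + (c * v) • f0 + (A v * u) • e') =
      (1 + c * v + A v * u) • (o' + (A 0 * u) • e' + (B * v) • fu) := by
    intro v hv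
    have Av := (hA v hv.le).1
    have e1 := (hM v hv.le).symm.trans ((hA v hv.le).2 u hu.le)
    have w1 : 1 + A 0 * u + B * v ≠ 0 := by positivity
    have w2 : 1 + c * v + A v * u ≠ 0 := by positivity
    have e2 := congrArg (fun x => ((1 + A 0 * u + B * v) * (1 + c * v + A v * u)) • x) e1
    simp only [smul_smul] at e2
    rw [show (1 + A 0 * u + B * v) * (1 + c * v + A v * u) * (1 + A 0 * u + B * v)⁻¹ =
      1 + c * v + A v * u by field_simp,
      show (1 + A 0 * u + B * v) * (1 + c * v + A v * u) * (1 + c * v + A v * u)⁻¹ =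
      1 + A 0 * u + B * v by field_simp] at e2
    exact e2.symm
  -- eliminating `fu` from two of these relations shows that the weights on both sides agree
  have hweight : ∀ v w : ℝ, 0 < v → 0 < w → v ≠ w → B * v + A 0 * u = c * v + A v * u := by
    intro v w hv hw hvw
    have Av := (hA v hv.le).1
    have Aw := (hA w hw.le).1
    have k1 := hcomp v hv
    have k2 := hcomp w hw
    set P := 1 + A 0 * u + B * v with hP
    set Q := 1 + c * v + A v * u with hQ
    set P2 := 1 + A 0 * u + B * w with hP2
    set Q2 := 1 + c * w + A w * u with hQ2
    have := hind' (w * (Q2 * P) - v * (Q * P2) - (w - v) * (Q * Q2))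
      (w * (Q2 * P) * (A v * u) - v * (Q * P2) * (A w * u) - (w - v) * (Q * Q2) * (A 0 * u))
      (w * (Q2 * P) * (c * v) - v * (Q * P2) * (c * w)) (by
        rw [hP, hQ, hP2, hQ2]; ring) (by
        linear_combination (norm := module) (w * Q2) • k1 - (v * Q) • k2)
    have hQpos : 0 < Q := by positivity
    have hQ2pos : 0 < Q2 := by positivity
    have e1 : (w * c * v) * (Q2 * P) = (w * c * v) * (Q * P2) := by linear_combination this.2.2
    have e2 := mul_left_cancel₀ (by positivity) e1
    have e3 : ((w - v) * Q2) * P = ((w - v) * Q2) * Q := by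
      linear_combination this.1 - v * e2
    have e4 := mul_left_cancel₀ (mul_ne_zero (sub_ne_zero.2 hvw.symm) hQ2pos.ne') e3
    rw [hP, hQ] at e4
    linarith
  have hw : ∀ v : ℝ, 0 < v → B * v + A 0 * u = c * v + A v * u := fun v hv =>
    hweight v (v + 1) hv (by linarith) (by linarith)
  have hfu' : B • fu = c • f0 + (B - c) • e' := by
    have k := hcomp 1 one_pos
    have w1 := hw 1 one_pos
    have Av := (hA 1 zero_le_one).1
    have w2 : 1 + c * 1 + A 1 * u ≠ 0 := by positivity
    rw [show 1 + A 0 * u + B * 1 = 1 + c * 1 + A 1 * u by linarith] at k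
    have k' := smul_right_injective _ w2 k
    rw [show A 1 * u = B - c + A 0 * u by linarith] at k'
    linear_combination (norm := module) -k'
  set k := (B - c) / u with hk
  have hAv : ∀ v : ℝ, 0 < v → A v = A 0 + k * v := by
    intro v hv
    have := hw v hv
    rw [hk]; field_simp; linarith
  have hk0 : 0 ≤ k := by
    by_contra hneg
    push Not at hneg
    have hv : 0 < A 0 / (-k) := div_pos A0 (by linarith)
    have h1 := hAv _ hv
    have h2 := (hA _ hv.le).1
    have : k * (A 0 / (-k)) = - A 0 := by
      have : k ≠ 0 := by linarith
      field_simp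
    rw [h1, this] at h2
    linarith
  rcases eq_or_lt_of_le hk0 with hk0 | hk0
  · have : B = c := by
      have : (B - c) / u = 0 := by rw [← hk, ← hk0]
      rw [div_eq_zero_iff] at this
      rcases this with h0 | h0 <;> linarith
    rw [this, sub_self, zero_smul, add_zero] at hfu'
    exact smul_right_injective _ hc.ne' hfu'
  · exfalso
    have hBc : 0 < B - c := by
      have : B - c = k * u := by rw [hk]; field_simp
      rw [this]; positivity
    obtain ⟨χ, hχ, χ0⟩ := h'.support (h'.mem_frontier.1 hfu).2
    have he' : e' ∈ closure Ω' := Dom.frontier_closure (hRe o ho).1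
    have z1 := hχ.closure he'
    have z2 := hχ.closure (Dom.frontier_closure hf0)
    have z3 : c * χ f0 + (B - c) * χ e' = 0 := by
      have : fu = (c / B) • f0 + ((B - c) / B) • e' := by
        have := congrArg (fun x => B⁻¹ • x) hfu'
        simp only [smul_smul, inv_mul_cancel₀ hBpos.ne', one_smul, smul_add] at this
        rw [this, div_eq_inv_mul, div_eq_inv_mul]
      rw [this, aff2 _ _ _ (by field_simp; ring)] at χ0
      field_simp at χ0
      linarith
    have zf : χ f0 = 0 := by nlinarith
    have ze : χ e' = 0 := by nlinarith
    have hval : ∀ s : ℝ, 0 < s → χ (τ (mv o e f s s)) =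
        (1 + c * s + A s * s)⁻¹ * χ o' := by
      intro s hs
      have As := (hA s hs.le).1
      have : (1 + c * s + A s * s)⁻¹ • (o' + (c * s) • f0 + (A s * s) • e') =
          mv o' f0 e' (c * s) (A s * s) := rfl
      rw [(hA s hs.le).2 s hs.le, this, aff_mv _ _ _ _ (by positivity) (by positivity), zf, ze]
      ring
    -- the distance between `[o + s e + s f]` and `[o + 2 s e + 2 s f]` is at most `log 2`
    have hineq : ∀ s : ℝ, 0 < s → 2 * k * s ^ 2 ≤ 1 := by
      intro s hs
      have m1 := h.mv_mem ho he.1 hf.1 (u := s) (v := s) hs.le hs.le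
      have m2 := h.mv_mem ho he.1 hf.1 (u := 2 * s) (v := 2 * s) (by positivity) (by positivity)
      have d1 : Real.exp (hilbertDist Ω (mv o e f (2 * s) (2 * s)) (mv o e f s s)) ≤ 2 := by
        refine h.dist_le m2 m1 fun ψ χ hψ hχ => ?_
        have p1 := (hψ o ho).le
        have p2 := hψ.closure he.1
        have p3 := hψ.closure hf.1
        have q1 := (hχ o ho).le
        have q2 := hχ.closure he.1
        have q3 := hχ.closure hf.1
        rw [aff_mv _ _ _ _ (by positivity) (by positivity),
          aff_mv _ _ _ _ (by positivity) (by positivity),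
          aff_mv _ _ _ _ (by positivity) (by positivity),
          aff_mv _ _ _ _ (by positivity) (by positivity)]
        have : 0 ≤ (1 + 2 * s + 2 * s)⁻¹ * (1 + s + s)⁻¹ *
            (ψ o * χ o + 3 * s * ψ o * (χ e + χ f) +
              2 * s ^ 2 * (ψ e + ψ f) * (χ e + χ f)) := by positivity
        linarith
      have l := h'.lower posAff_one hχ (hτ.1 m2) (hτ.1 m1)
      rw [hτ.2.2 _ m2 _ m1] at l
      simp only [AffineMap.const_apply, one_mul] at l
      have hpos2 := hχ _ (hτ.1 m2)
      have l2 : χ (τ (mv o e f s s)) ≤ 2 * χ (τ (mv o e f (2 * s) (2 * s))) :=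
        l.trans (mul_le_mul_of_nonneg_right d1 hpos2.le)
      rw [hval s hs, hval (2 * s) (by positivity), hAv s hs, hAv (2 * s) (by positivity)] at l2
      have co := hχ _ ho'
      have w1 : 0 < 1 + c * s + (A 0 + k * s) * s := by positivity
      have w2 : 0 < 1 + c * (2 * s) + (A 0 + k * (2 * s)) * (2 * s) := by positivity
      rw [← mul_assoc] at l2
      have l3 := le_of_mul_le_mul_right l2 co
      rw [inv_eq_one_div, ← div_eq_mul_inv, div_le_div_iff₀ w1 w2] at l3
      nlinarith
    have := hineq (k⁻¹ + 1) (by positivity)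
    have e1 : 2 * k * (k⁻¹ + 1) ^ 2 = 2 * k⁻¹ + 4 + 2 * k := by field_simp; ring
    rw [e1] at this
    have : 0 < k⁻¹ := by positivity
    linarith

end planar

/-! ### Affine coordinates in dimension three -/

/-- Affine independence of four points. -/
def Ind4 {n : ℕ} (p q r s : Euc n) : Prop :=
  ∀ a b c d : ℝ, a + b + c + d = 0 → a • p + b • q + c • r + d • s = 0 →
    a = 0 ∧ b = 0 ∧ c = 0 ∧ d = 0

/-- Barycentric coordinates with respect to four points. -/
structure Coord {n : ℕ} (p₀ p₁ p₂ p₃ : Euc n) (l₀ l₁ l₂ l₃ : Euc n →ᵃ[ℝ] ℝ) : Prop where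
  sum : ∀ x, l₀ x + l₁ x + l₂ x + l₃ x = 1
  eq : ∀ x, x = l₀ x • p₀ + l₁ x • p₁ + l₂ x • p₂ + l₃ x • p₃

section coords

lemma Ind4.eq {n : ℕ} {p q r s : Euc n} (h : Ind4 p q r s) {a b c d a' b' c' d' : ℝ}
    (hs : a + b + c + d = a' + b' + c' + d')
    (he : a • p + b • q + c • r + d • s = a' • p + b' • q + c' • r + d' • s) :
    a = a' ∧ b = b' ∧ c = c' ∧ d = d' := by
  have := h (a - a') (b - b') (c - c') (d - d') (by linarith) (by
    linear_combination (norm := module) he)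
  refine ⟨?_, ?_, ?_, ?_⟩ <;> linarith [this.1, this.2.1, this.2.2.1, this.2.2.2]

lemma aff_cont {n : ℕ} (ψ : Euc n →ᵃ[ℝ] ℝ) : Continuous ψ := ψ.continuous_of_finiteDimensional

lemma aff3 {n : ℕ} (ψ : Euc n →ᵃ[ℝ] ℝ) (p q r : Euc n) {a b c : ℝ} (h : a + b + c = 1) :
    ψ (a • p + b • q + c • r) = a * ψ p + b * ψ q + c * ψ r := by
  rw [aff_dec, aff_dec ψ p, aff_dec ψ q, aff_dec ψ r]
  simp only [map_add, map_smul, smul_eq_mul]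
  linear_combination (-ψ 0) * h

lemma aff4 {n : ℕ} (ψ : Euc n →ᵃ[ℝ] ℝ) (p q r s : Euc n) {a b c d : ℝ} (h : a + b + c + d = 1) :
    ψ (a • p + b • q + c • r + d • s) = a * ψ p + b * ψ q + c * ψ r + d * ψ s := by
  rw [aff_dec, aff_dec ψ p, aff_dec ψ q, aff_dec ψ r, aff_dec ψ s]
  simp only [map_add, map_smul, smul_eq_mul]
  linear_combination (-ψ 0) * h

lemma Coord.val {n : ℕ} {p q r s : Euc n} {l₀ l₁ l₂ l₃ : Euc n →ᵃ[ℝ] ℝ}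
    (hl : Coord p q r s l₀ l₁ l₂ l₃) (h : Ind4 p q r s) {x : Euc n} {a b c d : ℝ}
    (hs : a + b + c + d = 1) (he : x = a • p + b • q + c • r + d • s) :
    l₀ x = a ∧ l₁ x = b ∧ l₂ x = c ∧ l₃ x = d :=
  h.eq (by rw [hl.sum, hs]) ((hl.eq x).symm.trans he)

lemma Ind4.coords {p q r s : Euc 3} (h : Ind4 p q r s) :
    ∃ l₀ l₁ l₂ l₃ : Euc 3 →ᵃ[ℝ] ℝ, Coord p q r s l₀ l₁ l₂ l₃ := by
  have hli : LinearIndependent ℝ ![q - p, r - p, s - p] := by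
    rw [Fintype.linearIndependent_iff]
    intro g hg
    simp only [Fin.sum_univ_three, Matrix.cons_val_zero, Matrix.cons_val_one,
      Matrix.cons_val] at hg
    have := h (-(g 0 + g 1 + g 2)) (g 0) (g 1) (g 2) (by ring) (by
      linear_combination (norm := module) hg)
    intro i
    fin_cases i
    · exact this.2.1
    · exact this.2.2.1
    · exact this.2.2.2
  let b := basisOfLinearIndependentOfCardEqFinrank hli (by simp)
  have hb : ∀ i, b i = ![q - p, r - p, s - p] i := fun i => by
    simp [b]
  let L : Fin 3 → Euc 3 →ᵃ[ℝ] ℝ := fun i =>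
    (b.coord i).toAffineMap - AffineMap.const ℝ (Euc 3) (b.coord i p)
  have hL : ∀ i x, L i x = b.coord i (x - p) := fun i x => by
    simp [L, map_sub]
  refine ⟨AffineMap.const ℝ (Euc 3) 1 - L 0 - L 1 - L 2, L 0, L 1, L 2, ?_, ?_⟩
  · intro x
    simp
    ring
  · intro x
    have h1 := b.sum_repr (x - p)
    simp only [Fin.sum_univ_three, hb, Matrix.cons_val_zero, Matrix.cons_val_one,
      Matrix.cons_val] at h1
    simp only [AffineMap.coe_sub, Pi.sub_apply, AffineMap.const_apply, hL,
      Module.Basis.coord_apply]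
    linear_combination (norm := module) -h1

/-- There is a plane through any three points. -/
lemma exists_plane (a b c : Euc 3) :
    ∃ ψ : Euc 3 →ᵃ[ℝ] ℝ, ψ.linear ≠ 0 ∧ ψ a = 0 ∧ ψ b = 0 ∧ ψ c = 0 := by
  have hlt : Submodule.span ℝ ({b - a, c - a} : Set (Euc 3)) < ⊤ := by
    rw [lt_top_iff_ne_top]
    intro htop
    have h1 := finrank_span_finset_le_card (R := ℝ) ({b - a, c - a} : Finset (Euc 3))
    rw [Set.finrank, Finset.coe_insert, Finset.coe_singleton, htop, finrank_top,
      finrank_euclideanSpace, Fintype.card_fin] at h1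
    have := Finset.card_le_two (a := b - a) (b := c - a)
    omega
  obtain ⟨f, hf, hle⟩ := Submodule.exists_le_ker_of_lt_top _ hlt
  have h1 : f (b - a) = 0 := hle (Submodule.subset_span (by simp))
  have h2 : f (c - a) = 0 := hle (Submodule.subset_span (by simp))
  rw [map_sub] at h1 h2
  refine ⟨f.toAffineMap - AffineMap.const ℝ (Euc 3) (f a), ?_, ?_, ?_, ?_⟩
  · simpa using hf
  · simp
  · simpa using h1
  · simpa using h2

lemma not_plane {U : Set (Euc 3)} (hU : IsOpen U) (hne : U.Nonempty) {ψ : Euc 3 →ᵃ[ℝ] ℝ}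
    (hψ : ψ.linear ≠ 0) : ∃ x ∈ U, ψ x ≠ 0 := by
  by_contra hcon
  push Not at hcon
  obtain ⟨x, hx⟩ := hne
  obtain ⟨r, hr, hb⟩ := Metric.isOpen_iff.1 hU x hx
  apply hψ
  ext v
  by_cases hv : v = 0
  · simp [hv]
  have hvn := norm_pos_iff.2 hv
  have hm : x + (r / (2 * ‖v‖)) • v ∈ U := by
    apply hb
    rw [Metric.mem_ball, dist_eq_norm, add_sub_cancel_left, norm_smul, Real.norm_eq_abs,
        abs_of_pos (by positivity)]
    field_simp
    linarith
  have h1 := hcon _ hm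
  have h2 := hcon _ hx
  rw [aff_dec, map_add, map_smul] at h1
  rw [aff_dec] at h2
  have h3 : (r / (2 * ‖v‖)) • ψ.linear v = 0 := by linarith
  rw [smul_eq_zero] at h3
  rcases h3 with h3 | h3
  · have : 0 < r / (2 * ‖v‖) := by positivity
    linarith
  · simpa using h3

lemma Dom.closure_hull {n : ℕ} {Ω : Set (Euc n)} (h : Dom Ω) :
    closure (convexHull ℝ (extremePoints ℝ (closure Ω))) = closure Ω :=
  closure_convexHull_extremePoints h.compact h.cv.closure

/-- The extreme points are not coplanar. -/
lemma Dom.ext_not_plane {Ω : Set (Euc 3)} (h : Dom Ω) {ψ : Euc 3 →ᵃ[ℝ] ℝ}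
    (hψ : ψ.linear ≠ 0) : ∃ x ∈ extremePoints ℝ (closure Ω), ψ x ≠ 0 := by
  by_contra hcon
  push Not at hcon
  obtain ⟨x, hx, hx0⟩ := not_plane h.op h.ne hψ
  apply hx0
  have hcv : Convex ℝ {y | ψ y = 0} := by
    intro y hy z hz a b ha hb hab
    simp only [mem_ofPred_eq] at *
    rw [aff2 _ _ _ hab, hy, hz]; ring
  have hcl : IsClosed {y | ψ y = 0} := isClosed_eq (aff_cont ψ) continuous_const
  have : closure (convexHull ℝ (extremePoints ℝ (closure Ω))) ⊆ {y | ψ y = 0} :=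
    closure_minimal (convexHull_min hcon hcv) hcl
  rw [h.closure_hull] at this
  exact this (subset_closure hx)

lemma Ind4.of_plane {e f k l : Euc 3} (h3 : Ind3 e f k) {ψ : Euc 3 →ᵃ[ℝ] ℝ} (h0 : ψ e = 0)
    (h1 : ψ f = 0) (h2 : ψ k = 0) (hl : ψ l ≠ 0) : Ind4 e f k l := by
  intro a b c d hs he
  have hd : d = 0 := by
    have := congrArg ψ.linear he
    rw [map_zero] at this
    simp only [map_add, map_smul, smul_eq_mul] at this
    rw [aff_dec] at h0 h1 h2
    have : d * ψ l = 0 := by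
      rw [aff_dec ψ l]
      linear_combination this + (-a) * h0 + (-b) * h1 + (-c) * h2 + ψ 0 * hs
    exact (mul_eq_zero.1 this).resolve_right hl
  subst hd
  have := h3 a b c (by linarith) (by simpa using he)
  exact ⟨this.1, this.2.1, this.2.2, rfl⟩

/-- Two distinct points of a set of points which is not coplanar are part of an affine basis. -/
lemma extend_two {E : Set (Euc 3)} (hE : ∀ ψ : Euc 3 →ᵃ[ℝ] ℝ, ψ.linear ≠ 0 → ∃ x ∈ E, ψ x ≠ 0)
    {e f : Euc 3} (hef : e ≠ f) : ∃ k ∈ E, ∃ l ∈ E, Ind4 e f k l := by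
  obtain ⟨ψ, hψ, h0, h1, -⟩ := exists_plane e f f
  obtain ⟨k, hk, hk0⟩ := hE ψ hψ
  have h3 : Ind3 e f k := by
    intro a b c hs he
    have hc : c = 0 := by
      have := congrArg ψ.linear he
      rw [map_zero] at this
      simp only [map_add, map_smul, smul_eq_mul] at this
      rw [aff_dec] at h0 h1
      have : c * ψ k = 0 := by
        rw [aff_dec ψ k]
        linear_combination this + (-a) * h0 + (-b) * h1 + ψ 0 * hs
      exact (mul_eq_zero.1 this).resolve_right hk0
    subst hc
    have hb : b = -a := by linarith
    subst hb
    have : a • (e - f) = 0 := by linear_combination (norm := module) he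
    rcases smul_eq_zero.1 this with h | h
    · simp [h]
    · exact absurd (sub_eq_zero.1 h) hef
  obtain ⟨χ, hχ, c0, c1, c2⟩ := exists_plane e f k
  obtain ⟨l, hl, hl0⟩ := hE χ hχ
  exact ⟨k, hk, l, hl, Ind4.of_plane h3 c0 c1 c2 hl0⟩

end coords

/-! ### Three points focusing on a common open set -/

/-- On some nonempty open subset `N` of `Ω`, the rays towards each of three extreme points, which
are affinely independent together with a point of `N`, are sent to rays with a common end point. -/
def LocFoc (Ω Ω' : Set (Euc 3)) (τ : Euc 3 → Euc 3) : Prop :=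
  ∃ N : Set (Euc 3), IsOpen N ∧ N ⊆ Ω ∧ ∃ o ∈ N,
    ∃ e₁ ∈ extremePoints ℝ (closure Ω), ∃ e₂ ∈ extremePoints ℝ (closure Ω),
    ∃ e₃ ∈ extremePoints ℝ (closure Ω), ∃ a₁ a₂ a₃ : Euc 3, Ind4 o e₁ e₂ e₃ ∧
      (∀ x ∈ N, RayTo Ω' τ e₁ x a₁) ∧ (∀ x ∈ N, RayTo Ω' τ e₂ x a₂) ∧
      (∀ x ∈ N, RayTo Ω' τ e₃ x a₃)

section locfoc
variable {Ω Ω' : Set (Euc 3)} {τ : Euc 3 → Euc 3}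

lemma ext3 (h : Dom Ω) {e : Euc 3} (he : e ∈ extremePoints ℝ (closure Ω)) : e ∈ frontier Ω :=
  ext_frontier' h (by norm_num) he

/-- The open positive cone of four affinely independent points, in barycentric coordinates. -/
lemma pos_open {l₀ l₁ l₂ l₃ : Euc 3 →ᵃ[ℝ] ℝ} :
    IsOpen {x | 0 < l₀ x ∧ 0 < l₁ x ∧ 0 < l₂ x ∧ 0 < l₃ x} :=
  (isOpen_lt continuous_const (aff_cont _)).inter ((isOpen_lt continuous_const (aff_cont _)).inter
    ((isOpen_lt continuous_const (aff_cont _)).inter (isOpen_lt continuous_const (aff_cont _))))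

/-- Two extreme points which see each other through `Ω` yield a third locally focusing point. -/
lemma locFoc_of_visible (h : Dom Ω) (h' : Dom Ω') (hτ : IsHilbertIsometry Ω Ω' τ) {e₁ e₂ : Euc 3}
    (he₁ : e₁ ∈ extremePoints ℝ (closure Ω)) (he₂ : e₂ ∈ extremePoints ℝ (closure Ω))
    (hm : (1 / 2 : ℝ) • e₁ + (1 / 2 : ℝ) • e₂ ∈ Ω) : LocFoc Ω Ω' τ := by
  have hf₁ := ext3 h he₁
  have hf₂ := ext3 h he₂
  obtain ⟨a₁, -, hF₁⟩ := foc_visible h h' hτ he₁ hf₁ he₂ hf₂ hm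
  obtain ⟨a₂, -, hF₂⟩ := foc_visible h h' hτ he₂ hf₂ he₁ hf₁ (by rwa [add_comm])
  have hR₁ : ∀ x ∈ Ω, RayTo Ω' τ e₁ x a₁ := fun x hx => hF₁ x hx ▸ foc_spec h h' hτ hx he₁ hf₁
  have hR₂ : ∀ x ∈ Ω, RayTo Ω' τ e₂ x a₂ := fun x hx => hF₂ x hx ▸ foc_spec h h' hτ hx he₂ hf₂
  have h12 : e₁ ≠ e₂ := by
    rintro rfl
    apply h.not_frontier hm
    convert hf₁ using 1
    module
  obtain ⟨f, hf, l, -, hI⟩ := extend_two (fun ψ hψ => h.ext_not_plane hψ) h12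
  have hff := ext3 h hf
  obtain ⟨ψ, hψ, p1, p2, p3⟩ := exists_plane e₁ e₂ f
  obtain ⟨o, ho, hoψ⟩ := not_plane h.op h.ne hψ
  have h3 : Ind3 e₁ e₂ f := by
    intro a b c hs hE
    have := hI a b c 0 (by linarith) (by simpa using hE)
    exact ⟨this.1, this.2.1, this.2.2.1⟩
  have hI4' := Ind4.of_plane h3 p1 p2 p3 hoψ
  have hI4 : Ind4 o e₁ e₂ f := by
    intro a b c d hs hE
    have := hI4' b c d a (by linarith) (by linear_combination (norm := module) hE)
    tauto
  obtain ⟨l₀, l₁, l₂, l₃, hl⟩ := hI4.coords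
  have key : ∀ x, 0 < l₀ x → 0 < l₁ x → 0 < l₂ x → 0 < l₃ x →
      x ∈ Ω ∧ foc Ω' τ f x = foc Ω' τ f o := by
    intro x h0 h1 h2 h3
    set z := pt o e₁ (l₁ x / l₀ x) with hz
    set y := pt z e₂ (l₂ x / (l₀ x + l₁ x)) with hy
    have hx : x = pt y f (l₃ x / (l₀ x + l₁ x + l₂ x)) := by
      have hs := hl.sum x
      have e1 : 1 + l₁ x / l₀ x = (l₀ x + l₁ x) / l₀ x := by field_simp
      have e2 : 1 + l₂ x / (l₀ x + l₁ x) = (l₀ x + l₁ x + l₂ x) / (l₀ x + l₁ x) := by field_simp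
      have e3 : 1 + l₃ x / (l₀ x + l₁ x + l₂ x) = 1 / (l₀ x + l₁ x + l₂ x) := by
        field_simp; linarith
      rw [hy, hz]
      simp only [pt]
      rw [e1, e2, e3]
      conv_lhs => rw [hl.eq x]
      match_scalars <;> field_simp
    have q1 : 0 ≤ l₁ x / l₀ x := by positivity
    have q2 : 0 ≤ l₂ x / (l₀ x + l₁ x) := by positivity
    have q3 : 0 ≤ l₃ x / (l₀ x + l₁ x + l₂ x) := by positivity
    have hzΩ : z ∈ Ω := h.pt_mem ho he₁.1 q1
    have hyΩ : y ∈ Ω := h.pt_mem hzΩ he₂.1 q2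
    have hI3 : Ind3 o e₁ f := by
      intro a b c hs hE
      have := hI4 a b 0 c (by linarith) (by linear_combination (norm := module) hE)
      tauto
    have hI3' : Ind3 z e₂ f := by
      intro a b c hs hE
      set u := l₁ x / l₀ x
      have hu : 1 + u ≠ 0 := by positivity
      have := hI4 (a * (1 + u)⁻¹) (a * (1 + u)⁻¹ * u) b c (by
          have : a * (1 + u)⁻¹ + a * (1 + u)⁻¹ * u = a := by field_simp
          linarith) (by
        simp only [hz, pt] at hE
        linear_combination (norm := module) hE)
      refine ⟨?_, this.2.2.1, this.2.2.2⟩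
      have := this.1
      simpa [hu] using this
    have r1 := foc_ray h h' hτ hyΩ hf hff q3
    have r2 := foc_move h h' hτ he₂ hf hff hR₂ hzΩ hI3' q2
    have r3 := foc_move h h' hτ he₁ hf hff hR₁ ho hI3 q1
    rw [← hx] at r1
    refine ⟨?_, r1.trans (r2.trans r3)⟩
    rw [hx]
    exact h.pt_mem hyΩ hf.1 q3
  set o' : Euc 3 := (1 / 4 : ℝ) • o + (1 / 4 : ℝ) • e₁ + (1 / 4 : ℝ) • e₂ + (1 / 4 : ℝ) • f with ho'
  have hv := hl.val hI4 (by norm_num) ho'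
  refine ⟨_, pos_open, fun x hx => (key x hx.1 hx.2.1 hx.2.2.1 hx.2.2.2).1, o', ?_, e₁, he₁, e₂,
    he₂, f, hf, a₁, a₂, foc Ω' τ f o, ?_, ?_, ?_, ?_⟩
  · simp [hv]
  · intro a b c d hs hE
    have := hI4 (a / 4) (b + a / 4) (c + a / 4) (d + a / 4) (by linarith) (by
      rw [ho'] at hE
      linear_combination (norm := module) hE)
    refine ⟨?_, ?_, ?_, ?_⟩ <;> linarith [this.1, this.2.1, this.2.2.1, this.2.2.2]
  · exact fun x hx => hR₁ x (key x hx.1 hx.2.1 hx.2.2.1 hx.2.2.2).1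
  · exact fun x hx => hR₂ x (key x hx.1 hx.2.1 hx.2.2.1 hx.2.2.2).1
  · intro x hx
    have := key x hx.1 hx.2.1 hx.2.2.1 hx.2.2.2
    rw [← this.2]
    exact foc_spec h h' hτ this.1 hf hff

end locfoc

/-! ### Local projectivity -/

/-- The point `[o + u e₁ + v e₂ + w e₃]`, in projective notation. -/
def m3 {n : ℕ} (o e₁ e₂ e₃ : Euc n) (u v w : ℝ) : Euc n :=
  (1 + u + v + w)⁻¹ • (o + u • e₁ + v • e₂ + w • e₃)

/-- The homogeneous coordinates `(x, 1)` of a point `x` of the affine chart. -/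
def lift {n : ℕ} (x : Euc n) : Fin (n + 1) → ℝ := Fin.snoc (fun i => x i) 1

/-- The linear map `g` induces `τ` at the point `x`. -/
def Good {n : ℕ} (g : (Fin (n + 1) → ℝ) ≃ₗ[ℝ] (Fin (n + 1) → ℝ)) (τ : Euc n → Euc n)
    (x : Euc n) : Prop := ∃ k : ℝ, g (lift x) = k • lift (τ x)

section lift
variable {n : ℕ}

@[simp] lemma lift_last (x : Euc n) : lift x (Fin.last n) = 1 := by simp [lift]

@[simp] lemma lift_castSucc (x : Euc n) (i : Fin n) : lift x i.castSucc = x i := by simp [lift]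

lemma lift_inj {x y : Euc n} (h : lift x = lift y) : x = y := by
  ext i
  simpa using congrFun h i.castSucc

lemma lift_ne (x : Euc n) : lift x ≠ 0 := fun h => by
  simpa using congrFun h (Fin.last n)

lemma lift_two (p q : Euc n) {a b : ℝ} (h : a + b = 1) :
    lift (a • p + b • q) = a • lift p + b • lift q := by
  ext i
  refine Fin.lastCases ?_ (fun i => ?_) i
  · simp [h]
  · simp

lemma lift_four (p q r s : Euc n) {a b c d : ℝ} (h : a + b + c + d = 1) :
    lift (a • p + b • q + c • r + d • s) = a • lift p + b • lift q + c • lift r + d • lift s := by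
  ext i
  refine Fin.lastCases ?_ (fun i => ?_) i
  · simp [h]
  · simp

lemma lift_pt (o e : Euc n) {u : ℝ} (h : 1 + u ≠ 0) :
    lift (pt o e u) = (1 + u)⁻¹ • (lift o + u • lift e) := by
  have : pt o e u = (1 + u)⁻¹ • o + ((1 + u)⁻¹ * u) • e := by simp only [pt]; module
  rw [this, lift_two _ _ (by field_simp)]
  module

lemma lift_m3 (o e₁ e₂ e₃ : Euc n) {u v w : ℝ} (h : 1 + u + v + w ≠ 0) :
    lift (m3 o e₁ e₂ e₃ u v w) =
      (1 + u + v + w)⁻¹ • (lift o + u • lift e₁ + v • lift e₂ + w • lift e₃) := by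
  have : m3 o e₁ e₂ e₃ u v w = (1 + u + v + w)⁻¹ • o + ((1 + u + v + w)⁻¹ * u) • e₁ +
      ((1 + u + v + w)⁻¹ * v) • e₂ + ((1 + u + v + w)⁻¹ * w) • e₃ := by simp only [m3]; module
  rw [this, lift_four _ _ _ _ (by field_simp)]
  module

lemma comb_eq_zero (p q r s : Euc n) {a b c d : ℝ}
    (h : a • lift p + b • lift q + c • lift r + d • lift s = 0) :
    a + b + c + d = 0 ∧ a • p + b • q + c • r + d • s = 0 := by
  constructor
  · simpa using congrFun h (Fin.last n)
  · ext i
    simpa using congrFun h i.castSucc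

end lift

section local_proj
variable {Ω Ω' : Set (Euc 3)} {τ : Euc 3 → Euc 3}

/-- Affinely dependent points are coplanar. -/
lemma plane_of_not_ind4 {p q r s : Euc 3} (h : ¬ Ind4 p q r s) :
    ∃ ψ : Euc 3 →ᵃ[ℝ] ℝ, ψ.linear ≠ 0 ∧ ψ p = 0 ∧ ψ q = 0 ∧ ψ r = 0 ∧ ψ s = 0 := by
  have hlt : Submodule.span ℝ (Set.range ![q - p, r - p, s - p]) < ⊤ := by
    rw [lt_top_iff_ne_top]
    intro htop
    apply h
    have hli := linearIndependent_of_top_le_span_of_card_eq_finrank htop.ge (by simp)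
    rw [Fintype.linearIndependent_iff] at hli
    intro a b c d hs he
    have := hli ![b, c, d] (by
      simp only [Fin.sum_univ_three, Matrix.cons_val_zero, Matrix.cons_val_one,
        Matrix.cons_val]
      have ha : a = -b - c - d := by linarith
      rw [ha] at he
      linear_combination (norm := module) he)
    have h0 := this 0
    have h1 := this 1
    have h2 := this 2
    simp at h0 h1 h2
    exact ⟨by linarith, h0, h1, h2⟩
  obtain ⟨f, hf, hle⟩ := Submodule.exists_le_ker_of_lt_top _ hlt
  have h1 : f (q - p) = 0 := hle (Submodule.subset_span ⟨0, rfl⟩)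
  have h2 : f (r - p) = 0 := hle (Submodule.subset_span ⟨1, rfl⟩)
  have h3 : f (s - p) = 0 := hle (Submodule.subset_span ⟨2, rfl⟩)
  rw [map_sub] at h1 h2 h3
  refine ⟨f.toAffineMap - AffineMap.const ℝ (Euc 3) (f p), ?_, ?_, ?_, ?_, ?_⟩
  · simpa using hf
  · simp
  · simpa using h1
  · simpa using h2
  · simpa using h3

/-- Four affinely independent points, with nonzero weights, give a basis of the space of
homogeneous coordinates. -/
lemma exists_basis {p q r s : Euc 3} (h : Ind4 p q r s) {c₁ c₂ c₃ : ℝ} (h1 : c₁ ≠ 0) (h2 : c₂ ≠ 0)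
    (h3 : c₃ ≠ 0) : ∃ b : Module.Basis (Fin 4) ℝ (Fin 4 → ℝ),
      b 0 = lift p ∧ b 1 = c₁ • lift q ∧ b 2 = c₂ • lift r ∧ b 3 = c₃ • lift s := by
  have hli : LinearIndependent ℝ ![lift p, c₁ • lift q, c₂ • lift r, c₃ • lift s] := by
    rw [Fintype.linearIndependent_iff]
    intro g hg
    simp only [Fin.sum_univ_four, Matrix.cons_val_zero, Matrix.cons_val_one,
      Matrix.cons_val] at hg
    obtain ⟨hs, he⟩ := comb_eq_zero p q r s (a := g 0) (b := g 1 * c₁) (c := g 2 * c₂)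
      (d := g 3 * c₃) (by linear_combination (norm := module) hg)
    obtain ⟨g0, g1, g2, g3⟩ := h _ _ _ _ hs he
    intro i
    fin_cases i
    · exact g0
    · exact (mul_eq_zero.1 g1).resolve_right h1
    · exact (mul_eq_zero.1 g2).resolve_right h2
    · exact (mul_eq_zero.1 g3).resolve_right h3
  refine ⟨basisOfLinearIndependentOfCardEqFinrank hli (by simp), ?_⟩
  simp

/-- Three successive moves towards focusing points: the first weight is multiplied by a constant. -/
lemma three_move {N : Set (Euc 3)} {o e₁ e₂ e₃ a₁ a₂ a₃ : Euc 3} {c u v w : ℝ} (hc : 0 < c)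
    (h1 : ∀ u ≥ 0, τ (pt o e₁ u) = pt (τ o) a₁ (c * u)) (h2 : ∀ x ∈ N, RayTo Ω' τ e₂ x a₂)
    (h3 : ∀ x ∈ N, RayTo Ω' τ e₃ x a₃) (hu : 0 ≤ u) (hv : 0 ≤ v) (hw : 0 ≤ w)
    (m1 : m3 o e₁ e₂ e₃ u 0 0 ∈ N) (m2 : m3 o e₁ e₂ e₃ u v 0 ∈ N) :
    ∃ F G : ℝ, 0 ≤ F ∧ 0 ≤ G ∧ τ (m3 o e₁ e₂ e₃ u v w) = m3 (τ o) a₁ a₂ a₃ (c * u) F G := by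
  have q1 : m3 o e₁ e₂ e₃ u 0 0 = pt o e₁ u := by simp [m3, pt]
  have q2 : m3 o e₁ e₂ e₃ u v 0 = pt (m3 o e₁ e₂ e₃ u 0 0) e₂ (v / (1 + u)) := by
    rw [q1]
    simp only [m3, pt]
    have e1 : 1 + v / (1 + u) = (1 + u + v) / (1 + u) := by field_simp
    rw [e1]
    have : 1 + u + v + 0 ≠ 0 := by positivity
    have : 1 + u + v ≠ 0 := by positivity
    match_scalars <;> field_simp <;> ring
  have q3 : m3 o e₁ e₂ e₃ u v w = pt (m3 o e₁ e₂ e₃ u v 0) e₃ (w / (1 + u + v)) := by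
    simp only [m3, pt]
    have e1 : 1 + w / (1 + u + v) = (1 + u + v + w) / (1 + u + v) := by field_simp
    rw [e1, add_zero]
    have : 1 + u + v + w ≠ 0 := by positivity
    have : 1 + u + v ≠ 0 := by positivity
    match_scalars <;> field_simp
    ring
  obtain ⟨-, c₂, hc₂, r2⟩ := h2 _ m1
  obtain ⟨-, c₃, hc₃, r3⟩ := h3 _ m2
  set v' := c₂ * (v / (1 + u)) with hv'
  set w' := c₃ * (w / (1 + u + v)) with hw'
  have hv0 : 0 ≤ v' := by positivity
  have hw0 : 0 ≤ w' := by positivity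
  refine ⟨(1 + c * u) * v', (1 + c * u) * (1 + v') * w', by positivity, by positivity, ?_⟩
  rw [q3, r3 _ (by positivity), q2, r2 _ (by positivity), q1, h1 u hu, ← hv', ← hw']
  simp only [m3, pt]
  set k := c * u
  have hk : 0 ≤ k := by positivity
  have e1 : 1 + k + (1 + k) * v' + (1 + k) * (1 + v') * w' = (1 + k) * (1 + v') * (1 + w') := by
    ring
  rw [e1]
  have : 1 + k ≠ 0 := by positivity
  have : 1 + v' ≠ 0 := by positivity
  have : 1 + w' ≠ 0 := by positivity
  match_scalars <;> field_simp

lemma m3_perm (o e₁ e₂ e₃ : Euc 3) (u v w : ℝ) :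
    m3 o e₁ e₂ e₃ u v w = m3 o e₂ e₃ e₁ v w u := by
  have e : 1 + v + w + u = 1 + u + v + w := by ring
  simp only [m3, e]
  module

/-- The weights of a point `[o + u e₁ + v e₂ + w e₃]` are unique. -/
lemma m3_inj {o e₁ e₂ e₃ : Euc 3} (h : Ind4 o e₁ e₂ e₃) {u v w u' v' w' : ℝ} (hu : 0 ≤ u)
    (hv : 0 ≤ v) (hw : 0 ≤ w) (hu' : 0 ≤ u') (hv' : 0 ≤ v') (hw' : 0 ≤ w')
    (he : m3 o e₁ e₂ e₃ u v w = m3 o e₁ e₂ e₃ u' v' w') : u = u' ∧ v = v' ∧ w = w' := by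
  simp only [m3] at he
  have hs : 1 + u + v + w ≠ 0 := by positivity
  have hs' : 1 + u' + v' + w' ≠ 0 := by positivity
  set s := 1 + u + v + w with hsd
  set s' := 1 + u' + v' + w' with hsd'
  obtain ⟨h0, h1, h2, h3⟩ := h.eq (a := s⁻¹) (b := s⁻¹ * u) (c := s⁻¹ * v) (d := s⁻¹ * w)
    (a' := s'⁻¹) (b' := s'⁻¹ * u') (c' := s'⁻¹ * v') (d' := s'⁻¹ * w') (by
      have : s⁻¹ * s = 1 := by field_simp
      have : s'⁻¹ * s' = 1 := by field_simp
      rw [hsd, hsd'] at *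
      linarith) (by linear_combination (norm := module) he)
  have hi : s'⁻¹ ≠ 0 := inv_ne_zero hs'
  rw [h0] at h1 h2 h3
  exact ⟨mul_left_cancel₀ hi h1, mul_left_cancel₀ hi h2, mul_left_cancel₀ hi h3⟩

/-- Three points focusing on a common open set make the isometry projective on an open set. -/
lemma good_of_locFoc (h : Dom Ω) (h' : Dom Ω') (hτ : IsHilbertIsometry Ω Ω' τ)
    (hL : LocFoc Ω Ω' τ) : ∃ g : (Fin 4 → ℝ) ≃ₗ[ℝ] (Fin 4 → ℝ), ∃ U ⊆ Ω, IsOpen U ∧ U.Nonempty ∧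
      ∀ x ∈ U, Good g τ x := by
  obtain ⟨N, hN, hNΩ, o, ho, e₁, he₁, e₂, he₂, e₃, he₃, a₁, a₂, a₃, hI, hR₁, hR₂, hR₃⟩ := hL
  -- a box of parameters whose points stay in `N`
  obtain ⟨δ, hδ, hbox⟩ : ∃ δ > 0, ∀ u v w : ℝ, 0 ≤ u → 0 ≤ v → 0 ≤ w → u < δ → v < δ → w < δ →
      m3 o e₁ e₂ e₃ u v w ∈ N := by
    have hc : ContinuousAt (fun p : ℝ × ℝ × ℝ => m3 o e₁ e₂ e₃ p.1 p.2.1 p.2.2) (0, 0, 0) := by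
      simp only [m3]
      have k1 : ContinuousAt (fun p : ℝ × ℝ × ℝ => 1 + p.1 + p.2.1 + p.2.2) (0, 0, 0) := by fun_prop
      exact (k1.inv₀ (by simp)).smul (by fun_prop)
    have h0 : m3 o e₁ e₂ e₃ 0 0 0 ∈ N := by simpa [m3] using ho
    obtain ⟨δ, hδ, hb⟩ := Metric.mem_nhds_iff.1 (hc.preimage_mem_nhds (hN.mem_nhds h0))
    refine ⟨δ, hδ, fun u v w hu hv hw hu' hv' hw' => hb (a := (u, v, w)) ?_⟩
    simp [Prod.dist_eq, abs_of_nonneg, *]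
  obtain ⟨-, c₁, hc₁, r₁⟩ := hR₁ o ho
  obtain ⟨-, c₂, hc₂, r₂⟩ := hR₂ o ho
  obtain ⟨-, c₃, hc₃, r₃⟩ := hR₃ o ho
  obtain ⟨l₀, l₁, l₂, l₃, hl⟩ := hI.coords
  set U : Set (Euc 3) := {x | (0 < l₀ x ∧ 0 < l₁ x ∧ 0 < l₂ x ∧ 0 < l₃ x) ∧
    l₁ x < δ * l₀ x ∧ l₂ x < δ * l₀ x ∧ l₃ x < δ * l₀ x} with hUdef
  have hUo : IsOpen U := by
    have k0 := aff_cont l₀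
    have k1 := aff_cont l₁
    have k2 := aff_cont l₂
    have k3 := aff_cont l₃
    exact pos_open.inter ((isOpen_lt k1 (by fun_prop)).inter ((isOpen_lt k2 (by fun_prop)).inter
      (isOpen_lt k3 (by fun_prop))))
  have hUx : ∀ x ∈ U, ∃ u v w : ℝ, 0 ≤ u ∧ 0 ≤ v ∧ 0 ≤ w ∧ u < δ ∧ v < δ ∧ w < δ ∧
      x = m3 o e₁ e₂ e₃ u v w := by
    rintro x ⟨⟨p0, p1, p2, p3⟩, d1, d2, d3⟩
    refine ⟨l₁ x / l₀ x, l₂ x / l₀ x, l₃ x / l₀ x, by positivity, by positivity, by positivity,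
      (div_lt_iff₀ p0).2 d1, (div_lt_iff₀ p0).2 d2, (div_lt_iff₀ p0).2 d3, ?_⟩
    have e : 1 + l₁ x / l₀ x + l₂ x / l₀ x + l₃ x / l₀ x = 1 / l₀ x := by
      field_simp
      exact hl.sum x
    simp only [m3, e]
    conv_lhs => rw [hl.eq x]
    match_scalars <;> field_simp
  have hUN : U ⊆ N := by
    intro x hx
    obtain ⟨u, v, w, hu, hv, hw, hu', hv', hw', rfl⟩ := hUx x hx
    exact hbox u v w hu hv hw hu' hv' hw'
  have hUne : U.Nonempty := by
    refine ⟨m3 o e₁ e₂ e₃ (δ / 2) (δ / 2) (δ / 2), ?_⟩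
    have hs : 1 + δ / 2 + δ / 2 + δ / 2 ≠ 0 := by positivity
    set s := 1 + δ / 2 + δ / 2 + δ / 2 with hsd
    have hs0 : 0 < s := by positivity
    obtain ⟨v0, v1, v2, v3⟩ := hl.val hI (x := m3 o e₁ e₂ e₃ (δ / 2) (δ / 2) (δ / 2)) (a := s⁻¹)
      (b := s⁻¹ * (δ / 2)) (c := s⁻¹ * (δ / 2)) (d := s⁻¹ * (δ / 2))
      (by have : s⁻¹ * s = 1 := by field_simp
          rw [hsd] at *
          linarith) (by simp only [m3, ← hsd]; module)
    have : s⁻¹ * (δ / 2) < δ * s⁻¹ := by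
      have : 0 < s⁻¹ * δ := by positivity
      linarith
    simp only [hUdef, mem_ofPred_eq, v0, v1, v2, v3]
    exact ⟨⟨by positivity, by positivity, by positivity, by positivity⟩, this, this, this⟩
  have hz : (0:ℝ) ≤ 0 := le_rfl
  have mv1 : ∀ u v w : ℝ, 0 ≤ u → 0 ≤ v → 0 ≤ w → u < δ → v < δ → w < δ → ∃ F G : ℝ, 0 ≤ F ∧ 0 ≤ G ∧
      τ (m3 o e₁ e₂ e₃ u v w) = m3 (τ o) a₁ a₂ a₃ (c₁ * u) F G :=
    fun u v w hu hv hw hu' hv' hw' => three_move hc₁ r₁ hR₂ hR₃ hu hv hw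
      (hbox _ _ _ hu hz hz hu' hδ hδ) (hbox _ _ _ hu hv hz hu' hv' hδ)
  have mv2 : ∀ u v w : ℝ, 0 ≤ u → 0 ≤ v → 0 ≤ w → u < δ → v < δ → w < δ → ∃ F G : ℝ, 0 ≤ F ∧ 0 ≤ G ∧
      τ (m3 o e₁ e₂ e₃ u v w) = m3 (τ o) a₁ a₂ a₃ F (c₂ * v) G := by
    intro u v w hu hv hw hu' hv' hw'
    obtain ⟨F, G, hF, hG, hE⟩ := three_move hc₂ r₂ hR₃ hR₁ hv hw hu
      (by rw [← m3_perm]; exact hbox _ _ _ hz hv hz hδ hv' hδ)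
      (by rw [← m3_perm]; exact hbox _ _ _ hz hv hw hδ hv' hw')
    refine ⟨G, F, hG, hF, ?_⟩
    rw [m3_perm, hE, ← m3_perm]
  have mv3 : ∀ u v w : ℝ, 0 ≤ u → 0 ≤ v → 0 ≤ w → u < δ → v < δ → w < δ → ∃ F G : ℝ, 0 ≤ F ∧ 0 ≤ G ∧
      τ (m3 o e₁ e₂ e₃ u v w) = m3 (τ o) a₁ a₂ a₃ F G (c₃ * w) := by
    intro u v w hu hv hw hu' hv' hw'
    obtain ⟨F, G, hF, hG, hE⟩ := three_move hc₃ r₃ hR₁ hR₂ hw hu hv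
      (by rw [m3_perm]; exact hbox _ _ _ hz hz hw hδ hδ hw')
      (by rw [m3_perm]; exact hbox _ _ _ hu hz hw hu' hδ hw')
    refine ⟨F, G, hF, hG, ?_⟩
    rw [← m3_perm, hE, m3_perm]
  have hI' : Ind4 (τ o) a₁ a₂ a₃ := by
    by_contra hcon
    obtain ⟨ψ, hψ, p0, p1, p2, p3⟩ := plane_of_not_ind4 hcon
    obtain ⟨y, ⟨x, hx, rfl⟩, hy⟩ := not_plane (iso_open h h' hτ hUo (hUN.trans hNΩ))
      (hUne.image _) hψ
    apply hy
    obtain ⟨u, v, w, hu, hv, hw, hu', hv', hw', rfl⟩ := hUx x hx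
    obtain ⟨F, G, hF, hG, hE⟩ := mv1 u v w hu hv hw hu' hv' hw'
    have hs : 1 + c₁ * u + F + G ≠ 0 := by positivity
    set s := 1 + c₁ * u + F + G with hsd
    have : m3 (τ o) a₁ a₂ a₃ (c₁ * u) F G =
        s⁻¹ • τ o + (s⁻¹ * (c₁ * u)) • a₁ + (s⁻¹ * F) • a₂ + (s⁻¹ * G) • a₃ := by
      simp only [m3, ← hsd]; module
    rw [hE, this, aff4 _ _ _ _ _ (by
      have : s⁻¹ * s = 1 := by field_simp
      rw [hsd] at *
      linarith), p0, p1, p2, p3]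
    ring
  obtain ⟨b, b0, b1, b2, b3⟩ := exists_basis hI one_ne_zero one_ne_zero one_ne_zero
  obtain ⟨b', b0', b1', b2', b3'⟩ := exists_basis hI' hc₁.ne' hc₂.ne' hc₃.ne'
  refine ⟨b.equiv b' (Equiv.refl _), U, hUN.trans hNΩ, hUo, hUne, fun x hx => ?_⟩
  obtain ⟨u, v, w, hu, hv, hw, hu', hv', hw', rfl⟩ := hUx x hx
  obtain ⟨F, G, hF, hG, hE⟩ := mv1 u v w hu hv hw hu' hv' hw'
  obtain ⟨F₂, G₂, hF₂, hG₂, hE₂⟩ := mv2 u v w hu hv hw hu' hv' hw'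
  obtain ⟨F₃, G₃, hF₃, hG₃, hE₃⟩ := mv3 u v w hu hv hw hu' hv' hw'
  have i1 := m3_inj hI' (by positivity) hF hG hF₂ (by positivity) hG₂ (hE.symm.trans hE₂)
  have i2 := m3_inj hI' (by positivity) hF hG hF₃ hG₃ (by positivity) (hE.symm.trans hE₃)
  rw [i1.2.1, i2.2.2] at hE
  have hs : 1 + c₁ * u + c₂ * v + c₃ * w ≠ 0 := by positivity
  refine ⟨(1 + u + v + w)⁻¹ * (1 + c₁ * u + c₂ * v + c₃ * w), ?_⟩
  have g0 := b.equiv_apply 0 b' (Equiv.refl _)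
  have g1 := b.equiv_apply 1 b' (Equiv.refl _)
  have g2 := b.equiv_apply 2 b' (Equiv.refl _)
  have g3 := b.equiv_apply 3 b' (Equiv.refl _)
  simp only [Equiv.refl_apply, b0, b0', b1, b1', b2, b2', b3, b3', one_smul] at g0 g1 g2 g3
  rw [hE, lift_m3 _ _ _ _ hs, lift_m3 _ _ _ _ (by positivity)]
  simp only [map_add, map_smul, g0, g1, g2, g3]
  match_scalars <;> field_simp

end local_proj

/-! ### From local to global projectivity -/

section globalize
variable {Ω Ω' : Set (Euc 3)} {τ : Euc 3 → Euc 3} {g : (Fin 4 → ℝ) ≃ₗ[ℝ] (Fin 4 → ℝ)}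

lemma lift_ind {n : ℕ} {a b : Euc n} (hab : a ≠ b) {x y : ℝ} (h : x • lift a + y • lift b = 0) :
    x = 0 ∧ y = 0 := by
  have h1 : x + y = 0 := by simpa using congrFun h (Fin.last n)
  have h2 : x • a + y • b = 0 := by
    ext i
    simpa using congrFun h i.castSucc
  have hy : y = -x := by linarith
  subst hy
  have : x • (a - b) = 0 := by linear_combination (norm := module) h2
  rcases smul_eq_zero.1 this with h | h
  · simp [h]
  · exact absurd (sub_eq_zero.1 h) hab

/-- If `g` induces `τ` near one point of a ray to an extreme point, then it does so on the ray:
two projective maps of a line which agree at three points agree. -/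
lemma good_line (h : Dom Ω) (h' : Dom Ω') (hτ : IsHilbertIsometry Ω Ω' τ) {o e : Euc 3}
    (ho : o ∈ Ω) (he : e ∈ extremePoints ℝ (closure Ω)) {u₀ : ℝ} (hu₀ : 0 ≤ u₀)
    (hg : ∀ᶠ z in nhds (pt o e u₀), Good g τ z) {u : ℝ} (hu : 0 ≤ u) :
    Good g τ (pt o e u) := by
  obtain ⟨ha, c, hc, hR⟩ := foc_spec h h' hτ ho he (ext3 h he)
  set a := foc Ω' τ e o
  have hoa : τ o ≠ a := fun hh => h'.not_frontier (hτ.1 ho) (hh ▸ ha)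
  have hcont : ContinuousAt (fun u : ℝ => pt o e u) u₀ := by
    simp only [pt]
    have k1 : ContinuousAt (fun u : ℝ => 1 + u) u₀ := by fun_prop
    exact (k1.inv₀ (by positivity)).smul (by fun_prop)
  obtain ⟨δ, hδ, hb⟩ := Metric.mem_nhds_iff.1 (hcont.eventually hg)
  have key : ∀ t : ℝ, 0 ≤ t → t < δ → ∃ k : ℝ, g (lift o) + (u₀ + t) • g (lift e) =
      k • (lift (τ o) + (c * (u₀ + t)) • lift a) := by
    intro t ht ht'
    have hpos : 0 ≤ u₀ + t := by positivity
    obtain ⟨k, hk⟩ : Good g τ (pt o e (u₀ + t)) := hb (a := u₀ + t) (by simp [abs_of_nonneg, *])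
    have n1 : 1 + (u₀ + t) ≠ 0 := by positivity
    have n2 : 1 + c * (u₀ + t) ≠ 0 := by positivity
    rw [hR _ hpos, lift_pt _ _ n1, lift_pt _ _ n2, map_smul, map_add, map_smul] at hk
    refine ⟨(1 + (u₀ + t)) * k * (1 + c * (u₀ + t))⁻¹, ?_⟩
    have := congrArg (fun v => (1 + (u₀ + t)) • v) hk
    simp only [smul_smul, mul_inv_cancel₀ n1, one_smul] at this
    rw [this, mul_assoc]
  obtain ⟨k₁, h1⟩ := key 0 le_rfl hδ
  obtain ⟨k₂, h2⟩ := key (δ / 3) (by positivity) (by linarith)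
  obtain ⟨k₃, h3⟩ := key (δ / 2) (by positivity) (by linarith)
  set P := g (lift o)
  set Q := g (lift e)
  set A := lift (τ o)
  set B := lift a
  set u₁ := u₀ + 0
  set u₂ := u₀ + δ / 3 with hu₂
  set u₃ := u₀ + δ / 2 with hu₃
  have h12 : u₁ - u₂ ≠ 0 := by simp only [u₁, u₂]; intro hh; linarith
  have h13 : u₁ - u₃ ≠ 0 := by simp only [u₁, u₃]; intro hh; linarith
  have h23 : u₂ - u₃ ≠ 0 := by simp only [u₂, u₃]; intro hh; linarith
  obtain ⟨i1, i2⟩ := lift_ind hoa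
    (x := (u₂ - u₃) * k₁ + (u₃ - u₁) * k₂ + (u₁ - u₂) * k₃)
    (y := c * ((u₂ - u₃) * k₁ * u₁ + (u₃ - u₁) * k₂ * u₂ + (u₁ - u₂) * k₃ * u₃)) (by
      linear_combination (norm := module) -((u₂ - u₃) • h1) - (u₃ - u₁) • h2 - (u₁ - u₂) • h3)
  have i2' := (mul_eq_zero.1 i2).resolve_left hc.ne'
  have hk : k₁ = k₂ := by
    have : (u₂ - u₃) * ((u₁ - u₃) * (k₁ - k₂)) = 0 := by linear_combination i2' - u₃ * i1
    have := (mul_eq_zero.1 ((mul_eq_zero.1 this).resolve_left h23)).resolve_left h13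
    linarith
  subst hk
  have hQ : Q = (k₁ * c) • B := by
    have : (u₁ - u₂) • Q = (u₁ - u₂) • ((k₁ * c) • B) := by
      linear_combination (norm := module) h1 - h2
    exact smul_right_injective _ h12 this
  have hP : P = k₁ • A := by
    rw [hQ] at h1
    linear_combination (norm := module) h1
  have n1 : 1 + u ≠ 0 := by positivity
  have n2 : 1 + c * u ≠ 0 := by positivity
  refine ⟨(1 + u)⁻¹ * k₁ * (1 + c * u), ?_⟩
  rw [hR u hu, lift_pt _ _ n1, lift_pt _ _ n2, map_smul, map_add, map_smul]
  change (1 + u)⁻¹ • (P + u • Q) = _ • _ • (A + _ • B)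
  rw [hP, hQ]
  match_scalars <;> field_simp

/-- The set of points near which `g` induces `τ` is preserved by homotheties with an extreme
centre. -/
lemma good_homothety (h : Dom Ω) (h' : Dom Ω') (hτ : IsHilbertIsometry Ω Ω' τ) {e x : Euc 3}
    (he : e ∈ extremePoints ℝ (closure Ω)) (hx : x ∈ Ω) (hg : ∀ᶠ z in nhds x, Good g τ z) {s : ℝ}
    (hs : 0 < s) (hy : e + s • (x - e) ∈ Ω) : ∀ᶠ z in nhds (e + s • (x - e)), Good g τ z := by
  have hcont : ContinuousAt (fun y : Euc 3 => e + s⁻¹ • (y - e)) (e + s • (x - e)) := by fun_prop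
  have hval : e + s⁻¹ • (e + s • (x - e) - e) = x := by
    match_scalars <;> field_simp
    ring
  rw [ContinuousAt, hval] at hcont
  filter_upwards [h.op.mem_nhds hy, hcont.eventually (h.op.mem_nhds hx),
    hcont.eventually (eventually_eventually_nhds.2 hg)] with y hyΩ hxΩ hgood
  set x' := e + s⁻¹ • (y - e) with hx'
  rcases le_or_gt 1 s with h1 | h1
  · have e1 : x' = pt y e (s - 1) := by
      simp only [pt, hx', add_sub_cancel]
      match_scalars <;> field_simp
      ring
    rw [e1] at hgood
    have := good_line h h' hτ hyΩ he (by linarith) hgood le_rfl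
    rwa [pt_zero] at this
  · have e1 : y = pt x' e (s⁻¹ - 1) := by
      simp only [pt, hx', add_sub_cancel, inv_inv]
      match_scalars <;> field_simp
      ring
    rw [e1]
    refine good_line h h' hτ hxΩ he le_rfl (by rwa [pt_zero]) ?_
    have := (one_lt_inv₀ hs).2 h1
    linarith

lemma exists_ind4 (h : Dom Ω) : ∃ e₀ ∈ extremePoints ℝ (closure Ω),
    ∃ e₁ ∈ extremePoints ℝ (closure Ω), ∃ e₂ ∈ extremePoints ℝ (closure Ω),
    ∃ e₃ ∈ extremePoints ℝ (closure Ω), Ind4 e₀ e₁ e₂ e₃ := by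
  obtain ⟨ψ, hψ, -⟩ := exists_plane 0 0 0
  obtain ⟨x, hx, -⟩ := h.ext_not_plane hψ
  obtain ⟨χ, hχ, h0, -⟩ := exists_plane x x x
  obtain ⟨z, hz, hz0⟩ := h.ext_not_plane hχ
  obtain ⟨k, hk, l, hl, hI⟩ := extend_two (fun ψ hψ => h.ext_not_plane hψ)
    (e := x) (f := z) (by rintro rfl; exact hz0 h0)
  exact ⟨x, hx, z, hz, k, hk, l, hl, hI⟩

/-- A linear map which induces the isometry on an open set induces it everywhere. -/
lemma good_global (h : Dom Ω) (h' : Dom Ω') (hτ : IsHilbertIsometry Ω Ω' τ) {U : Set (Euc 3)}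
    (hUΩ : U ⊆ Ω) (hU : IsOpen U) (hne : U.Nonempty) (hg : ∀ x ∈ U, Good g τ x) :
    ∀ x ∈ Ω, Good g τ x := by
  set S : Set (Euc 3) := {x | x ∈ Ω ∧ ∀ᶠ z in nhds x, Good g τ z} with hS
  have hSo : IsOpen S := by
    rw [isOpen_iff_mem_nhds]
    rintro x ⟨hx, hx'⟩
    filter_upwards [h.op.mem_nhds hx, eventually_eventually_nhds.2 hx'] with y h1 h2
    exact ⟨h1, h2⟩
  have hcl : closure S ∩ Ω ⊆ S := by
    rintro y ⟨hy, hyΩ⟩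
    refine ⟨hyΩ, ?_⟩
    obtain ⟨e₀, m0, e₁, m1, e₂, m2, e₃, m3, hI⟩ := exists_ind4 h
    obtain ⟨l₀, l₁, l₂, l₃, hl⟩ := hI.coords
    have c0 := aff_cont l₀
    have c1 := aff_cont l₁
    have c2 := aff_cont l₂
    have c3 := aff_cont l₃
    -- the intermediate points of the path from `x` to `y`, for `x` close to `y`
    let w₁ : Euc 3 → ℝ := fun x => 1 + (l₀ y - l₀ x)
    let w₂ : Euc 3 → ℝ := fun x => 1 + (l₀ y - l₀ x) + (l₁ y - l₁ x)
    let w₃ : Euc 3 → ℝ := fun x => 1 + (l₀ y - l₀ x) + (l₁ y - l₁ x) + (l₂ y - l₂ x)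
    let p₁ : Euc 3 → Euc 3 := fun x => (w₁ x)⁻¹ • (x + (l₀ y - l₀ x) • e₀)
    let p₂ : Euc 3 → Euc 3 := fun x =>
      (w₂ x)⁻¹ • (x + (l₀ y - l₀ x) • e₀ + (l₁ y - l₁ x) • e₁)
    let p₃ : Euc 3 → Euc 3 := fun x =>
      (w₃ x)⁻¹ • (x + (l₀ y - l₀ x) • e₀ + (l₁ y - l₁ x) • e₁ + (l₂ y - l₂ x) • e₂)
    have v1 : w₁ y = 1 := by simp [w₁]
    have v2 : w₂ y = 1 := by simp [w₂]
    have v3 : w₃ y = 1 := by simp [w₃]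
    have k1 : ContinuousAt w₁ y := by simp only [w₁]; fun_prop
    have k2 : ContinuousAt w₂ y := by simp only [w₂]; fun_prop
    have k3 : ContinuousAt w₃ y := by simp only [w₃]; fun_prop
    have P1 : ContinuousAt p₁ y := (k1.inv₀ (by simp [v1])).smul (by fun_prop)
    have P2 : ContinuousAt p₂ y := (k2.inv₀ (by simp [v2])).smul (by fun_prop)
    have P3 : ContinuousAt p₃ y := (k3.inv₀ (by simp [v3])).smul (by fun_prop)
    have q1 : p₁ y = y := by simp [p₁, v1]
    have q2 : p₂ y = y := by simp [p₂, v2]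
    have q3 : p₃ y = y := by simp [p₃, v3]
    have ev : ∀ᶠ x in nhds y, 0 < w₁ x ∧ 0 < w₂ x ∧ 0 < w₃ x ∧ p₁ x ∈ Ω ∧ p₂ x ∈ Ω ∧ p₃ x ∈ Ω := by
      have f1 : ∀ᶠ x in nhds y, 0 < w₁ x := k1.eventually (lt_mem_nhds (by simp [v1]))
      have f2 : ∀ᶠ x in nhds y, 0 < w₂ x := k2.eventually (lt_mem_nhds (by simp [v2]))
      have f3 : ∀ᶠ x in nhds y, 0 < w₃ x := k3.eventually (lt_mem_nhds (by simp [v3]))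
      have f4 : ∀ᶠ x in nhds y, p₁ x ∈ Ω := P1.eventually (h.op.mem_nhds (by rwa [q1]))
      have f5 : ∀ᶠ x in nhds y, p₂ x ∈ Ω := P2.eventually (h.op.mem_nhds (by rwa [q2]))
      have f6 : ∀ᶠ x in nhds y, p₃ x ∈ Ω := P3.eventually (h.op.mem_nhds (by rwa [q3]))
      filter_upwards [f1, f2, f3, f4, f5, f6] with x g1 g2 g3 g4 g5 g6
      exact ⟨g1, g2, g3, g4, g5, g6⟩
    obtain ⟨x, ⟨hxΩ, hx⟩, W1, W2, W3, M1, M2, M3⟩ := ((mem_closure_iff_frequently.1 hy).and_eventually ev).exists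
    have hsum : (l₀ y - l₀ x) + (l₁ y - l₁ x) + (l₂ y - l₂ x) + (l₃ y - l₃ x) = 0 := by
      linarith [hl.sum x, hl.sum y]
    have hyx : y = x + (l₀ y - l₀ x) • e₀ + (l₁ y - l₁ x) • e₁ + (l₂ y - l₂ x) • e₂ +
        (l₃ y - l₃ x) • e₃ := by
      have hx' := hl.eq x
      have hy' := hl.eq y
      linear_combination (norm := module) hy' - hx'
    have step : ∀ (p q e : Euc 3) (a b : ℝ), e ∈ extremePoints ℝ (closure Ω) → 0 < a → 0 < b →
        p ∈ Ω → q ∈ Ω → b • q = a • p + (b - a) • e → (∀ᶠ z in nhds p, Good g τ z) →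
        ∀ᶠ z in nhds q, Good g τ z := by
      intro p q e a b he ha hb hp hq heq hgp
      have : q = e + (a / b) • (p - e) := by
        have : b • q = b • (e + (a / b) • (p - e)) := by
          rw [heq]
          match_scalars <;> field_simp
          ring
        exact smul_right_injective _ hb.ne' this
      rw [this] at hq ⊢
      exact good_homothety h h' hτ he hp hgp (by positivity) hq
    have a1 := step x (p₁ x) e₀ 1 (w₁ x) m0 one_pos W1 hxΩ M1 (by
      simp only [p₁]
      rw [smul_inv_smul₀ W1.ne']
      simp only [w₁]
      module) hx
    have a2 := step (p₁ x) (p₂ x) e₁ (w₁ x) (w₂ x) m1 W1 W2 M1 M2 (by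
      simp only [p₁, p₂]
      rw [smul_inv_smul₀ W1.ne', smul_inv_smul₀ W2.ne']
      simp only [w₁, w₂]
      module) a1
    have a3 := step (p₂ x) (p₃ x) e₂ (w₂ x) (w₃ x) m2 W2 W3 M2 M3 (by
      simp only [p₂, p₃]
      rw [smul_inv_smul₀ W2.ne', smul_inv_smul₀ W3.ne']
      simp only [w₂, w₃]
      module) a2
    refine step (p₃ x) y e₃ (w₃ x) 1 m3 W3 one_pos M3 hyΩ ?_ a3
    simp only [p₃]
    rw [smul_inv_smul₀ W3.ne', one_smul]
    have : 1 - w₃ x = l₃ y - l₃ x := by simp only [w₃]; linarith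
    rw [this]
    exact hyx
  have hsub : Ω ⊆ S := by
    refine h.cv.isPreconnected.subset_of_closure_inter_subset hSo ?_ hcl
    obtain ⟨x, hx⟩ := hne
    exact ⟨x, hUΩ hx, hUΩ hx, Filter.mem_of_superset (hU.mem_nhds hx) hg⟩
  exact fun x hx => (hsub hx).2.self_of_nhds

/-- An isometry with three locally focusing points is projective. -/
lemma projective_of_locFoc (h : Dom Ω) (h' : Dom Ω') (hτ : IsHilbertIsometry Ω Ω' τ)
    (hL : LocFoc Ω Ω' τ) : IsProjectiveBetween Ω Ω' τ := by
  obtain ⟨g, U, hUΩ, hU, hne, hg⟩ := good_of_locFoc h h' hτ hL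
  have hgood := good_global h h' hτ hUΩ hU hne hg
  have key : ∀ x ∈ Ω, chart (τ x) = projMap g (chart x) := by
    intro x hx
    obtain ⟨k, hk⟩ := hgood x hx
    have hk0 : k ≠ 0 := by
      rintro rfl
      rw [zero_smul] at hk
      exact lift_ne x (g.map_eq_zero_iff.1 hk)
    simp only [chart, projMap, Projectivization.map_mk]
    rw [Projectivization.mk_eq_mk_iff']
    refine ⟨k⁻¹, ?_⟩
    change k⁻¹ • g (lift x) = lift (τ x)
    rw [hk, smul_smul, inv_mul_cancel₀ hk0, one_smul]
  refine ⟨g, key, ?_⟩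
  ext p
  constructor
  · rintro ⟨_, ⟨x, hx, rfl⟩, rfl⟩
    exact ⟨τ x, hτ.1 hx, key x hx⟩
  · rintro ⟨y, hy, rfl⟩
    obtain ⟨x, hx, rfl⟩ := hτ.2.1 hy
    exact ⟨chart x, ⟨x, hx, rfl⟩, (key x hx).symm⟩

end globalize

/-! ### Cones and extreme points -/

/-- All extreme points but one, `v`, lie on a plane avoiding `v`. -/
def ExtCone (Ω : Set (Euc 3)) : Prop :=
  ∃ v ∈ extremePoints ℝ (closure Ω), ∃ ψ : Euc 3 →ᵃ[ℝ] ℝ, ψ v ≠ 0 ∧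
    ∀ e ∈ extremePoints ℝ (closure Ω), e = v ∨ ψ e = 0

section cone
variable {Ω : Set (Euc 3)}

lemma mem_join {v x : Euc 3} {C : Set (Euc 3)} : x ∈ convexJoin ℝ {v} C ↔
    ∃ t : ℝ, 0 ≤ t ∧ t ≤ 1 ∧ ∃ b ∈ C, x = (1 - t) • v + t • b := by
  rw [mem_convexJoin]
  constructor
  · rintro ⟨_, rfl, b, hb, s, t, hs, ht, hst, rfl⟩
    refine ⟨t, ht, by linarith, b, hb, ?_⟩
    rw [← hst, add_sub_cancel_right]
  · rintro ⟨t, h0, h1, b, hb, rfl⟩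
    exact ⟨v, rfl, b, hb, 1 - t, t, by linarith, h0, by ring, rfl⟩

lemma join_compact (v : Euc 3) {C : Set (Euc 3)} (hC : IsCompact C) :
    IsCompact (convexJoin ℝ {v} C) := by
  have : convexJoin ℝ {v} C =
      (fun p : ℝ × Euc 3 => (1 - p.1) • v + p.1 • p.2) '' (Icc 0 1 ×ˢ C) := by
    ext x
    rw [mem_join]
    constructor
    · rintro ⟨t, h0, h1, b, hb, rfl⟩
      exact ⟨(t, b), ⟨⟨h0, h1⟩, hb⟩, rfl⟩
    · rintro ⟨⟨t, b⟩, ⟨⟨h0, h1⟩, hb⟩, rfl⟩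
      exact ⟨t, h0, h1, b, hb, rfl⟩
  rw [this]
  exact (isCompact_Icc.prod hC).image (by fun_prop)

lemma aff_zero_span {ψ : Euc 3 →ᵃ[ℝ] ℝ} {B : Set (Euc 3)} (hB : ∀ b ∈ B, ψ b = 0) {x : Euc 3}
    (hx : x ∈ affineSpan ℝ B) : ψ x = 0 := by
  refine affineSpan_induction (p := fun x => ψ x = 0) hx hB ?_
  intro c p q r hp hq hr
  rw [aff_dec] at hp hq hr ⊢
  simp only [vsub_eq_sub, vadd_eq_add, map_add, map_smul, map_sub, smul_eq_mul]
  linear_combination c * hp - c * hq + hr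

lemma isCone_of_extCone (h : Dom Ω) (hE : ExtCone Ω) : IsCone Ω := by
  obtain ⟨v, hv, ψ', hψ', hE'⟩ := hE
  obtain ⟨ψ, hψv, hE⟩ : ∃ ψ : Euc 3 →ᵃ[ℝ] ℝ, ψ v = 1 ∧
      ∀ e ∈ extremePoints ℝ (closure Ω), e = v ∨ ψ e = 0 := by
    refine ⟨(ψ' v)⁻¹ • ψ', by simp [hψ'], fun e he => ?_⟩
    rcases hE' e he with h1 | h1
    · exact Or.inl h1
    · exact Or.inr (by simp [h1])
  have hlin : ψ.linear ≠ 0 := by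
    intro h0
    obtain ⟨χ, hχ, hχv, -⟩ := exists_plane v v v
    obtain ⟨x, hx, hx0⟩ := h.ext_not_plane hχ
    rcases hE x hx with rfl | h1
    · exact hx0 hχv
    · rw [aff_dec, h0] at h1 hψv
      simp at h1 hψv
      linarith
  have hvf := ext3 h hv
  have hvΩ : v ∉ Ω := fun hh => h.not_frontier hh hvf
  -- every point of the closure is on a segment from `v` to the plane
  have hne0 : ∃ e ∈ extremePoints ℝ (closure Ω), ψ e = 0 := by
    obtain ⟨χ, hχ, hχv, -⟩ := exists_plane v v v
    obtain ⟨x, hx, hx0⟩ := h.ext_not_plane hχ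
    rcases hE x hx with rfl | h1
    · exact absurd hχv hx0
    · exact ⟨x, hx, h1⟩
  have hjoin : closure Ω ⊆ convexJoin ℝ {v} (closure Ω ∩ {x | ψ x = 0}) := by
    have hcl : IsClosed {x | ψ x = 0} := isClosed_eq (aff_cont ψ) continuous_const
    have hcv : Convex ℝ {y | ψ y = 0} := by
      intro y hy z hz a b ha hb hab
      simp only [mem_ofPred_eq] at *
      rw [aff2 _ _ _ hab, hy, hz]; ring
    rw [← h.closure_hull]
    refine closure_minimal (convexHull_min ?_ ?_) ?_
    · intro e he
      rw [mem_join]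
      obtain ⟨e₀, he₀, h0⟩ := hne0
      rcases hE e he with rfl | h1
      · exact ⟨0, le_rfl, zero_le_one, e₀, ⟨by rw [h.closure_hull]; exact he₀.1, h0⟩, by simp⟩
      · exact ⟨1, zero_le_one, le_rfl, e, ⟨by rw [h.closure_hull]; exact he.1, h1⟩, by simp⟩
    · rw [h.closure_hull]
      exact (convex_singleton v).convexJoin (h.cv.closure.inter hcv)
    · rw [h.closure_hull]
      exact (join_compact v (h.compact.inter_right hcl)).isClosed
  have hseg : ∀ b ∈ closure Ω, ∀ s t : ℝ, 0 < s → s < 1 → 0 < t → t < 1 →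
      (1 - s) • v + s • b ∈ Ω → (1 - t) • v + t • b ∈ Ω := by
    intro b hb s t hs hs1 ht ht1 hm
    rcases le_or_gt t s with hts | hts
    · have := h.combo hm hv.1 (a := t / s) (b := 1 - t / s) (by positivity)
        (by rw [sub_nonneg, div_le_one hs]; exact hts) (by ring)
      convert this using 1
      match_scalars <;> field_simp
      ring
    · have h1s : 0 < 1 - s := by linarith
      have h1t : 0 < 1 - t := by linarith
      have := h.combo hm hb (a := (1 - t) / (1 - s)) (b := 1 - (1 - t) / (1 - s)) (by positivity)
        (by rw [sub_nonneg, div_le_one h1s]; linarith) (by ring)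
      convert this using 1
      match_scalars <;> field_simp
      ring
  have hψpos : ∀ x ∈ closure Ω, 0 ≤ ψ x := by
    intro x hx
    obtain ⟨t, h0, h1, b, hb, rfl⟩ := mem_join.1 (hjoin hx)
    rw [aff2 _ _ _ (by ring), hψv, hb.2]
    linarith
  have hψΩ : ∀ x ∈ Ω, 0 < ψ x := by
    intro x hx
    rcases (hψpos x (subset_closure hx)).lt_or_eq with h1 | h1
    · exact h1
    · exfalso
      obtain ⟨s, hs, hsf⟩ := h.ray_exists hx (v := x - v) (by
        intro h0
        rw [sub_eq_zero] at h0
        exact hvΩ (h0 ▸ hx))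
      have h2 := hψpos _ (Dom.frontier_closure hsf)
      have : x + s • (x - v) = (1 + s) • x + (-s) • v := by module
      rw [this, aff2 _ _ _ (by ring), ← h1, hψv] at h2
      linarith
  set B : Set (Euc 3) := {b | ψ b = 0 ∧ (1 / 2 : ℝ) • v + (1 / 2 : ℝ) • b ∈ Ω} with hB
  have hBK : B ⊆ closure Ω := by
    rintro b ⟨hb0, hb⟩
    obtain ⟨t, h0, h1, b', hb', hbb⟩ := mem_join.1 (hjoin (subset_closure hb))
    have ht : t = 1 / 2 := by
      have := congrArg ψ hbb
      rw [aff2 _ _ _ (by ring), aff2 _ _ _ (by ring), hψv, hb0, hb'.2] at this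
      linarith
    rw [ht] at hbb
    have : b = b' := by
      have : (1 / 2 : ℝ) • b = (1 / 2 : ℝ) • b' := by linear_combination (norm := module) hbb
      exact smul_right_injective _ (by norm_num) this
    exact this ▸ hb'.1
  have hΩB : Ω = ⋃ b ∈ B, openSegment ℝ v b := by
    ext x
    simp only [mem_iUnion]
    constructor
    · intro hx
      obtain ⟨t, h0, h1, b, hb, rfl⟩ := mem_join.1 (hjoin (subset_closure hx))
      have ht0 : 0 < t := by
        rcases h0.lt_or_eq with h2 | h2
        · exact h2
        · subst h2
          simp at hx
          exact absurd hx hvΩ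
      have ht1 : t < 1 := by
        have := hψΩ _ hx
        rw [aff2 _ _ _ (by ring), hψv, hb.2] at this
        linarith
      refine ⟨b, ⟨hb.2, ?_⟩, 1 - t, t, by linarith, ht0, by ring, rfl⟩
      have := hseg b hb.1 t (1 / 2) ht0 ht1 (by norm_num) (by norm_num) hx
      convert this using 2
      norm_num
    · rintro ⟨b, hb, s, t, hs, ht, hst, rfl⟩
      have := hseg b (hBK hb) (1 / 2) t (by norm_num) (by norm_num) ht (by linarith) (by
        convert hb.2 using 2
        norm_num)
      rwa [← hst, add_sub_cancel_right] at this
  have hBne : B.Nonempty := by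
    obtain ⟨x, hx⟩ := h.ne
    rw [hΩB] at hx
    simp only [mem_iUnion] at hx
    obtain ⟨b, hb, -⟩ := hx
    exact ⟨b, hb⟩
  have hVo : IsOpen {b : Euc 3 | (1 / 2 : ℝ) • v + (1 / 2 : ℝ) • b ∈ Ω} :=
    h.op.preimage (by fun_prop)
  have hspan0 : ∀ x ∈ affineSpan ℝ B, ψ x = 0 := fun x hx => aff_zero_span (fun b hb => hb.1) hx
  refine ⟨v, B, ψ.linear, -ψ 0, hlin, ?_, ?_, hBne, ?_, h.compact.isBounded.subset hBK, ?_, ?_, hΩB⟩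
  · intro b hb
    have := hb.1
    rw [aff_dec] at this
    linarith
  · rw [aff_dec] at hψv
    intro h0
    linarith
  · rintro x ⟨hx, hx'⟩ y ⟨hy, hy'⟩ a b ha hb hab
    refine ⟨by rw [aff2 _ _ _ hab, hx, hy]; ring, ?_⟩
    have := h.cv hx' hy' ha hb hab
    convert this using 1
    have : (1 / 2 : ℝ) • v = (a + b) • ((1 / 2 : ℝ) • v) := by rw [hab, one_smul]
    linear_combination (norm := module) this
  · apply Subset.antisymm _ intrinsicInterior_subset
    intro b hb
    refine ⟨⟨b, subset_affineSpan ℝ B hb⟩, ?_, rfl⟩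
    rw [mem_interior]
    refine ⟨(↑) ⁻¹' {b : Euc 3 | (1 / 2 : ℝ) • v + (1 / 2 : ℝ) • b ∈ Ω}, ?_,
      hVo.preimage continuous_subtype_val, hb.2⟩
    rintro ⟨x, hx⟩ hx'
    exact ⟨hspan0 x hx, hx'⟩
  · ext x
    constructor
    · intro hx
      have := hspan0 x hx
      rw [aff_dec] at this
      change ψ.linear x = -ψ 0
      linarith
    · intro hx
      have hx0 : ψ x = 0 := by
        change ψ.linear x = -ψ 0 at hx
        rw [aff_dec]
        linarith
      obtain ⟨b, hb⟩ := hBne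
      have hcont : ContinuousAt (fun ε : ℝ => b + ε • (x - b)) 0 := by fun_prop
      have hev := hcont.eventually (hVo.mem_nhds (by simpa using hb.2))
      obtain ⟨δ, hδ, hball⟩ := Metric.mem_nhds_iff.1 hev
      have hm : b + (δ / 2) • (x - b) ∈ B := by
        refine ⟨by rw [aff_line, hb.1, hx0]; ring, hball (a := δ / 2) ?_⟩
        rw [Metric.mem_ball, dist_zero_right, Real.norm_eq_abs, abs_of_pos (by positivity)]
        linarith
      have : x = AffineMap.lineMap b (b + (δ / 2) • (x - b)) (2 / δ) := by
        rw [AffineMap.lineMap_apply]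
        simp only [vsub_eq_sub, vadd_eq_add, add_sub_cancel_left]
        match_scalars <;> field_simp
        ring
      rw [this]
      exact AffineMap.lineMap_mem _ (subset_affineSpan ℝ B hb) (subset_affineSpan ℝ B hm)

lemma extCone_of_isCone (h : Dom Ω) (hE : IsCone Ω) : ExtCone Ω := by
  obtain ⟨v, B, f, c, hf, hfB, hfv, hBne, -, hBb, -, -, hΩ⟩ := hE
  set ψ : Euc 3 →ᵃ[ℝ] ℝ := f.toAffineMap - AffineMap.const ℝ (Euc 3) c with hψ
  have hψa : ∀ x, ψ x = f x - c := fun x => by simp [hψ]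
  have hcB : IsCompact (closure B) := hBb.isCompact_closure
  have hK : closure Ω ⊆ convexJoin ℝ {v} (closure B) := by
    refine closure_minimal ?_ (join_compact v hcB).isClosed
    rw [hΩ]
    intro x hx
    simp only [mem_iUnion] at hx
    obtain ⟨b, hb, s, t, hs, ht, hst, rfl⟩ := hx
    refine mem_join.2 ⟨t, ht.le, by linarith, b, subset_closure hb, ?_⟩
    rw [← hst, add_sub_cancel_right]
  have hseg : ∀ b ∈ B, segment ℝ v b ⊆ closure Ω := by
    intro b hb
    rw [← closure_openSegment]
    apply closure_mono
    rw [hΩ]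
    exact subset_biUnion_of_mem hb
  have hvK : v ∈ closure Ω := by
    obtain ⟨b, hb⟩ := hBne
    exact hseg b hb (left_mem_segment ℝ v b)
  have hBK : closure B ⊆ closure Ω :=
    closure_minimal (fun b hb => hseg b hb (right_mem_segment ℝ v b)) isClosed_closure
  have hψB : ∀ b ∈ closure B, ψ b = 0 := by
    have : closure B ⊆ {b | ψ b = 0} :=
      closure_minimal (fun b hb => by simp [hψa, hfB b hb])
        (isClosed_eq (aff_cont ψ) continuous_const)
    exact this
  have key : ∀ e ∈ extremePoints ℝ (closure Ω), e = v ∨ ψ e = 0 := by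
    intro e he
    obtain ⟨t, h0, h1, b, hb, hev⟩ := mem_join.1 (hK he.1)
    rcases h0.lt_or_eq with h0 | h0
    · rcases h1.lt_or_eq with h1 | h1
      · left
        exact ((mem_extremePoints.1 he).2 v hvK b (hBK hb)
          ⟨1 - t, t, by linarith, h0, by ring, hev.symm⟩).1.symm
      · right
        subst h1
        simp at hev
        exact hev ▸ hψB b hb
    · left
      subst h0
      simpa using hev
  refine ⟨v, ?_, ψ, by rw [hψa]; exact sub_ne_zero.2 hfv, key⟩
  by_contra hv
  have hlin : ψ.linear ≠ 0 := by simpa [hψ] using hf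
  obtain ⟨x, hx, hx0⟩ := h.ext_not_plane hlin
  rcases key x hx with rfl | h1
  · exact hv hx
  · exact hx0 h1

end cone

/-! ### Projective maps preserve the Hilbert metric and cones -/

/-- The point `x'` is the image of `x` under the projective map induced by `g`, with a positive
factor between homogeneous coordinates. -/
def PosRel {n : ℕ} (g : (Fin (n + 1) → ℝ) ≃ₗ[ℝ] (Fin (n + 1) → ℝ)) (x x' : Euc n) : Prop :=
  ∃ k : ℝ, 0 < k ∧ g (lift x) = k • lift x'

section projective
variable {n : ℕ}

/-- The affine function obtained by restricting a linear functional to the affine chart. -/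
lemma exists_aff (Φ : (Fin (n + 1) → ℝ) →ₗ[ℝ] ℝ) :
    ∃ ψ : Euc n →ᵃ[ℝ] ℝ, ∀ x, ψ x = Φ (lift x) := by
  let L : Euc n →ₗ[ℝ] (Fin (n + 1) → ℝ) :=
    { toFun := fun x => lift x - lift 0
      map_add' := fun x y => by
        ext i
        refine Fin.lastCases ?_ (fun i => ?_) i <;> simp
      map_smul' := fun c x => by
        ext i
        refine Fin.lastCases ?_ (fun i => ?_) i <;> simp }
  refine ⟨(Φ.comp L).toAffineMap + AffineMap.const ℝ (Euc n) (Φ (lift 0)), fun x => ?_⟩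
  simp [L]

/-- The linear functional extending an affine function from the affine chart. -/
lemma exists_lin (ψ : Euc n →ᵃ[ℝ] ℝ) :
    ∃ Φ : (Fin (n + 1) → ℝ) →ₗ[ℝ] ℝ, ∀ x, Φ (lift x) = ψ x := by
  let Φ : (Fin (n + 1) → ℝ) →ₗ[ℝ] ℝ :=
    { toFun := fun v => ψ.linear (WithLp.toLp 2 fun i => v i.castSucc) + v (Fin.last n) * ψ 0
      map_add' := fun v w => by
        have : (WithLp.toLp 2 fun i : Fin n => (v + w) i.castSucc) =
            (WithLp.toLp 2 fun i => v i.castSucc) + (WithLp.toLp 2 fun i => w i.castSucc) := by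
          ext i; simp
        rw [this, map_add, Pi.add_apply]
        ring
      map_smul' := fun c v => by
        have : (WithLp.toLp 2 fun i : Fin n => (c • v) i.castSucc) =
            c • (WithLp.toLp 2 fun i => v i.castSucc : Euc n) := by
          ext i; simp
        rw [this, map_smul, Pi.smul_apply, smul_eq_mul, smul_eq_mul, RingHom.id_apply, smul_eq_mul]
        ring }
  refine ⟨Φ, fun x => ?_⟩
  have : (WithLp.toLp 2 fun i : Fin n => lift x i.castSucc) = x := by
    ext i; simp
  change ψ.linear (WithLp.toLp 2 fun i => lift x i.castSucc) + lift x (Fin.last n) * ψ 0 = ψ x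
  rw [this, lift_last, one_mul, ← aff_dec]

/-- Pull-back of an affine function under a linear map in homogeneous coordinates. -/
lemma exists_pull (g : (Fin (n + 1) → ℝ) ≃ₗ[ℝ] (Fin (n + 1) → ℝ)) (ψ' : Euc n →ᵃ[ℝ] ℝ) :
    ∃ ψ : Euc n →ᵃ[ℝ] ℝ, ∀ x x' k, g (lift x) = k • lift x' → ψ x = k * ψ' x' := by
  obtain ⟨Φ, hΦ⟩ := exists_lin ψ'
  obtain ⟨ψ, hψ⟩ := exists_aff (Φ.comp (g : (Fin (n + 1) → ℝ) →ₗ[ℝ] (Fin (n + 1) → ℝ)))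
  refine ⟨ψ, fun x x' k hk => ?_⟩
  rw [hψ]
  simp [hk, hΦ]

lemma PosRel.symm {g : (Fin (n + 1) → ℝ) ≃ₗ[ℝ] (Fin (n + 1) → ℝ)} {x x' : Euc n}
    (h : PosRel g x x') : PosRel g.symm x' x := by
  obtain ⟨k, hk, he⟩ := h
  refine ⟨k⁻¹, by positivity, ?_⟩
  rw [LinearEquiv.symm_apply_eq, map_smul, he, smul_smul, inv_mul_cancel₀ hk.ne', one_smul]

lemma PosRel.unique {g : (Fin (n + 1) → ℝ) ≃ₗ[ℝ] (Fin (n + 1) → ℝ)} {x x' x'' : Euc n}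
    (h : PosRel g x x') (h' : PosRel g x x'') : x' = x'' := by
  obtain ⟨k, hk, he⟩ := h
  obtain ⟨k', hk', he'⟩ := h'
  have h1 : k • lift x' = k' • lift x'' := he.symm.trans he'
  have : k = k' := by simpa using congrFun h1 (Fin.last n)
  subst this
  exact lift_inj (smul_right_injective _ hk.ne' h1)

lemma PosRel.dist_le {Ω Ω' : Set (Euc n)} (h : Dom Ω) (h' : Dom Ω')
    {g : (Fin (n + 1) → ℝ) ≃ₗ[ℝ] (Fin (n + 1) → ℝ)}
    (hg : ∀ x ∈ Ω, ∃ x' ∈ Ω', PosRel g x x') {x y x' y' : Euc n} (hx : x ∈ Ω) (hy : y ∈ Ω)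
    (hx' : x' ∈ Ω') (hy' : y' ∈ Ω') (rx : PosRel g x x') (ry : PosRel g y y') :
    hilbertDist Ω' x' y' ≤ hilbertDist Ω x y := by
  rw [← Real.exp_le_exp]
  refine h'.dist_le hx' hy' fun ψ' χ' hψ' hχ' => ?_
  obtain ⟨ψ, hψ⟩ := exists_pull g ψ'
  obtain ⟨χ, hχ⟩ := exists_pull g χ'
  have pψ : PosAff Ω ψ := fun z hz => by
    obtain ⟨z', hz', k, hk, he⟩ := hg z hz
    rw [hψ _ _ _ he]
    exact mul_pos hk (hψ' _ hz')
  have pχ : PosAff Ω χ := fun z hz => by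
    obtain ⟨z', hz', k, hk, he⟩ := hg z hz
    rw [hχ _ _ _ he]
    exact mul_pos hk (hχ' _ hz')
  obtain ⟨k, hk, ex⟩ := rx
  obtain ⟨m, hm, ey⟩ := ry
  have := h.lower pψ pχ hx hy
  rw [hψ _ _ _ ex, hψ _ _ _ ey, hχ _ _ _ ex, hχ _ _ _ ey] at this
  refine le_of_mul_le_mul_left ?_ (mul_pos hk hm)
  calc k * m * (ψ' x' * χ' y') = k * ψ' x' * (m * χ' y') := by ring
    _ ≤ _ := this
    _ = _ := by ring

lemma chart_inj {x y : Euc n} (h : chart x = chart y) : x = y := by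
  simp only [chart] at h
  rw [Projectivization.mk_eq_mk_iff'] at h
  obtain ⟨a, ha⟩ := h
  change a • lift y = lift x at ha
  have h1 : a = 1 := by simpa using congrFun ha (Fin.last n)
  rw [h1, one_smul] at ha
  exact (lift_inj ha).symm

/-- Homogeneous coordinates of a projective map between convex domains can be chosen with positive
factors, by connectedness. -/
lemma exists_posRel {Ω Ω' : Set (Euc n)} (h : Dom Ω) {τ : Euc n → Euc n}
    (hp : IsProjectiveBetween Ω Ω' τ) :
    ∃ g : (Fin (n + 1) → ℝ) ≃ₗ[ℝ] (Fin (n + 1) → ℝ), (∀ x ∈ Ω, PosRel g x (τ x)) ∧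
      MapsTo τ Ω Ω' ∧ SurjOn τ Ω Ω' := by
  obtain ⟨g, hg, him⟩ := hp
  have hmaps : MapsTo τ Ω Ω' := by
    intro x hx
    have : projMap g (chart x) ∈ chart '' Ω' := him ▸ ⟨_, ⟨x, hx, rfl⟩, rfl⟩
    obtain ⟨y, hy, hxy⟩ := this
    rw [← hg x hx] at hxy
    exact chart_inj hxy ▸ hy
  have hsurj : SurjOn τ Ω Ω' := by
    intro y hy
    have : chart y ∈ projMap g '' (chart '' Ω) := him ▸ ⟨y, hy, rfl⟩
    obtain ⟨_, ⟨x, hx, rfl⟩, hxy⟩ := this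
    rw [← hg x hx] at hxy
    exact ⟨x, hx, chart_inj hxy⟩
  obtain ⟨lam, hlam⟩ := exists_aff ((LinearMap.proj (Fin.last n)).comp
    (g : (Fin (n + 1) → ℝ) →ₗ[ℝ] (Fin (n + 1) → ℝ)))
  have hrel : ∀ x ∈ Ω, lam x ≠ 0 ∧ g (lift x) = lam x • lift (τ x) := by
    intro x hx
    have h1 := hg x hx
    simp only [chart, projMap, Projectivization.map_mk] at h1
    rw [Projectivization.mk_eq_mk_iff'] at h1
    obtain ⟨a, ha⟩ := h1
    change a • g (lift x) = lift (τ x) at ha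
    have ha0 : a ≠ 0 := by
      rintro rfl
      rw [zero_smul] at ha
      exact lift_ne _ ha.symm
    have h2 : g (lift x) = a⁻¹ • lift (τ x) := by
      rw [← ha, smul_smul, inv_mul_cancel₀ ha0, one_smul]
    have h3 : lam x = a⁻¹ := by
      rw [hlam]
      simp [h2]
    rw [h3]
    exact ⟨inv_ne_zero ha0, h2⟩
  by_cases hpos : ∃ x ∈ Ω, 0 < lam x
  · obtain ⟨x₀, hx₀, h0⟩ := hpos
    refine ⟨g, fun x hx => ⟨lam x, ?_, (hrel x hx).2⟩, hmaps, hsurj⟩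
    by_contra hneg
    have hlt : lam x < 0 := lt_of_le_of_ne (not_lt.1 hneg) (hrel x hx).1
    have hd : 0 < lam x₀ - lam x := by linarith
    have hm := h.cv hx₀ hx (a := -lam x / (lam x₀ - lam x)) (b := lam x₀ / (lam x₀ - lam x))
      (div_nonneg (by linarith) hd.le) (by positivity) (by field_simp; ring)
    apply (hrel _ hm).1
    rw [aff2 _ _ _ (by field_simp; ring)]
    field_simp
    ring
  · push Not at hpos
    refine ⟨g.trans (LinearEquiv.neg ℝ), fun x hx => ⟨-lam x, ?_, ?_⟩, hmaps, hsurj⟩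
    · have := lt_of_le_of_ne (hpos x hx) (hrel x hx).1
      linarith
    · rw [LinearEquiv.trans_apply, (hrel x hx).2]
      simp

/-- A projective map between convex domains is an isometry. -/
lemma isometry_of_projective {Ω Ω' : Set (Euc n)} (h : Dom Ω) (h' : Dom Ω') {τ : Euc n → Euc n}
    (hp : IsProjectiveBetween Ω Ω' τ) : IsHilbertIsometry Ω Ω' τ := by
  obtain ⟨g, hg, hmaps, hsurj⟩ := exists_posRel h hp
  refine ⟨hmaps, hsurj, fun x hx y hy => le_antisymm ?_ ?_⟩
  · exact PosRel.dist_le h h' (fun z hz => ⟨τ z, hmaps hz, hg z hz⟩) hx hy (hmaps hx) (hmaps hy)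
      (hg x hx) (hg y hy)
  · refine PosRel.dist_le h' h (g := g.symm) (fun z hz => ?_) (hmaps hx) (hmaps hy) hx hy
      (hg x hx).symm (hg y hy).symm
    obtain ⟨w, hw, rfl⟩ := hsurj hz
    exact ⟨w, hw, (hg w hw).symm⟩

/-- A projective map between bounded domains extends to the closures. -/
lemma posRel_closure {Ω Ω' : Set (Euc n)} (h' : Dom Ω')
    {g : (Fin (n + 1) → ℝ) ≃ₗ[ℝ] (Fin (n + 1) → ℝ)}
    (hg : ∀ x ∈ Ω, ∃ x' ∈ Ω', PosRel g x x') :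
    ∀ x ∈ closure Ω, ∃ x' ∈ closure Ω', PosRel g x x' := by
  intro x hx
  obtain ⟨s, hs, hlim⟩ := mem_closure_iff_seq_limit.1 hx
  choose y hy k hk he using fun i => hg (s i) (hs i)
  obtain ⟨x', hx', φ, hφ, hlim'⟩ := h'.compact.tendsto_subseq (fun i => subset_closure (hy i))
  have hlc : Continuous (lift : Euc n → Fin (n + 1) → ℝ) := by
    refine continuous_pi fun i => ?_
    refine Fin.lastCases ?_ (fun i => ?_) i
    · simpa using continuous_const
    · simp only [lift_castSucc]
      fun_prop
  have hgc : Continuous g := (g : (Fin (n + 1) → ℝ) →ₗ[ℝ] (Fin (n + 1) → ℝ)).continuous_of_finiteDimensional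
  have t1 : Filter.Tendsto (fun i => g (lift (s (φ i)))) Filter.atTop (nhds (g (lift x))) :=
    ((hgc.comp hlc).tendsto x).comp (hlim.comp hφ.tendsto_atTop)
  have t2 : Filter.Tendsto (fun i => k (φ i)) Filter.atTop (nhds (g (lift x) (Fin.last n))) := by
    have := ((continuous_apply (Fin.last n)).tendsto _).comp t1
    refine this.congr fun i => ?_
    simp [he]
  have t3 : Filter.Tendsto (fun i => lift (y (φ i))) Filter.atTop (nhds (lift x')) :=
    (hlc.tendsto x').comp hlim'
  have t4 := t2.smul t3
  have heq : g (lift x) = g (lift x) (Fin.last n) • lift x' :=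
    tendsto_nhds_unique t1 (t4.congr fun i => (he _).symm)
  have hnn : 0 ≤ g (lift x) (Fin.last n) := ge_of_tendsto' t2 fun i => (hk _).le
  refine ⟨x', hx', _, lt_of_le_of_ne hnn fun h0 => ?_, heq⟩
  rw [← h0, zero_smul] at heq
  exact lift_ne x (g.map_eq_zero_iff.1 heq)

/-- Projective maps preserve extreme points. -/
lemma PosRel.extreme {Ω Ω' : Set (Euc n)} {g : (Fin (n + 1) → ℝ) ≃ₗ[ℝ] (Fin (n + 1) → ℝ)}
    (hg' : ∀ x' ∈ closure Ω', ∃ x ∈ closure Ω, PosRel g x x') {e e' : Euc n}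
    (he : e ∈ extremePoints ℝ (closure Ω)) (he' : e' ∈ closure Ω') (hr : PosRel g e e') :
    e' ∈ extremePoints ℝ (closure Ω') := by
  rw [mem_extremePoints]
  refine ⟨he', ?_⟩
  rintro p' hp' q' hq' ⟨s, t, hs, ht, hst, hE⟩
  obtain ⟨p, hp, rp⟩ := hg' p' hp'
  obtain ⟨q, hq, rq⟩ := hg' q' hq'
  obtain ⟨k, hk, ee⟩ := id hr
  obtain ⟨a, ha, ep⟩ := id rp
  obtain ⟨b, hb, eq⟩ := id rq
  have h1 : g (lift e) = g ((k * s / a) • lift p + (k * t / b) • lift q) := by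
    rw [map_add, map_smul, map_smul, ep, eq, ee, ← hE, lift_two _ _ hst]
    match_scalars <;> field_simp
  have h2 := g.injective h1
  have h3 : k * s / a + k * t / b = 1 := by
    have := congrFun h2 (Fin.last n)
    simpa using this.symm
  rw [← lift_two _ _ h3] at h2
  have h4 := (mem_extremePoints.1 he).2 p hp q hq
    ⟨_, _, by positivity, by positivity, h3, (lift_inj h2).symm⟩
  obtain ⟨rfl, rfl⟩ := h4
  exact ⟨rp.unique hr, rq.unique hr⟩

end projective

/-- A domain projectively equivalent to a cone is a cone. -/
lemma extCone_of_projective {Ω Ω' : Set (Euc 3)} (h : Dom Ω) (h' : Dom Ω') {τ : Euc 3 → Euc 3}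
    (hp : IsProjectiveBetween Ω Ω' τ) (hc : ExtCone Ω') : ExtCone Ω := by
  obtain ⟨g, hg, hmaps, hsurj⟩ := exists_posRel h hp
  have hK := posRel_closure h' (fun x hx => ⟨τ x, hmaps hx, hg x hx⟩)
  have hK' : ∀ x' ∈ closure Ω', ∃ x ∈ closure Ω, PosRel g.symm x' x :=
    posRel_closure h (g := g.symm) (fun x' hx' => by
      obtain ⟨x, hx, rfl⟩ := hsurj hx'
      exact ⟨x, hx, (hg x hx).symm⟩)
  have hK'' : ∀ x' ∈ closure Ω', ∃ x ∈ closure Ω, PosRel g x x' := fun x' hx' => by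
    obtain ⟨x, hx, hr⟩ := hK' x' hx'
    exact ⟨x, hx, by simpa using hr.symm⟩
  obtain ⟨v', hv', ψ', hψ', hE'⟩ := hc
  obtain ⟨v, hv, rv⟩ := hK'' v' hv'.1
  obtain ⟨ψ, hψ⟩ := exists_pull g ψ'
  refine ⟨v, PosRel.extreme (g := g.symm) (Ω := Ω') (Ω' := Ω)
    (fun x hx => by
      obtain ⟨x', hx', hr⟩ := hK x hx
      exact ⟨x', hx', hr.symm⟩) hv' hv rv.symm, ψ, ?_, ?_⟩
  · obtain ⟨k, hk, e⟩ := rv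
    rw [hψ _ _ _ e]
    exact mul_ne_zero hk.ne' hψ'
  · intro e he
    obtain ⟨e', he', re⟩ := hK e he.1
    rcases hE' e' (PosRel.extreme hK'' he he' re) with rfl | h1
    · left
      exact re.symm.unique rv.symm
    · right
      obtain ⟨k, hk, ee⟩ := re
      rw [hψ _ _ _ ee, h1, mul_zero]

/-! ### Domains without visible pairs of extreme points -/

/-- No two extreme points of the closure of `Ω` see each other through `Ω`. -/
def NoVis (Ω : Set (Euc 3)) : Prop :=
  ∀ e ∈ extremePoints ℝ (closure Ω), ∀ f ∈ extremePoints ℝ (closure Ω),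
    ∀ a b : ℝ, 0 ≤ a → 0 ≤ b → a + b = 1 → a • e + b • f ∉ Ω

/-- Exactly one of the three numbers is negative, the other two are positive. -/
def OneNeg (a b c : ℝ) : Prop :=
  (a < 0 ∧ 0 < b ∧ 0 < c) ∨ (0 < a ∧ b < 0 ∧ 0 < c) ∨ (0 < a ∧ 0 < b ∧ c < 0)

/-- The combinatorial and metric data of a triangular prism (up to projective equivalence), with
bases `A₁B₁C₁` and `A₂B₂C₂`: the lines `A₁A₂`, `B₁B₂`, `C₁C₂` are concurrent or parallel. -/
structure PrePrism (Ω : Set (Euc 3)) (A₁ A₂ B₁ B₂ C₁ C₂ : Euc 3) : Prop where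
  ind : Ind4 A₁ A₂ B₁ C₁
  mA₁ : A₁ ∈ extremePoints ℝ (closure Ω)
  mA₂ : A₂ ∈ extremePoints ℝ (closure Ω)
  mB₁ : B₁ ∈ extremePoints ℝ (closure Ω)
  mB₂ : B₂ ∈ extremePoints ℝ (closure Ω)
  mC₁ : C₁ ∈ extremePoints ℝ (closure Ω)
  mC₂ : C₂ ∈ extremePoints ℝ (closure Ω)
  rel : ∃ x₁ x₂ y₁ y₂ z₁ z₂ : ℝ, 0 < x₁ ∧ 0 < x₂ ∧ 0 < y₁ ∧ 0 < y₂ ∧ 0 < z₁ ∧ 0 < z₂ ∧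
    x₂ - x₁ = y₂ - y₁ ∧ x₂ - x₁ = z₂ - z₁ ∧
    x₂ • A₂ - x₁ • A₁ = y₂ • B₂ - y₁ • B₁ ∧ x₂ • A₂ - x₁ • A₁ = z₂ • C₂ - z₁ • C₁

section novis
variable {Ω : Set (Euc 3)}

lemma Ind4.swap01 {p q r s : Euc 3} (h : Ind4 p q r s) : Ind4 q p r s := by
  intro a b c d hs he
  have := h b a c d (by linarith) (by linear_combination (norm := module) he)
  tauto

lemma Ind4.swap12 {p q r s : Euc 3} (h : Ind4 p q r s) : Ind4 p r q s := by
  intro a b c d hs he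
  have := h a c b d (by linarith) (by linear_combination (norm := module) he)
  tauto

lemma Ind4.swap23 {p q r s : Euc 3} (h : Ind4 p q r s) : Ind4 p q s r := by
  intro a b c d hs he
  have := h a b d c (by linarith) (by linear_combination (norm := module) he)
  tauto

lemma Ind4.ne {p q r s : Euc 3} (h : Ind4 p q r s) : p ≠ q := by
  rintro rfl
  have := (h 1 (-1) 0 0 (by norm_num) (by module)).1
  norm_num at this

lemma Ind4.replace {p q r s k : Euc 3} (h : Ind4 p q r s) {a b c d : ℝ}
    (hs : a + b + c + d = 1) (hk : k = a • p + b • q + c • r + d • s) (ha : a ≠ 0) :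
    Ind4 k q r s := by
  intro a' b' c' d' hs' he
  subst hk
  obtain ⟨h1, h2, h3, h4⟩ := h (a' * a) (b' + a' * b) (c' + a' * c) (d' + a' * d)
    (by linear_combination hs' + a' * hs) (by linear_combination (norm := module) he)
  have h0 : a' = 0 := (mul_eq_zero.1 h1).resolve_right ha
  subst h0
  refine ⟨rfl, ?_, ?_, ?_⟩ <;> linarith

/-- Points with positive barycentric coordinates are interior. -/
lemma Dom.int4 (h : Dom Ω) {p q r s : Euc 3} (hI : Ind4 p q r s) (hp : p ∈ closure Ω)
    (hq : q ∈ closure Ω) (hr : r ∈ closure Ω) (hs : s ∈ closure Ω) {a b c d : ℝ} (ha : 0 < a)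
    (hb : 0 < b) (hc : 0 < c) (hd : 0 < d) (hsum : a + b + c + d = 1) :
    a • p + b • q + c • r + d • s ∈ Ω := by
  obtain ⟨l₀, l₁, l₂, l₃, hl⟩ := hI.coords
  rw [← h.interior_closure]
  refine mem_interior.2 ⟨{x | 0 < l₀ x ∧ 0 < l₁ x ∧ 0 < l₂ x ∧ 0 < l₃ x}, ?_, pos_open, ?_⟩
  · rintro x ⟨h0, h1, h2, h3⟩
    have hsx := hl.sum x
    have hcv := h.cv.closure
    have e1 := hcv hp hq (a := l₀ x / (l₀ x + l₁ x)) (b := l₁ x / (l₀ x + l₁ x))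
      (by positivity) (by positivity) (by field_simp)
    have e2 := hcv hr hs (a := l₂ x / (l₂ x + l₃ x)) (b := l₃ x / (l₂ x + l₃ x))
      (by positivity) (by positivity) (by field_simp)
    have e3 := hcv e1 e2 (a := l₀ x + l₁ x) (b := l₂ x + l₃ x)
      (by positivity) (by positivity) (by linarith)
    rw [hl.eq x]
    convert e3 using 1
    match_scalars <;> field_simp
  · have := hl.val hI hsum rfl
    simp only [mem_ofPred_eq, this]
    exact ⟨ha, hb, hc, hd⟩

/-- A point of a segment between two extreme points cannot be a convex combination involving four
affinely independent points with positive weights. The weights need not be normalized. -/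
lemma NoVis.false (h : Dom Ω) (hv : NoVis Ω) {e f p q r s k l : Euc 3}
    (he : e ∈ extremePoints ℝ (closure Ω)) (hf : f ∈ extremePoints ℝ (closure Ω))
    (hI : Ind4 p q r s) (hp : p ∈ closure Ω)
    (hq : q ∈ closure Ω) (hr : r ∈ closure Ω) (hs : s ∈ closure Ω) (hk : k ∈ closure Ω)
    (hl : l ∈ closure Ω) {x y a b c d u v : ℝ} (hx : 0 ≤ x) (hy : 0 ≤ y) (ha : 0 < a)
    (hb : 0 < b) (hc : 0 < c) (hd : 0 < d) (hu : 0 < u) (hw : 0 < v)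
    (hsum : x + y = a + b + c + d + u + v)
    (heq : x • e + y • f = a • p + b • q + c • r + d • s + u • k + v • l) : False := by
  have hT : 0 < x + y := by rw [hsum]; positivity
  apply hv e he f hf (x / (x + y)) (y / (x + y)) (by positivity) (by positivity) (by field_simp)
  have i1 := h.int4 hI hp hq hr hs (a := a / (a + b + c + d)) (b := b / (a + b + c + d))
    (c := c / (a + b + c + d)) (d := d / (a + b + c + d)) (by positivity) (by positivity)
    (by positivity) (by positivity) (by field_simp)
  have i2 := h.cv.closure hk hl (a := u / (u + v)) (b := v / (u + v)) (by positivity)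
    (by positivity) (by field_simp)
  have i3 := h.combo i1 i2 (a := (a + b + c + d) / (x + y)) (b := (u + v) / (x + y))
    (by positivity) (by positivity) (by rw [hsum]; field_simp; ring)
  convert i3 using 1
  have : (x / (x + y)) • e + (y / (x + y)) • f = (x + y)⁻¹ • (x • e + y • f) := by
    match_scalars <;> field_simp
  rw [this, heq]
  match_scalars <;> field_simp

/-- The coordinates of an extreme point in a basis of extreme points cannot all be nonzero. -/
lemma NoVis.five (h : Dom Ω) (hv : NoVis Ω) {e₀ e₁ e₂ e₃ k : Euc 3}
    (h0 : e₀ ∈ extremePoints ℝ (closure Ω)) (h1 : e₁ ∈ extremePoints ℝ (closure Ω))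
    (h2 : e₂ ∈ extremePoints ℝ (closure Ω)) (h3 : e₃ ∈ extremePoints ℝ (closure Ω))
    (hk : k ∈ extremePoints ℝ (closure Ω)) (hI : Ind4 e₀ e₁ e₂ e₃) {a b c d : ℝ}
    (hs : a + b + c + d = 1) (he : k = a • e₀ + b • e₁ + c • e₂ + d • e₃) :
    a = 0 ∨ b = 0 ∨ c = 0 ∨ d = 0 := by
  by_contra! hne
  obtain ⟨ha, hb, hc, hd⟩ := hne
  -- The affine relation is split by signs; one side always consists of at most two points.
  have key : ∀ e ∈ extremePoints ℝ (closure Ω), ∀ f ∈ extremePoints ℝ (closure Ω),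
      ∀ x y : ℝ, 0 ≤ x → 0 ≤ y → x + y = |a| + |b| + |c| + |d| + 1 →
      x • e + y • f ≠ |a| • e₀ + |b| • e₁ + |c| • e₂ + |d| • e₃ + (1 : ℝ) • k := by
    intro e hE f hF x y hx hy hsum heq
    exact hv.false h hE hF hI h0.1 h1.1 h2.1 h3.1 hk.1 hk.1 hx hy (abs_pos.2 ha) (abs_pos.2 hb)
      (abs_pos.2 hc) (abs_pos.2 hd) one_half_pos one_half_pos (by linarith)
      (by linear_combination (norm := module) heq)
  have solve1 : ∀ e ∈ extremePoints ℝ (closure Ω), ∀ x : ℝ, 0 ≤ x →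
      x = |a| + |b| + |c| + |d| + 1 →
      x • e ≠ |a| • e₀ + |b| • e₁ + |c| • e₂ + |d| • e₃ + (1 : ℝ) • k := by
    intro e hE x hx hsum heq
    exact key e hE e hE x 0 hx le_rfl (by linarith) (by linear_combination (norm := module) heq)
  rcases lt_or_gt_of_ne ha with ha | ha <;> rcases lt_or_gt_of_ne hb with hb | hb <;>
  rcases lt_or_gt_of_ne hc with hc | hc <;> rcases lt_or_gt_of_ne hd with hd | hd <;>
  simp only [abs_of_neg, abs_of_pos, ha, hb, hc, hd] at key solve1
  · linarith
  · exact solve1 e₃ h3 (2 * d) (by linarith) (by linarith)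
      (by linear_combination (norm := module) (-1 : ℝ) • he)
  · exact solve1 e₂ h2 (2 * c) (by linarith) (by linarith)
      (by linear_combination (norm := module) (-1 : ℝ) • he)
  · exact key e₂ h2 e₃ h3 (2 * c) (2 * d) (by linarith) (by linarith) (by linarith)
      (by linear_combination (norm := module) (-1 : ℝ) • he)
  · exact solve1 e₁ h1 (2 * b) (by linarith) (by linarith)
      (by linear_combination (norm := module) (-1 : ℝ) • he)
  · exact key e₁ h1 e₃ h3 (2 * b) (2 * d) (by linarith) (by linarith) (by linarith)
      (by linear_combination (norm := module) (-1 : ℝ) • he)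
  · exact key e₁ h1 e₂ h2 (2 * b) (2 * c) (by linarith) (by linarith) (by linarith)
      (by linear_combination (norm := module) (-1 : ℝ) • he)
  · exact key k hk e₀ h0 2 (-2 * a) (by linarith) (by linarith) (by linarith)
      (by linear_combination (norm := module) he)
  · exact solve1 e₀ h0 (2 * a) (by linarith) (by linarith)
      (by linear_combination (norm := module) (-1 : ℝ) • he)
  · exact key e₀ h0 e₃ h3 (2 * a) (2 * d) (by linarith) (by linarith) (by linarith)
      (by linear_combination (norm := module) (-1 : ℝ) • he)
  · exact key e₀ h0 e₂ h2 (2 * a) (2 * c) (by linarith) (by linarith) (by linarith)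
      (by linear_combination (norm := module) (-1 : ℝ) • he)
  · exact key k hk e₁ h1 2 (-2 * b) (by linarith) (by linarith) (by linarith)
      (by linear_combination (norm := module) he)
  · exact key e₀ h0 e₁ h1 (2 * a) (2 * b) (by linarith) (by linarith) (by linarith)
      (by linear_combination (norm := module) (-1 : ℝ) • he)
  · exact key k hk e₂ h2 2 (-2 * c) (by linarith) (by linarith) (by linarith)
      (by linear_combination (norm := module) he)
  · exact key k hk e₃ h3 2 (-2 * d) (by linarith) (by linarith) (by linarith)
      (by linear_combination (norm := module) he)
  · exact solve1 k hk 2 (by linarith) (by linarith)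
      (by linear_combination (norm := module) he)

lemma ext_comb (h : Dom Ω) {e p q r : Euc 3} (he : e ∈ extremePoints ℝ (closure Ω))
    (hp : p ∈ closure Ω) (hq : q ∈ closure Ω) (hr : r ∈ closure Ω) {a b c d : ℝ} (ha : 0 < a)
    (hb : 0 ≤ b) (hc : 0 ≤ c) (hs : a + b + c = d)
    (heq : a • p + b • q + c • r = d • e) : p = e := by
  subst hs
  rcases (add_nonneg hb hc).eq_or_lt with h0 | h0
  · have hb0 : b = 0 := by linarith
    have hc0 : c = 0 := by linarith
    subst hb0; subst hc0
    have : a • p = a • e := by linear_combination (norm := module) heq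
    exact smul_right_injective _ ha.ne' this
  · have hz := h.cv.closure hq hr (a := b / (b + c)) (b := c / (b + c)) (by positivity)
      (by positivity) (by field_simp)
    refine he.2 hp hz ⟨a / (a + b + c), (b + c) / (a + b + c), by positivity, by positivity,
      by field_simp; ring, ?_⟩
    have : e = (a + b + c)⁻¹ • ((a + b + c) • e) := by
      rw [smul_smul, inv_mul_cancel₀ (by positivity), one_smul]
    rw [this, ← heq]
    match_scalars <;> field_simp

/-- Four coplanar extreme points are in convex position. -/
lemma ext_signs (h : Dom Ω) {p q r k : Euc 3} (hp : p ∈ extremePoints ℝ (closure Ω))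
    (hq : q ∈ extremePoints ℝ (closure Ω)) (hr : r ∈ extremePoints ℝ (closure Ω))
    (hk : k ∈ extremePoints ℝ (closure Ω)) (kp : k ≠ p) (kq : k ≠ q) (kr : k ≠ r) {a b c : ℝ}
    (hs : a + b + c = 1) (he : k = a • p + b • q + c • r) : OneNeg a b c := by
  have n1 : a ≤ 0 → b ≤ 0 → False := fun ha hb =>
    kr (ext_comb h hr hk.1 hp.1 hq.1 one_pos (b := -a) (c := -b) (d := c) (by linarith)
      (by linarith) (by linarith) (by linear_combination (norm := module) he))
  have n2 : a ≤ 0 → c ≤ 0 → False := fun ha hb =>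
    kq (ext_comb h hq hk.1 hp.1 hr.1 one_pos (b := -a) (c := -c) (d := b) (by linarith)
      (by linarith) (by linarith) (by linear_combination (norm := module) he))
  have n3 : b ≤ 0 → c ≤ 0 → False := fun ha hb =>
    kp (ext_comb h hp hk.1 hq.1 hr.1 one_pos (b := -b) (c := -c) (d := a) (by linarith)
      (by linarith) (by linarith) (by linear_combination (norm := module) he))
  have n4 : 0 < a → 0 ≤ b → 0 ≤ c → False := fun ha hb hc =>
    kp (ext_comb h hk hp.1 hq.1 hr.1 ha hb hc hs
      (by linear_combination (norm := module) (-1 : ℝ) • he)).symm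
  have n5 : 0 ≤ a → 0 < b → 0 ≤ c → False := fun ha hb hc =>
    kq (ext_comb h hk hq.1 hp.1 hr.1 hb ha hc (d := 1) (by linarith)
      (by linear_combination (norm := module) (-1 : ℝ) • he)).symm
  unfold OneNeg
  grind

/-- In a basis of extreme points, any further extreme point has exactly one zero coordinate and
exactly one negative coordinate. -/
lemma NoVis.extra (h : Dom Ω) (hv : NoVis Ω) {e₀ e₁ e₂ e₃ k : Euc 3}
    (h0 : e₀ ∈ extremePoints ℝ (closure Ω)) (h1 : e₁ ∈ extremePoints ℝ (closure Ω))
    (h2 : e₂ ∈ extremePoints ℝ (closure Ω)) (h3 : e₃ ∈ extremePoints ℝ (closure Ω))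
    (hk : k ∈ extremePoints ℝ (closure Ω)) (hI : Ind4 e₀ e₁ e₂ e₃) {a b c d : ℝ}
    (hs : a + b + c + d = 1) (he : k = a • e₀ + b • e₁ + c • e₂ + d • e₃)
    (k0 : k ≠ e₀) (k1 : k ≠ e₁) (k2 : k ≠ e₂) (k3 : k ≠ e₃) :
    (a = 0 ∧ OneNeg b c d) ∨ (b = 0 ∧ OneNeg a c d) ∨ (c = 0 ∧ OneNeg a b d) ∨
      (d = 0 ∧ OneNeg a b c) := by
  rcases hv.five h h0 h1 h2 h3 hk hI hs he with rfl | rfl | rfl | rfl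
  · exact Or.inl ⟨rfl, ext_signs h h1 h2 h3 hk k1 k2 k3 (by linarith)
      (by linear_combination (norm := module) he)⟩
  · exact Or.inr (Or.inl ⟨rfl, ext_signs h h0 h2 h3 hk k0 k2 k3 (by linarith)
      (by linear_combination (norm := module) he)⟩)
  · exact Or.inr (Or.inr (Or.inl ⟨rfl, ext_signs h h0 h1 h3 hk k0 k1 k3 (by linarith)
      (by linear_combination (norm := module) he)⟩))
  · exact Or.inr (Or.inr (Or.inr ⟨rfl, ext_signs h h0 h1 h2 hk k0 k1 k2 (by linarith)
      (by linear_combination (norm := module) he)⟩))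

lemma OneNeg.ne {a b c : ℝ} (h : OneNeg a b c) : a ≠ 0 ∧ b ≠ 0 ∧ c ≠ 0 := by
  unfold OneNeg at h
  grind

/-- Two further extreme points on different faces of a tetrahedron of extreme points have
proportional coordinates along the common edge of these faces. -/
lemma NoVis.ratio (h : Dom Ω) (hv : NoVis Ω) {e₀ e₁ e₂ e₃ f k : Euc 3}
    (h1 : e₁ ∈ extremePoints ℝ (closure Ω))
    (h2 : e₂ ∈ extremePoints ℝ (closure Ω)) (h3 : e₃ ∈ extremePoints ℝ (closure Ω))
    (hf : f ∈ extremePoints ℝ (closure Ω)) (hk : k ∈ extremePoints ℝ (closure Ω))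
    (hI : Ind4 e₀ e₁ e₂ e₃) {f₀ f₁ f₂ k₀ k₁ k₃ : ℝ}
    (hfs : f₀ + f₁ + f₂ = 1) (hfe : f = f₀ • e₀ + f₁ • e₁ + f₂ • e₂)
    (hks : k₀ + k₁ + k₃ = 1) (hke : k = k₀ • e₀ + k₁ • e₁ + k₃ • e₃)
    (hf0 : f₀ ≠ 0) (hf2 : f₂ ≠ 0) (hk0 : k₀ ≠ 0) (hk3 : k₃ ≠ 0) : f₀ * k₁ = f₁ * k₀ := by
  have hI' := hI.replace (k := k) (a := k₀) (b := k₁) (c := 0) (d := k₃) (by linarith)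
    (by rw [hke]; module) hk0
  have := hv.five h hk h1 h2 h3 hf hI' (a := f₀ / k₀) (b := f₁ - f₀ * k₁ / k₀) (c := f₂)
    (d := - (f₀ * k₃ / k₀)) (by
      field_simp
      linear_combination k₀ * hfs - f₀ * hks) (by
      rw [hfe, hke]
      match_scalars <;> field_simp <;> ring)
  rcases this with h | h | h | h
  · simp [hf0, hk0] at h
  · field_simp at h
    linarith
  · exact absurd h hf2
  · simp [hf0, hk0, hk3] at h

end novis

/-! ### The prism -/

section prism
variable {Ω : Set (Euc 3)} {A₁ A₂ B₁ B₂ C₁ C₂ : Euc 3}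

lemma OneNeg.swap01 {a b c : ℝ} (h : OneNeg a b c) : OneNeg b a c := by
  unfold OneNeg at *; tauto

lemma OneNeg.swap12 {a b c : ℝ} (h : OneNeg a b c) : OneNeg a c b := by
  unfold OneNeg at *; tauto

lemma PrePrism.swap (P : PrePrism Ω A₁ A₂ B₁ B₂ C₁ C₂) : PrePrism Ω A₂ A₁ B₂ B₁ C₂ C₁ := by
  obtain ⟨x₁, x₂, y₁, y₂, z₁, z₂, hx₁, hx₂, hy₁, hy₂, hz₁, hz₂, s1, s2, r1, r2⟩ := P.rel
  refine ⟨?_, P.mA₂, P.mA₁, P.mB₂, P.mB₁, P.mC₂, P.mC₁, x₂, x₁, y₂, y₁, z₂, z₁, hx₂, hx₁, hy₂,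
    hy₁, hz₂, hz₁, by linarith, by linarith, by linear_combination (norm := module) (-1 : ℝ) • r1,
    by linear_combination (norm := module) (-1 : ℝ) • r2⟩
  have i1 := P.ind.swap12.swap01.replace (k := B₂) (a := y₁ / y₂) (b := -x₁ / y₂) (c := x₂ / y₂)
    (d := 0) (by field_simp; linarith) (by
      have : B₂ = y₂⁻¹ • (y₂ • B₂) := by rw [smul_smul, inv_mul_cancel₀ hy₂.ne', one_smul]
      rw [this]
      linear_combination (norm := skip) (-y₂⁻¹) • r1
      match_scalars <;> field_simp <;> ring) (by positivity)
  have i2 := i1.swap23.swap12.swap01.replace (k := C₂) (a := z₁ / z₂) (b := 0) (c := -x₁ / z₂)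
    (d := x₂ / z₂) (by field_simp; linarith) (by
      have : C₂ = z₂⁻¹ • (z₂ • C₂) := by rw [smul_smul, inv_mul_cancel₀ hz₂.ne', one_smul]
      rw [this]
      linear_combination (norm := skip) (-z₂⁻¹) • r2
      match_scalars <;> field_simp <;> ring) (by positivity)
  -- order `C₂ B₂ A₁ A₂`
  exact i2.swap23.swap12.swap01.swap23.swap12.swap23

lemma PrePrism.rot (P : PrePrism Ω A₁ A₂ B₁ B₂ C₁ C₂) : PrePrism Ω B₁ B₂ C₁ C₂ A₁ A₂ := by
  obtain ⟨x₁, x₂, y₁, y₂, z₁, z₂, hx₁, hx₂, hy₁, hy₂, hz₁, hz₂, s1, s2, r1, r2⟩ := P.rel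
  refine ⟨?_, P.mB₁, P.mB₂, P.mC₁, P.mC₂, P.mA₁, P.mA₂, y₁, y₂, z₁, z₂, x₁, x₂, hy₁, hy₂, hz₁,
    hz₂, hx₁, hx₂, by linarith, by linarith, by linear_combination (norm := module) r2 - r1,
    by linear_combination (norm := module) (-1 : ℝ) • r1⟩
  have i1 := P.ind.swap01.replace (k := B₂) (a := x₂ / y₂) (b := -x₁ / y₂) (c := y₁ / y₂)
    (d := 0) (by field_simp; linarith) (by
      have : B₂ = y₂⁻¹ • (y₂ • B₂) := by rw [smul_smul, inv_mul_cancel₀ hy₂.ne', one_smul]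
      rw [this]
      linear_combination (norm := skip) (-y₂⁻¹) • r1
      match_scalars <;> field_simp <;> ring) (by positivity)
  -- order `B₂ A₁ B₁ C₁`
  exact i1.swap12.swap01.swap23

lemma PrePrism.flip (P : PrePrism Ω A₁ A₂ B₁ B₂ C₁ C₂) : PrePrism Ω A₁ A₂ C₁ C₂ B₁ B₂ := by
  obtain ⟨x₁, x₂, y₁, y₂, z₁, z₂, hx₁, hx₂, hy₁, hy₂, hz₁, hz₂, s1, s2, r1, r2⟩ := P.rel
  exact ⟨P.ind.swap23, P.mA₁, P.mA₂, P.mC₁, P.mC₂, P.mB₁, P.mB₂, x₁, x₂, z₁, z₂, y₁, y₂, hx₁, hx₂,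
    hz₁, hz₂, hy₁, hy₂, s2, s1, r2, r1⟩

/-- Two further extreme points, on different faces of a tetrahedron of extreme points, form a
prism together with the vertices of the tetrahedron. -/
lemma NoVis.prePrism (h : Dom Ω) (hv : NoVis Ω) {e₀ e₁ e₂ e₃ f k : Euc 3}
    (h0 : e₀ ∈ extremePoints ℝ (closure Ω)) (h1 : e₁ ∈ extremePoints ℝ (closure Ω))
    (h2 : e₂ ∈ extremePoints ℝ (closure Ω)) (h3 : e₃ ∈ extremePoints ℝ (closure Ω))
    (hf : f ∈ extremePoints ℝ (closure Ω)) (hk : k ∈ extremePoints ℝ (closure Ω))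
    (hI : Ind4 e₀ e₁ e₂ e₃) {f₀ f₁ f₂ k₀ k₁ k₃ : ℝ}
    (hfs : f₀ + f₁ + f₂ = 1) (hfe : f = f₀ • e₀ + f₁ • e₁ + f₂ • e₂)
    (hks : k₀ + k₁ + k₃ = 1) (hke : k = k₀ • e₀ + k₁ • e₁ + k₃ • e₃)
    (hfn : OneNeg f₀ f₁ f₂) (hkn : OneNeg k₀ k₁ k₃) :
    ∃ A₁ A₂ B₁ B₂ C₁ C₂, PrePrism Ω A₁ A₂ B₁ B₂ C₁ C₂ := by
  obtain ⟨hf0, hf1, hf2⟩ := hfn.ne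
  obtain ⟨hk0, hk1, hk3⟩ := hkn.ne
  have hr := hv.ratio h h1 h2 h3 hf hk hI hfs hfe hks hke hf0 hf2 hk0 hk3
  obtain ⟨t, ht⟩ : ∃ t, k₀ = t * f₀ := ⟨k₀ / f₀, by field_simp⟩
  have ht1 : k₁ = t * f₁ := by
    apply mul_left_cancel₀ hf0
    rw [hr, ht]; ring
  have ht0 : t ≠ 0 := by rintro rfl; simp at ht; exact hk0 ht
  subst ht; subst ht1
  have hI2 : Ind4 e₀ e₁ e₂ k := (hI.swap23.swap12.swap01.replace (k := k) (a := k₃)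
    (b := t * f₀) (c := t * f₁) (d := 0) (by linarith) (by rw [hke]; module)
      hk3).swap01.swap12.swap23
  rcases hfn with ⟨s0, s1, s2⟩ | ⟨s0, s1, s2⟩ | ⟨s0, s1, s2⟩
  · rcases lt_or_gt_of_ne ht0 with hneg | hpos
    · have hk3 : 0 < k₃ := by
        have : 0 < t * f₀ := mul_pos_of_neg_of_neg hneg s0
        have : t * f₁ < 0 := mul_neg_of_neg_of_pos hneg s1
        rcases hkn with h | h | h <;> linarith [h.1, h.2.1, h.2.2]
      refine ⟨e₀, e₁, e₂, f, k, e₃, hI2, h0, h1, h2, hf, hk, h3, -f₀, f₁, f₂, 1, 1 / -t, k₃ / -t,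
        by linarith, by linarith, by linarith, by linarith, div_pos one_pos (by linarith),
        div_pos hk3 (by linarith), by linarith, ?_, ?_, ?_⟩
      · field_simp; linarith
      · rw [hfe]; module
      · rw [hke]
        match_scalars <;> field_simp
        ring
    · have hk3 : 0 < k₃ := by
        have : 0 < t * f₁ := mul_pos hpos s1
        have : t * f₀ < 0 := mul_neg_of_pos_of_neg hpos s0
        rcases hkn with h | h | h <;> linarith [h.1, h.2.1, h.2.2]
      refine ⟨e₀, e₁, e₂, f, e₃, k, hI, h0, h1, h2, hf, h3, hk, -f₀, f₁, f₂, 1, k₃ / t, 1 / t,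
        by linarith, by linarith, by linarith, by linarith, by positivity,
        by positivity, by linarith, ?_, ?_, ?_⟩
      · field_simp; linarith
      · rw [hfe]; module
      · rw [hke]
        match_scalars <;> field_simp
        ring
  · rcases lt_or_gt_of_ne ht0 with hneg | hpos
    · have hk3 : 0 < k₃ := by
        have : 0 < t * f₁ := mul_pos_of_neg_of_neg hneg s1
        have : t * f₀ < 0 := mul_neg_of_neg_of_pos hneg s0
        rcases hkn with h | h | h <;> linarith [h.1, h.2.1, h.2.2]
      refine ⟨e₁, e₀, e₂, f, k, e₃, hI2.swap01, h1, h0, h2, hf, hk, h3, -f₁, f₀, f₂, 1, 1 / -t,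
        k₃ / -t, by linarith, by linarith, by linarith, by linarith,
        div_pos one_pos (by linarith), div_pos hk3 (by linarith), by linarith, ?_, ?_, ?_⟩
      · field_simp; linarith
      · rw [hfe]; module
      · rw [hke]
        match_scalars <;> field_simp
        ring
    · have hk3 : 0 < k₃ := by
        have : 0 < t * f₀ := mul_pos hpos s0
        have : t * f₁ < 0 := mul_neg_of_pos_of_neg hpos s1
        rcases hkn with h | h | h <;> linarith [h.1, h.2.1, h.2.2]
      refine ⟨e₁, e₀, e₂, f, e₃, k, hI.swap01, h1, h0, h2, hf, h3, hk, -f₁, f₀, f₂, 1, k₃ / t,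
        1 / t, by linarith, by linarith, by linarith, by linarith, by positivity,
        by positivity, by linarith, ?_, ?_, ?_⟩
      · field_simp; linarith
      · rw [hfe]; module
      · rw [hke]
        match_scalars <;> field_simp
        ring
  · -- an octahedron, in which `e₀` and `e₁` see each other
    exfalso
    have hpos : 0 < t := by
      rcases lt_or_gt_of_ne ht0 with hneg | hpos
      · have : t * f₁ < 0 := mul_neg_of_neg_of_pos hneg s1
        have : t * f₀ < 0 := mul_neg_of_neg_of_pos hneg s0
        rcases hkn with h | h | h <;> linarith [h.1, h.2.1, h.2.2]
      · exact hpos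
    have hk3 : k₃ < 0 := by
      have : 0 < t * f₁ := mul_pos hpos s1
      have : 0 < t * f₀ := mul_pos hpos s0
      rcases hkn with h | h | h <;> linarith [h.1, h.2.1, h.2.2]
    refine hv.false h h0 h1 hI h0.1 h1.1 h2.1 h3.1 hf.1 hk.1 (x := (2 * t + 1) * f₀)
      (y := (2 * t + 1) * f₁) (a := f₀) (b := f₁) (c := -(t * f₂)) (d := -k₃) (u := t) (v := 1)
      (by positivity) (by positivity) s0 s1 (by nlinarith) (by linarith) hpos one_pos ?_ ?_
    · linear_combination t * hfs + hks
    · rw [hfe, hke]; module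

/-- The vertices of a prism are the only extreme points. -/
lemma NoVis.prism_all (h : Dom Ω) (hv : NoVis Ω) (P : PrePrism Ω A₁ A₂ B₁ B₂ C₁ C₂) :
    ∀ e ∈ extremePoints ℝ (closure Ω), e = A₁ ∨ e = A₂ ∨ e = B₁ ∨ e = B₂ ∨ e = C₁ ∨ e = C₂ := by
  intro e he
  by_contra! hne
  obtain ⟨eA₁, eA₂, eB₁, eB₂, eC₁, eC₂⟩ := hne
  -- a further extreme point cannot be in the plane of `A₁, A₂, B₁` and `B₂`
  have side : ∀ {A₁ A₂ B₁ B₂ C₁ C₂ : Euc 3}, PrePrism Ω A₁ A₂ B₁ B₂ C₁ C₂ → e ≠ B₁ → e ≠ B₂ →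
      ∀ a b c : ℝ, a + b + c = 1 → e = a • A₁ + b • A₂ + c • B₁ → OneNeg a b c → False := by
    intro A₁ A₂ B₁ B₂ C₁ C₂ P n1 n2 a b c hs heq hn
    obtain ⟨x₁, x₂, y₁, y₂, z₁, z₂, hx₁, hx₂, hy₁, hy₂, hz₁, hz₂, s1, s2, r1, r2⟩ := P.rel
    obtain ⟨ha, hb, hc⟩ := hn.ne
    have hr := hv.ratio h P.mA₂ P.mB₁ P.mC₁ he P.mC₂ P.ind hs heq (k₀ := -x₁ / z₂)
      (k₁ := x₂ / z₂) (k₃ := z₁ / z₂) (by field_simp; linarith) (by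
        have : C₂ = z₂⁻¹ • (z₂ • C₂) := by rw [smul_smul, inv_mul_cancel₀ hz₂.ne', one_smul]
        rw [this]
        linear_combination (norm := skip) (-z₂⁻¹) • r2
        match_scalars <;> field_simp <;> ring) ha hc (by
          rw [neg_div]; exact neg_ne_zero.2 (by positivity)) (by positivity)
    have hr' : a * x₂ = - (b * x₁) := by field_simp at hr; linarith
    obtain ⟨t, rfl⟩ : ∃ t, b = t * x₂ := ⟨b / x₂, by field_simp⟩
    have ha' : a = -(t * x₁) := by
      apply mul_right_cancel₀ hx₂.ne'
      linarith
    subst ha'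
    have e2 : e = (t * y₂) • B₂ + (c - t * y₁) • B₁ := by
      rw [heq]; linear_combination (norm := module) t • r1
    have hs2 : t * y₂ + (c - t * y₁) = 1 := by linear_combination hs - t * s1
    have n12 : B₁ ≠ B₂ := P.rot.ind.ne
    have := ext_signs h P.mB₂ P.mB₁ P.mB₁ he n2 n1 n1 (a := t * y₂) (b := c - t * y₁) (c := 0)
      (by linarith) (by rw [e2]; module)
    exact this.ne.2.2 rfl
  obtain ⟨x₁, x₂, y₁, y₂, z₁, z₂, hx₁, hx₂, hy₁, hy₂, hz₁, hz₂, s1, s2, r1, r2⟩ := P.rel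
  obtain ⟨l₀, l₁, l₂, l₃, hl⟩ := P.ind.coords
  have hs := hl.sum e
  have heq := hl.eq e
  set a := l₀ e
  set b := l₁ e
  set c := l₂ e
  set d := l₃ e
  have hB₂ : B₂ = (-x₁ / y₂) • A₁ + (x₂ / y₂) • A₂ + (y₁ / y₂) • B₁ := by
    have : B₂ = y₂⁻¹ • (y₂ • B₂) := by rw [smul_smul, inv_mul_cancel₀ hy₂.ne', one_smul]
    rw [this]
    linear_combination (norm := skip) (-y₂⁻¹) • r1
    match_scalars <;> field_simp <;> ring
  have hC₂ : C₂ = (-x₁ / z₂) • A₁ + (x₂ / z₂) • A₂ + (z₁ / z₂) • C₁ := by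
    have : C₂ = z₂⁻¹ • (z₂ • C₂) := by rw [smul_smul, inv_mul_cancel₀ hz₂.ne', one_smul]
    rw [this]
    linear_combination (norm := skip) (-z₂⁻¹) • r2
    match_scalars <;> field_simp <;> ring
  have hBs : -x₁ / y₂ + x₂ / y₂ + y₁ / y₂ = 1 := by field_simp; linarith
  have hCs : -x₁ / z₂ + x₂ / z₂ + z₁ / z₂ = 1 := by field_simp; linarith
  have hxy : -x₁ / y₂ ≠ 0 := by rw [neg_div]; exact neg_ne_zero.2 (by positivity)
  have hxz : -x₁ / z₂ ≠ 0 := by rw [neg_div]; exact neg_ne_zero.2 (by positivity)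
  rcases hv.extra h P.mA₁ P.mA₂ P.mB₁ P.mC₁ he P.ind hs heq eA₁ eA₂ eB₁ eC₁ with
    ⟨h0, hn⟩ | ⟨h0, hn⟩ | ⟨h0, hn⟩ | ⟨h0, hn⟩
  · obtain ⟨hb, hc, hd⟩ := hn.ne
    -- common coordinates of `e` and `B₂`: `A₂`, `B₁`; of `e` and `C₂`: `A₂`, `C₁`
    have q1 := hv.ratio h P.mB₁ P.mC₁ P.mA₁ he P.mB₂ P.ind.swap01.swap12.swap23
      (f₀ := b) (f₁ := c) (f₂ := d) (k₀ := x₂ / y₂) (k₁ := y₁ / y₂) (k₃ := -x₁ / y₂)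
      (by linarith) (by rw [heq, h0]; module) (by linarith) (by
        linear_combination (norm := module) hB₂) hb hd (by positivity) hxy
    have q2 := hv.ratio h P.mC₁ P.mB₁ P.mA₁ he P.mC₂ P.ind.swap01.swap12.swap23.swap12
      (f₀ := b) (f₁ := d) (f₂ := c) (k₀ := x₂ / z₂) (k₁ := z₁ / z₂) (k₃ := -x₁ / z₂)
      (by linarith) (by rw [heq, h0]; module) (by linarith) (by
        linear_combination (norm := module) hC₂) hb hc (by positivity) hxz
    field_simp at q1 q2
    have e1 : c = b * y₁ / x₂ := by field_simp; linarith
    have e2 : d = b * z₁ / x₂ := by field_simp; linarith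
    rcases lt_or_gt_of_ne hb with hb | hb
    · have : c < 0 := by rw [e1]; exact div_neg_of_neg_of_pos (mul_neg_of_neg_of_pos hb hy₁) hx₂
      rcases hn with h | h | h <;> linarith [h.1, h.2.1, h.2.2]
    · have : 0 < c := by rw [e1]; positivity
      have : 0 < d := by rw [e2]; positivity
      rcases hn with h | h | h <;> linarith [h.1, h.2.1, h.2.2]
  · obtain ⟨ha, hc, hd⟩ := hn.ne
    have q1 := hv.ratio h P.mB₁ P.mC₁ P.mA₂ he P.mB₂ P.ind.swap12.swap23
      (f₀ := a) (f₁ := c) (f₂ := d) (k₀ := -x₁ / y₂) (k₁ := y₁ / y₂) (k₃ := x₂ / y₂)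
      (by linarith) (by rw [heq, h0]; module) (by linarith) (by
        linear_combination (norm := module) hB₂) ha hd hxy (by positivity)
    have q2 := hv.ratio h P.mC₁ P.mB₁ P.mA₂ he P.mC₂ P.ind.swap12.swap23.swap12
      (f₀ := a) (f₁ := d) (f₂ := c) (k₀ := -x₁ / z₂) (k₁ := z₁ / z₂) (k₃ := x₂ / z₂)
      (by linarith) (by rw [heq, h0]; module) (by linarith) (by
        linear_combination (norm := module) hC₂) ha hc hxz (by positivity)
    field_simp at q1 q2
    obtain ⟨t, ht⟩ : ∃ t, a = -(t * x₁) := ⟨-a / x₁, by field_simp⟩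
    have ht0 : t ≠ 0 := by rintro rfl; simp at ht; exact ha ht
    have e1 : c = t * y₁ := by
      apply mul_right_cancel₀ hx₁.ne'
      rw [ht] at q1; linarith
    have e2 : d = t * z₁ := by
      apply mul_right_cancel₀ hx₁.ne'
      rw [ht] at q2; linarith
    -- in the basis `A₁, A₂, B₂, C₂` all the coordinates of `e` are nonzero
    have := hv.five h P.mA₁ P.mA₂ P.mB₂ P.mC₂ he P.swap.ind.swap01 (a := t * x₁)
      (b := -(2 * t * x₂)) (c := t * y₂) (d := t * z₂) (by
        rw [ht, h0, e1, e2] at hs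
        linear_combination hs - t * s1 - t * s2) (by
        rw [ht, h0, e1, e2] at heq
        linear_combination (norm := module) heq + t • r1 + t • r2)
    have := hx₁.ne'
    have := hx₂.ne'
    have := hy₂.ne'
    have := hz₂.ne'
    simp_all
  · exact side P.flip eC₁ eC₂ a b d (by linarith) (by rw [heq, h0]; module) hn
  · exact side P eB₁ eB₂ a b c (by linarith) (by rw [heq, h0]; module) hn

set_option maxHeartbeats 400000 in
/-- A domain without visible pairs of extreme points is a cone or a prism. -/
lemma NoVis.exists_prism (h : Dom Ω) (hv : NoVis Ω) (hc : ¬ ExtCone Ω) :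
    ∃ A₁ A₂ B₁ B₂ C₁ C₂, PrePrism Ω A₁ A₂ B₁ B₂ C₁ C₂ := by
  obtain ⟨e₀, h0, e₁, h1, e₂, h2, e₃, h3, hI⟩ := exists_ind4 h
  obtain ⟨l₀, l₁, l₂, l₃, hl⟩ := hI.coords
  have v0 := hl.val hI (x := e₀) (a := 1) (b := 0) (c := 0) (d := 0) (by norm_num) (by module)
  have v1 := hl.val hI (x := e₁) (a := 0) (b := 1) (c := 0) (d := 0) (by norm_num) (by module)
  have v2 := hl.val hI (x := e₂) (a := 0) (b := 0) (c := 1) (d := 0) (by norm_num) (by module)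
  have v3 := hl.val hI (x := e₃) (a := 0) (b := 0) (c := 0) (d := 1) (by norm_num) (by module)
  have cone : ∀ v ∈ extremePoints ℝ (closure Ω), ∀ ψ : Euc 3 →ᵃ[ℝ] ℝ, ψ v ≠ 0 →
      ∃ e ∈ extremePoints ℝ (closure Ω), e ≠ v ∧ ψ e ≠ 0 := by
    intro v hv ψ hψ
    by_contra! hcon
    exact hc ⟨v, hv, ψ, hψ, fun e he => or_iff_not_imp_left.2 (hcon e he)⟩
  have ex : ∀ e ∈ extremePoints ℝ (closure Ω), e ≠ e₀ → e ≠ e₁ → e ≠ e₂ → e ≠ e₃ →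
      (l₀ e = 0 ∧ OneNeg (l₁ e) (l₂ e) (l₃ e)) ∨ (l₁ e = 0 ∧ OneNeg (l₀ e) (l₂ e) (l₃ e)) ∨
      (l₂ e = 0 ∧ OneNeg (l₀ e) (l₁ e) (l₃ e)) ∨ (l₃ e = 0 ∧ OneNeg (l₀ e) (l₁ e) (l₂ e)) :=
    fun e he n0 n1 n2 n3 => hv.extra h h0 h1 h2 h3 he hI (hl.sum e) (hl.eq e) n0 n1 n2 n3
  -- a further extreme point off the face opposite to each vertex
  have f0 : ∃ e ∈ extremePoints ℝ (closure Ω),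
      (l₁ e = 0 ∧ OneNeg (l₀ e) (l₂ e) (l₃ e)) ∨
      (l₂ e = 0 ∧ OneNeg (l₀ e) (l₁ e) (l₃ e)) ∨ (l₃ e = 0 ∧ OneNeg (l₀ e) (l₁ e) (l₂ e)) := by
    obtain ⟨e, he, n, hψ⟩ := cone e₀ h0 l₀ (by rw [v0.1]; norm_num)
    refine ⟨e, he, (ex e he n ?_ ?_ ?_).resolve_left (fun q => hψ q.1)⟩ <;> rintro rfl <;>
      simp_all
  have f1 : ∃ e ∈ extremePoints ℝ (closure Ω),
      (l₀ e = 0 ∧ OneNeg (l₁ e) (l₂ e) (l₃ e)) ∨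
      (l₂ e = 0 ∧ OneNeg (l₀ e) (l₁ e) (l₃ e)) ∨ (l₃ e = 0 ∧ OneNeg (l₀ e) (l₁ e) (l₂ e)) := by
    obtain ⟨e, he, n, hψ⟩ := cone e₁ h1 l₁ (by rw [v1.2.1]; norm_num)
    have := ex e he (by rintro rfl; simp_all) n (by rintro rfl; simp_all) (by rintro rfl; simp_all)
    exact ⟨e, he, by
      rcases this with q | q | q | q
      exacts [Or.inl q, absurd q.1 hψ, Or.inr (Or.inl q), Or.inr (Or.inr q)]⟩
  have f2 : ∃ e ∈ extremePoints ℝ (closure Ω),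
      (l₀ e = 0 ∧ OneNeg (l₁ e) (l₂ e) (l₃ e)) ∨
      (l₁ e = 0 ∧ OneNeg (l₀ e) (l₂ e) (l₃ e)) ∨ (l₃ e = 0 ∧ OneNeg (l₀ e) (l₁ e) (l₂ e)) := by
    obtain ⟨e, he, n, hψ⟩ := cone e₂ h2 l₂ (by rw [v2.2.2.1]; norm_num)
    have := ex e he (by rintro rfl; simp_all) (by rintro rfl; simp_all) n (by rintro rfl; simp_all)
    exact ⟨e, he, by
      rcases this with q | q | q | q
      exacts [Or.inl q, Or.inr (Or.inl q), absurd q.1 hψ, Or.inr (Or.inr q)]⟩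
  have f3 : ∃ e ∈ extremePoints ℝ (closure Ω),
      (l₀ e = 0 ∧ OneNeg (l₁ e) (l₂ e) (l₃ e)) ∨
      (l₁ e = 0 ∧ OneNeg (l₀ e) (l₂ e) (l₃ e)) ∨ (l₂ e = 0 ∧ OneNeg (l₀ e) (l₁ e) (l₃ e)) := by
    obtain ⟨e, he, n, hψ⟩ := cone e₃ h3 l₃ (by rw [v3.2.2.2]; norm_num)
    have := ex e he (by rintro rfl; simp_all) (by rintro rfl; simp_all) (by rintro rfl; simp_all) n
    exact ⟨e, he, by
      rcases this with q | q | q | q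
      exacts [Or.inl q, Or.inr (Or.inl q), Or.inr (Or.inr q), absurd q.1 hψ]⟩
  -- the six pairs of faces
  have p23 : ∀ f ∈ extremePoints ℝ (closure Ω), ∀ k ∈ extremePoints ℝ (closure Ω),
      l₃ f = 0 → OneNeg (l₀ f) (l₁ f) (l₂ f) → l₂ k = 0 → OneNeg (l₀ k) (l₁ k) (l₃ k) →
      ∃ A₁ A₂ B₁ B₂ C₁ C₂, PrePrism Ω A₁ A₂ B₁ B₂ C₁ C₂ := fun f hf k hk z1 n1 z2 n2 =>
    hv.prePrism h h0 h1 h2 h3 hf hk hI (by linarith [hl.sum f])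
      (by linear_combination (norm := (rw [z1]; module)) hl.eq f) (by linarith [hl.sum k])
      (by linear_combination (norm := (rw [z2]; module)) hl.eq k) n1 n2
  have p13 : ∀ f ∈ extremePoints ℝ (closure Ω), ∀ k ∈ extremePoints ℝ (closure Ω),
      l₃ f = 0 → OneNeg (l₀ f) (l₁ f) (l₂ f) → l₁ k = 0 → OneNeg (l₀ k) (l₂ k) (l₃ k) →
      ∃ A₁ A₂ B₁ B₂ C₁ C₂, PrePrism Ω A₁ A₂ B₁ B₂ C₁ C₂ := fun f hf k hk z1 n1 z2 n2 =>
    hv.prePrism h h0 h2 h1 h3 hf hk hI.swap12 (by linarith [hl.sum f])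
      (by linear_combination (norm := (rw [z1]; module)) hl.eq f) (by linarith [hl.sum k])
      (by linear_combination (norm := (rw [z2]; module)) hl.eq k) (OneNeg.swap12 n1) n2
  have p03 : ∀ f ∈ extremePoints ℝ (closure Ω), ∀ k ∈ extremePoints ℝ (closure Ω),
      l₃ f = 0 → OneNeg (l₀ f) (l₁ f) (l₂ f) → l₀ k = 0 → OneNeg (l₁ k) (l₂ k) (l₃ k) →
      ∃ A₁ A₂ B₁ B₂ C₁ C₂, PrePrism Ω A₁ A₂ B₁ B₂ C₁ C₂ := fun f hf k hk z1 n1 z2 n2 =>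
    hv.prePrism h h1 h2 h0 h3 hf hk hI.swap01.swap12 (by linarith [hl.sum f])
      (by linear_combination (norm := (rw [z1]; module)) hl.eq f) (by linarith [hl.sum k])
      (by linear_combination (norm := (rw [z2]; module)) hl.eq k) (OneNeg.swap12 (OneNeg.swap01 n1)) n2
  have p12 : ∀ f ∈ extremePoints ℝ (closure Ω), ∀ k ∈ extremePoints ℝ (closure Ω),
      l₂ f = 0 → OneNeg (l₀ f) (l₁ f) (l₃ f) → l₁ k = 0 → OneNeg (l₀ k) (l₂ k) (l₃ k) →
      ∃ A₁ A₂ B₁ B₂ C₁ C₂, PrePrism Ω A₁ A₂ B₁ B₂ C₁ C₂ := fun f hf k hk z1 n1 z2 n2 =>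
    hv.prePrism h h0 h3 h1 h2 hf hk hI.swap23.swap12 (by linarith [hl.sum f])
      (by linear_combination (norm := (rw [z1]; module)) hl.eq f) (by linarith [hl.sum k])
      (by linear_combination (norm := (rw [z2]; module)) hl.eq k) (OneNeg.swap12 n1) (OneNeg.swap12 n2)
  have p02 : ∀ f ∈ extremePoints ℝ (closure Ω), ∀ k ∈ extremePoints ℝ (closure Ω),
      l₂ f = 0 → OneNeg (l₀ f) (l₁ f) (l₃ f) → l₀ k = 0 → OneNeg (l₁ k) (l₂ k) (l₃ k) →
      ∃ A₁ A₂ B₁ B₂ C₁ C₂, PrePrism Ω A₁ A₂ B₁ B₂ C₁ C₂ := fun f hf k hk z1 n1 z2 n2 =>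
    hv.prePrism h h1 h3 h0 h2 hf hk hI.swap01.swap23.swap12 (by linarith [hl.sum f])
      (by linear_combination (norm := (rw [z1]; module)) hl.eq f) (by linarith [hl.sum k])
      (by linear_combination (norm := (rw [z2]; module)) hl.eq k) (OneNeg.swap12 (OneNeg.swap01 n1)) (OneNeg.swap12 n2)
  have p01 : ∀ f ∈ extremePoints ℝ (closure Ω), ∀ k ∈ extremePoints ℝ (closure Ω),
      l₁ f = 0 → OneNeg (l₀ f) (l₂ f) (l₃ f) → l₀ k = 0 → OneNeg (l₁ k) (l₂ k) (l₃ k) →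
      ∃ A₁ A₂ B₁ B₂ C₁ C₂, PrePrism Ω A₁ A₂ B₁ B₂ C₁ C₂ := fun f hf k hk z1 n1 z2 n2 =>
    hv.prePrism h h2 h3 h0 h1 hf hk hI.swap12.swap23.swap01.swap12 (by linarith [hl.sum f])
      (by linear_combination (norm := (rw [z1]; module)) hl.eq f) (by linarith [hl.sum k])
      (by linear_combination (norm := (rw [z2]; module)) hl.eq k) (OneNeg.swap12 (OneNeg.swap01 n1))
      (OneNeg.swap12 (OneNeg.swap01 n2))
  obtain ⟨f, hf, q⟩ := f0
  obtain ⟨g1, hg1, q1⟩ := f1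
  obtain ⟨g2, hg2, q2⟩ := f2
  obtain ⟨g3, hg3, q3⟩ := f3
  rcases q with ⟨z, m⟩ | ⟨z, m⟩ | ⟨z, m⟩
  · rcases q1 with ⟨z', m'⟩ | ⟨z', m'⟩ | ⟨z', m'⟩
    · exact p01 f hf g1 hg1 z m z' m'
    · exact p12 g1 hg1 f hf z' m' z m
    · exact p13 g1 hg1 f hf z' m' z m
  · rcases q2 with ⟨z', m'⟩ | ⟨z', m'⟩ | ⟨z', m'⟩
    · exact p02 f hf g2 hg2 z m z' m'
    · exact p12 f hf g2 hg2 z m z' m'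
    · exact p23 g2 hg2 f hf z' m' z m
  · rcases q3 with ⟨z', m'⟩ | ⟨z', m'⟩ | ⟨z', m'⟩
    · exact p03 f hf g3 hg3 z m z' m'
    · exact p13 f hf g3 hg3 z m z' m'
    · exact p23 f hf g3 hg3 z m z' m'

end prism

/-! ### Focusing in the prism -/

/-- The open segment between `P` and `Q` lies on the boundary of `Ω`, and is in the interior of an
edge: segments of `closure Ω` through its points are parallel to `PQ`. -/
def IsEdge (Ω : Set (Euc 3)) (P Q : Euc 3) : Prop :=
  ∀ a b : ℝ, 0 < a → 0 < b → a + b = 1 →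
    a • P + b • Q ∈ frontier Ω ∧ EdgeAt Ω (a • P + b • Q) (Q - P)

section prismfoc
variable {Ω Ω' : Set (Euc 3)} {τ : Euc 3 → Euc 3} {A₁ A₂ B₁ B₂ C₁ C₂ : Euc 3}

/-- A supporting functional vanishing at exactly two extreme points exposes an edge. -/
lemma NoVis.isEdge (h : Dom Ω) (hv : NoVis Ω) (hfin : (extremePoints ℝ (closure Ω)).Finite)
    {P Q : Euc 3} (hP : P ∈ extremePoints ℝ (closure Ω)) (hQ : Q ∈ extremePoints ℝ (closure Ω))
    (ψ : Euc 3 →ᵃ[ℝ] ℝ) (hψP : ψ P = 0) (hψQ : ψ Q = 0)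
    (hψ : ∀ e ∈ extremePoints ℝ (closure Ω), e = P ∨ e = Q ∨ 0 < ψ e) : IsEdge Ω P Q := by
  have seg : ∀ z ∈ segment ℝ P Q, ψ z = 0 := by
    rintro z ⟨a, b, -, -, hab, rfl⟩
    rw [aff2 _ _ _ hab, hψP, hψQ]; ring
  have hK : closure Ω ⊆ {x | 0 < ψ x ∨ x ∈ segment ℝ P Q} := by
    rw [← h.closure_hull, (hfin.isCompact_convexHull (𝕜 := ℝ)).isClosed.closure_eq]
    refine convexHull_min ?_ ?_
    · intro e he
      rcases hψ e he with rfl | rfl | h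
      · exact Or.inr (left_mem_segment ℝ _ _)
      · exact Or.inr (right_mem_segment ℝ _ _)
      · exact Or.inl h
    · intro x hx y hy a b ha hb hab
      have hx0 : 0 ≤ ψ x := hx.elim le_of_lt fun q => (seg _ q).ge
      have hy0 : 0 ≤ ψ y := hy.elim le_of_lt fun q => (seg _ q).ge
      rcases ha.eq_or_lt with rfl | ha
      · have : b = 1 := by linarith
        subst this
        simpa using hy
      rcases hb.eq_or_lt with rfl | hb
      · have : a = 1 := by linarith
        subst this
        simpa using hx
      rcases hx with hx | hx
      · left; rw [aff2 _ _ _ hab]; positivity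
      rcases hy with hy | hy
      · left; rw [aff2 _ _ _ hab]; positivity
      · exact Or.inr (convex_segment P Q hx hy ha.le hb.le hab)
  intro a b ha hb hab
  refine ⟨h.mem_frontier.2 ⟨h.cv.closure hP.1 hQ.1 ha.le hb.le hab,
    hv P hP Q hQ a b ha.le hb.le hab⟩, ?_⟩
  rintro p hp q hq ⟨c, d, hc, hd, hcd, heq⟩
  have h0 : c * ψ p + d * ψ q = 0 := by
    rw [← aff2 _ _ _ hcd, heq, aff2 _ _ _ hab, hψP, hψQ]; ring
  have hp' := hK hp
  have hq' := hK hq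
  have hp0 : 0 ≤ ψ p := hp'.elim le_of_lt fun q => (seg _ q).ge
  have hq0 : 0 ≤ ψ q := hq'.elim le_of_lt fun q => (seg _ q).ge
  have hps : p ∈ segment ℝ P Q := hp'.resolve_left fun hh => by
    have : 0 < c * ψ p := by positivity
    have : 0 ≤ d * ψ q := by positivity
    linarith
  have hqs : q ∈ segment ℝ P Q := hq'.resolve_left fun hh => by
    have : 0 ≤ c * ψ p := by positivity
    have : 0 < d * ψ q := by positivity
    linarith
  obtain ⟨a₁, b₁, -, -, s₁, rfl⟩ := hps
  obtain ⟨a₂, b₂, -, -, s₂, rfl⟩ := hqs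
  refine ⟨b₂ - b₁, ?_⟩
  obtain rfl : a₁ = 1 - b₁ := by linarith
  obtain rfl : a₂ = 1 - b₂ := by linarith
  module

lemma rel_solve {x₁ x₂ y₁ y₂ : ℝ} (hy₂ : 0 < y₂)
    (r : x₂ • A₂ - x₁ • A₁ = y₂ • B₂ - y₁ • B₁) :
    B₂ = (-x₁ / y₂) • A₁ + (x₂ / y₂) • A₂ + (y₁ / y₂) • B₁ := by
  have : B₂ = y₂⁻¹ • (y₂ • B₂) := by rw [smul_smul, inv_mul_cancel₀ hy₂.ne', one_smul]
  rw [this]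
  linear_combination (norm := skip) (-y₂⁻¹) • r
  match_scalars <;> field_simp <;> ring

lemma PrePrism.ind' (P : PrePrism Ω A₁ A₂ B₁ B₂ C₁ C₂) : Ind4 A₁ A₂ B₂ C₁ := by
  obtain ⟨x₁, x₂, y₁, y₂, z₁, z₂, hx₁, hx₂, hy₁, hy₂, hz₁, hz₂, s1, s2, r1, r2⟩ := P.rel
  exact (P.ind.swap12.swap01.replace (k := B₂) (a := y₁ / y₂) (b := -x₁ / y₂) (c := x₂ / y₂)
    (d := 0) (by field_simp; linarith)
    (by linear_combination (norm := module) rel_solve hy₂ r1) (by positivity)).swap01.swap12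

lemma NoVis.finite (h : Dom Ω) (hv : NoVis Ω) (P : PrePrism Ω A₁ A₂ B₁ B₂ C₁ C₂) :
    (extremePoints ℝ (closure Ω)).Finite := by
  refine (Set.toFinite ({A₁, A₂, B₁, B₂, C₁, C₂} : Set (Euc 3))).subset fun e he => ?_
  simpa using hv.prism_all h P e he

lemma NoVis.edge_side (h : Dom Ω) (hv : NoVis Ω) (P : PrePrism Ω A₁ A₂ B₁ B₂ C₁ C₂) :
    IsEdge Ω A₁ A₂ := by
  obtain ⟨x₁, x₂, y₁, y₂, z₁, z₂, hx₁, hx₂, hy₁, hy₂, hz₁, hz₂, s1, s2, r1, r2⟩ := P.rel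
  obtain ⟨l₀, l₁, l₂, l₃, hl⟩ := P.ind.coords
  have v0 := hl.val P.ind (x := A₁) (a := 1) (b := 0) (c := 0) (d := 0) (by norm_num) (by module)
  have v1 := hl.val P.ind (x := A₂) (a := 0) (b := 1) (c := 0) (d := 0) (by norm_num) (by module)
  have v2 := hl.val P.ind (x := B₁) (a := 0) (b := 0) (c := 1) (d := 0) (by norm_num) (by module)
  have v3 := hl.val P.ind (x := C₁) (a := 0) (b := 0) (c := 0) (d := 1) (by norm_num) (by module)
  have v4 := hl.val P.ind (x := B₂) (a := -x₁ / y₂) (b := x₂ / y₂) (c := y₁ / y₂) (d := 0)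
    (by field_simp; linarith) (by linear_combination (norm := module) rel_solve hy₂ r1)
  have v5 := hl.val P.ind (x := C₂) (a := -x₁ / z₂) (b := x₂ / z₂) (c := 0) (d := z₁ / z₂)
    (by field_simp; linarith) (by linear_combination (norm := module) rel_solve hz₂ r2)
  refine hv.isEdge h (hv.finite h P) P.mA₁ P.mA₂ (l₂ + l₃) ?_ ?_ fun e he => ?_
  · simp [v0]
  · simp [v1]
  · rcases hv.prism_all h P e he with rfl | rfl | rfl | rfl | rfl | rfl
    · exact Or.inl rfl
    · exact Or.inr (Or.inl rfl)
    all_goals right; right; simp only [AffineMap.coe_add, Pi.add_apply, v2, v3, v4, v5]; positivity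

lemma NoVis.edge_base (h : Dom Ω) (hv : NoVis Ω) (P : PrePrism Ω A₁ A₂ B₁ B₂ C₁ C₂) :
    IsEdge Ω A₁ B₁ := by
  obtain ⟨x₁, x₂, y₁, y₂, z₁, z₂, hx₁, hx₂, hy₁, hy₂, hz₁, hz₂, s1, s2, r1, r2⟩ := P.rel
  obtain ⟨l₀, l₁, l₂, l₃, hl⟩ := P.ind.coords
  have v0 := hl.val P.ind (x := A₁) (a := 1) (b := 0) (c := 0) (d := 0) (by norm_num) (by module)
  have v1 := hl.val P.ind (x := A₂) (a := 0) (b := 1) (c := 0) (d := 0) (by norm_num) (by module)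
  have v2 := hl.val P.ind (x := B₁) (a := 0) (b := 0) (c := 1) (d := 0) (by norm_num) (by module)
  have v3 := hl.val P.ind (x := C₁) (a := 0) (b := 0) (c := 0) (d := 1) (by norm_num) (by module)
  have v4 := hl.val P.ind (x := B₂) (a := -x₁ / y₂) (b := x₂ / y₂) (c := y₁ / y₂) (d := 0)
    (by field_simp; linarith) (by linear_combination (norm := module) rel_solve hy₂ r1)
  have v5 := hl.val P.ind (x := C₂) (a := -x₁ / z₂) (b := x₂ / z₂) (c := 0) (d := z₁ / z₂)
    (by field_simp; linarith) (by linear_combination (norm := module) rel_solve hz₂ r2)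
  refine hv.isEdge h (hv.finite h P) P.mA₁ P.mB₁ (l₁ + l₃) ?_ ?_ fun e he => ?_
  · simp [v0]
  · simp [v2]
  · rcases hv.prism_all h P e he with rfl | rfl | rfl | rfl | rfl | rfl
    · exact Or.inl rfl
    on_goal 2 => exact Or.inr (Or.inl rfl)
    all_goals right; right; simp only [AffineMap.coe_add, Pi.add_apply, v1, v3, v4, v5]; positivity

lemma Dom.openSegment (h : Dom Ω) {A g : Euc 3} (hA : A ∈ closure Ω) (hg : g ∈ closure Ω)
    {a b a' b' : ℝ} (ha : 0 < a) (hb : 0 < b) (hab : a + b = 1) (hz : a • A + b • g ∈ Ω)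
    (ha' : 0 < a') (hb' : 0 < b') (hab' : a' + b' = 1) : a' • A + b' • g ∈ Ω := by
  obtain rfl : a = 1 - b := by linarith
  obtain rfl : a' = 1 - b' := by linarith
  rcases le_total b' b with hle | hle
  · have := h.combo hz hA (a := b' / b) (b := 1 - b' / b) (by positivity)
      (by rw [sub_nonneg, div_le_one hb]; exact hle) (by ring)
    convert this using 1
    match_scalars <;> field_simp
    ring
  · have := h.combo hz hg (a := (1 - b') / (1 - b)) (b := 1 - (1 - b') / (1 - b)) (by positivity)
      (by rw [sub_nonneg, div_le_one ha]; linarith) (by ring)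
    convert this using 1
    match_scalars <;> field_simp
    ring

/-- If `AX` and `PQ` are skew edges and `g` is on `PQ`, then the rays to `A` in the half-plane
bounded by the line `Ag` and containing `X` have the same limit under `τ` as the chord `gA`: the
chords from `g` to points of the edge `AX` are unique geodesics. -/
lemma foc_skew (h : Dom Ω) (h' : Dom Ω') (hτ : IsHilbertIsometry Ω Ω' τ) {A X P Q o : Euc 3}
    (hA : A ∈ extremePoints ℝ (closure Ω)) (hAX : IsEdge Ω A X) (hPQ : IsEdge Ω P Q)
    (hI : Ind4 A X P Q) {s t a b : ℝ} (hs : 0 < s) (ht : 0 < t) (hst : s + t = 1) (ho : o ∈ Ω)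
    (ha : 0 < a) (hb : 0 < b)
    (hoA : o - A = a • ((s • P + t • Q) - A) + b • (X - A))
    (hq : A + (1 / 3 : ℝ) • ((s • P + t • Q) - A) ∈ Ω) :
    foc Ω' τ A o = foc Ω' τ A (A + (2 / 3 : ℝ) • ((s • P + t • Q) - A)) := by
  obtain ⟨hgf, hge⟩ := hPQ s t hs ht hst
  set g := s • P + t • Q with hg
  refine foc_chord h h' hτ ho hA (ext3 h hA) (frontier_subset_closure hgf) hq ?_
  filter_upwards [Filter.eventually_gt_atTop (a + b)] with u hu
  have hu0 : 0 ≤ u := by linarith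
  have hv : 0 < 1 + u := by linarith
  have hva : 0 < 1 + u - a := by linarith
  have hvab : 0 < 1 + u - a - b := by linarith
  obtain ⟨hpf, hpe⟩ := hAX ((1 + u - a - b) / (1 + u - a)) (b / (1 + u - a)) (by positivity)
    (by positivity) (by field_simp; ring)
  have hx : pt o A u = ((1 + u - a - b) / (1 + u)) • A + (a / (1 + u)) • g
      + (b / (1 + u)) • X := by
    rw [pt]
    linear_combination (norm := skip) (1 + u)⁻¹ • hoA
    match_scalars <;> field_simp <;> ring
  have hxΩ : pt o A u ∈ Ω := h.pt_mem ho hA.1 hu0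
  have hyΩ : pt o A u + (2 / 3 : ℝ) • (g - pt o A u) ∈ Ω := by
    have := h.combo hxΩ (frontier_subset_closure hgf) (a := 1 / 3) (b := 2 / 3) (by norm_num)
      (by norm_num) (by norm_num)
    convert this using 1
    module
  set x := pt o A u with hx'
  have eβ : x + (3 / 2 : ℝ) • ((x + (2 / 3 : ℝ) • (g - x)) - x) = g := by module
  have eα : (x + (2 / 3 : ℝ) • (g - x)) + (1 + 3 / 2 * (a / (1 + u - a))) •
      (x - (x + (2 / 3 : ℝ) • (g - x))) =
      ((1 + u - a - b) / (1 + u - a)) • A + (b / (1 + u - a)) • X := by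
    rw [hx]
    match_scalars <;> field_simp <;> ring
  refine h.rigid_of_skew hxΩ hyΩ (p := 3 / 2) (p' := 1 + 3 / 2 * (a / (1 + u - a)))
    (D₁ := Q - P) (D₂ := X - A) (by norm_num) (by rw [eβ]; exact hgf) ?_ (by rw [eα]; exact hpf)
    (by rw [eβ]; exact hge) (by rw [eα]; exact hpe) ?_
  · have : 0 < a / (1 + u - a) := by positivity
    linarith
  · intro α β γ he
    obtain ⟨k, rfl⟩ : ∃ k, γ = 3 / 2 * (1 + u) * k := ⟨γ / (3 / 2 * (1 + u)), by field_simp⟩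
    obtain ⟨q1, q2, q3, q4⟩ := hI (-β - k * (1 + u - a - b)) (β - k * b)
      (-α + k * (1 + u - a) * s) (α + k * (1 + u - a) * t)
      (by linear_combination k * (1 + u - a) * hst) (by
        rw [← he, hx, hg]
        match_scalars <;> field_simp <;> ring)
    have hk : k * (1 + u - a) = 0 := by linear_combination q3 + q4 - k * (1 + u - a) * hst
    have hk0 : k = 0 := (mul_eq_zero.1 hk).resolve_right hva.ne'
    subst hk0
    refine ⟨?_, ?_, ?_⟩ <;> linarith

end prismfoc

section prismmain
variable {Ω Ω' : Set (Euc 3)} {τ : Euc 3 → Euc 3} {A₁ A₂ B₁ B₂ C₁ C₂ : Euc 3}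

/-- The chords from `A₁` to the opposite edge `B₂C₂` of the prism run through its interior. -/
lemma PrePrism.chord_mem (h : Dom Ω) (P : PrePrism Ω A₁ A₂ B₁ B₂ C₁ C₂) {s t a b : ℝ}
    (hs : 0 < s) (ht : 0 < t) (hst : s + t = 1) (ha : 0 < a) (hb : 0 < b) (hab : a + b = 1) :
    a • A₁ + b • (s • B₂ + t • C₂) ∈ Ω := by
  obtain ⟨x₁, x₂, y₁, y₂, z₁, z₂, hx₁, hx₂, hy₁, hy₂, hz₁, hz₂, s1, s2, r1, r2⟩ := P.rel
  have hg := h.cv.closure P.mB₂.1 P.mC₂.1 hs.le ht.le hst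
  set g := s • B₂ + t • C₂ with hgd
  -- `s B₂ + t C₂ = σ y₂ B₂ + ρ z₂ C₂`
  obtain ⟨σ, hσ, rfl⟩ : ∃ σ, 0 < σ ∧ s = σ * y₂ := ⟨s / y₂, by positivity, by field_simp⟩
  obtain ⟨ρ, hρ, rfl⟩ : ∃ ρ, 0 < ρ ∧ t = ρ * z₂ := ⟨t / z₂, by positivity, by field_simp⟩
  set M := (σ + ρ) * x₁ + (σ + ρ) * x₂ + σ * y₁ + ρ * z₁ with hM
  have hMp : 0 < M := by positivity
  have hMe : M + 1 = 2 + 2 * (σ + ρ) * x₁ := by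
    rw [hM]
    linear_combination hst + σ * s1 + ρ * s2
  have i1 := h.int4 P.ind P.mA₁.1 P.mA₂.1 P.mB₁.1 P.mC₁.1 (a := (σ + ρ) * x₁ / M)
    (b := (σ + ρ) * x₂ / M) (c := σ * y₁ / M) (d := ρ * z₁ / M) (by positivity) (by positivity)
    (by positivity) (by positivity) (by rw [← add_div, ← add_div, ← add_div, ← hM, div_self hMp.ne'])
  have i2 := h.combo i1 hg (a := M / (M + 1)) (b := 1 / (M + 1)) (by positivity) (by positivity)
    (by field_simp)
  refine h.openSegment P.mA₁.1 hg (a := 2 * (σ + ρ) * x₁ / (M + 1)) (b := 2 / (M + 1))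
    (by positivity) (by positivity) (by rw [← add_div, hMe]; field_simp; ring) ?_ ha hb hab
  convert i2 using 1
  rw [hgd]
  linear_combination (norm := skip) (-(σ / (M + 1))) • r1 - (ρ / (M + 1)) • r2
  clear_value M
  match_scalars <;> field_simp <;> ring

/-- All rays to `A₁` inside the tetrahedron `A₁A₂B₂C₂` have the same limit under `τ`. -/
lemma NoVis.prism_foc (h : Dom Ω) (h' : Dom Ω') (hτ : IsHilbertIsometry Ω Ω' τ) (hv : NoVis Ω)
    (P : PrePrism Ω A₁ A₂ B₁ B₂ C₁ C₂) :
    ∃ p : Euc 3, ∀ a b c d : ℝ, 0 < a → 0 < b → 0 < c → 0 < d → a + b + c + d = 1 →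
      RayTo Ω' τ A₁ (a • A₁ + b • A₂ + c • B₂ + d • C₂) p := by
  obtain ⟨x₁, x₂, y₁, y₂, z₁, z₂, hx₁, hx₂, hy₁, hy₂, hz₁, hz₂, s1, s2, r1, r2⟩ := P.rel
  have E0 : IsEdge Ω B₂ C₂ := hv.edge_base h P.swap.rot
  have EA : IsEdge Ω A₁ A₂ := hv.edge_side h P
  have EB : IsEdge Ω A₁ B₁ := hv.edge_base h P
  have EC : IsEdge Ω A₁ C₁ := hv.edge_base h P.flip
  have IA : Ind4 A₁ A₂ B₂ C₂ := P.swap.ind.swap01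
  have IB : Ind4 A₁ B₁ B₂ C₂ := P.rot.ind'.swap23.swap12.swap01
  have IC : Ind4 A₁ C₁ B₂ C₂ := P.flip.rot.ind'.swap23.swap12.swap01.swap23
  -- the homogeneous parameter `t` of the edge `B₂C₂`
  let m : ℝ → ℝ := fun t => (1 - t) * y₂ + t * z₂
  let R : ℝ → Euc 3 := fun t => foc Ω' τ A₁
    (A₁ + (2 / 3 : ℝ) • (((1 - t) * y₂ / m t) • B₂ + (t * z₂ / m t) • C₂ - A₁))
  have hm : ∀ t, 0 < t → t < 1 → 0 < m t := fun t h0 h1 => by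
    have : 0 < 1 - t := by linarith
    positivity
  have key : ∀ t, 0 < t → t < 1 → ∀ X, IsEdge Ω A₁ X → Ind4 A₁ X B₂ C₂ → ∀ o ∈ Ω, ∀ a b : ℝ,
      0 < a → 0 < b →
      o - A₁ = a • ((1 - t) * y₂) • (B₂ - A₁) + a • (t * z₂) • (C₂ - A₁) + b • (X - A₁) →
      foc Ω' τ A₁ o = R t := by
    intro t h0 h1 X hX hI o ho a b ha hb heq
    have hmt := hm t h0 h1
    have h1' : 0 < 1 - t := by linarith
    have hst : (1 - t) * y₂ / m t + t * z₂ / m t = 1 := by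
      rw [← add_div, div_self hmt.ne']
    have hc := P.chord_mem h (s := (1 - t) * y₂ / m t) (t := t * z₂ / m t) (a := 2 / 3)
      (b := 1 / 3) (by positivity) (by positivity) hst (by norm_num) (by norm_num) (by norm_num)
    refine foc_skew h h' hτ P.mA₁ hX E0 hI (s := (1 - t) * y₂ / m t) (t := t * z₂ / m t)
      (a := a * m t) (b := b) (by positivity) (by positivity) hst ho (by positivity) hb ?_ ?_
    · rw [heq]
      have hmd : m t = (1 - t) * y₂ + t * z₂ := rfl
      have e1 : (a * m t) * ((1 - t) * y₂ / m t) = a * ((1 - t) * y₂) := by field_simp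
      have e2 : (a * m t) * (t * z₂ / m t) = a * (t * z₂) := by field_simp
      have e3 : (a * m t) • (((1 - t) * y₂ / m t) • B₂ + (t * z₂ / m t) • C₂ - A₁) =
          (a * ((1 - t) * y₂)) • B₂ + (a * (t * z₂)) • C₂ - (a * m t) • A₁ := by
        rw [smul_sub, smul_add, smul_smul, smul_smul, e1, e2]
      rw [e3, hmd]
      module
    · convert hc using 1
      module
  -- two points of the edge are compared using the edges `A₁B₁` and `A₁C₁`
  have conn : ∀ t t', 0 < t' → t' < t → t < 1 → R t = R t' := by
    intro t t' h0 h1 h2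
    have h3 : 0 < 1 - t := by linarith
    have h4 : 0 < t - t' := by linarith
    have h5 : 0 < t := by linarith
    obtain ⟨u, hu, huM⟩ : ∃ u : ℝ, 0 < u ∧ u * (1 + (t - t') * y₁ + (1 - t) * y₂ + t * z₂) = 1 :=
      ⟨(1 + (t - t') * y₁ + (1 - t) * y₂ + t * z₂)⁻¹, by positivity,
        inv_mul_cancel₀ (by positivity)⟩
    have ho := h.int4 IB P.mA₁.1 P.mB₁.1 P.mB₂.1 P.mC₂.1 (a := u) (b := u * ((t - t') * y₁))
      (c := u * ((1 - t) * y₂)) (d := u * (t * z₂)) hu (by positivity) (by positivity)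
      (by positivity) (by linear_combination huM)
    have hA : (u * (1 + (t - t') * y₁ + (1 - t) * y₂ + t * z₂)) • A₁ = (1 : ℝ) • A₁ := by rw [huM]
    have hA' : (u * (t - t') * (y₂ - z₂ + z₁ - y₁)) • A₁ = 0 := by
      have : y₂ - z₂ + z₁ - y₁ = 0 := by linarith
      rw [this, mul_zero, zero_smul]
    have k1 := key t h5 h2 B₁ EB IB _ ho u (u * ((t - t') * y₁)) hu (by positivity) (by
      linear_combination (norm := module) hA)
    have k2 := key t' h0 (by linarith) C₁ EC IC _ ho u (u * ((t - t') * z₁)) hu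
      (by positivity) (by
        linear_combination (norm := module) hA + hA' + (u * (t - t')) • r1 - (u * (t - t')) • r2)
    rw [← k1, k2]
  have conn' : ∀ t, 0 < t → t < 1 → R t = R (1 / 2) := by
    intro t h0 h1
    rcases lt_trichotomy t (1 / 2) with hh | hh | hh
    · exact (conn _ _ h0 hh (by norm_num)).symm
    · rw [hh]
    · exact conn _ _ (by norm_num) hh h1
  refine ⟨R (1 / 2), fun a b c d ha hb hc hd hs => ?_⟩
  have ho := h.int4 IA P.mA₁.1 P.mA₂.1 P.mB₂.1 P.mC₂.1 ha hb hc hd hs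
  have hk : 0 < c / y₂ + d / z₂ := by positivity
  have h0 : 0 < d / z₂ / (c / y₂ + d / z₂) := by positivity
  have h1 : d / z₂ / (c / y₂ + d / z₂) < 1 := by
    rw [div_lt_one hk]
    have : 0 < c / y₂ := by positivity
    linarith
  have := key (d / z₂ / (c / y₂ + d / z₂)) h0 h1 A₂ EA IA _ ho (c / y₂ + d / z₂) b hk hb (by
    have e1 : (c / y₂ + d / z₂) * ((1 - d / z₂ / (c / y₂ + d / z₂)) * y₂) = c := by
      rw [← mul_assoc, mul_sub, mul_one, mul_div_cancel₀ _ hk.ne', add_sub_cancel_right,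
        div_mul_cancel₀ _ hy₂.ne']
    have e2 : (c / y₂ + d / z₂) * (d / z₂ / (c / y₂ + d / z₂) * z₂) = d := by
      rw [← mul_assoc, mul_div_cancel₀ _ hk.ne', div_mul_cancel₀ _ hz₂.ne']
    rw [smul_smul, smul_smul, e1, e2]
    obtain rfl : a = 1 - b - c - d := by linarith
    module)
  rw [← conn' _ h0 h1, ← this]
  exact foc_spec h h' hτ ho P.mA₁ (ext3 h P.mA₁)

/-- In a prism, the vertices of a base focus on a common open set near the other base. -/
lemma NoVis.locFoc (h : Dom Ω) (h' : Dom Ω') (hτ : IsHilbertIsometry Ω Ω' τ) (hv : NoVis Ω)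
    (P : PrePrism Ω A₁ A₂ B₁ B₂ C₁ C₂) : LocFoc Ω Ω' τ := by
  have IA : Ind4 A₁ A₂ B₂ C₂ := P.swap.ind.swap01
  have IB : Ind4 B₁ B₂ C₂ A₂ := P.rot.swap.ind.swap01
  have IC : Ind4 C₁ C₂ A₂ B₂ := P.rot.rot.swap.ind.swap01
  obtain ⟨p, hp⟩ := hv.prism_foc h h' hτ P
  obtain ⟨q, hq⟩ := hv.prism_foc h h' hτ P.rot
  obtain ⟨r, hr⟩ := hv.prism_foc h h' hτ P.rot.rot
  obtain ⟨a₀, a₁, a₂, a₃, ha⟩ := IA.coords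
  obtain ⟨b₀, b₁, b₂, b₃, hb⟩ := IB.coords
  obtain ⟨c₀, c₁, c₂, c₃, hc⟩ := IC.coords
  obtain ⟨x₁, x₂, y₁, y₂, z₁, z₂, hx₁, hx₂, hy₁, hy₂, hz₁, hz₂, s1, s2, r1, r2⟩ := P.rel
  set M := x₁ / 2 + x₂ / 2 + y₂ + z₂ with hM
  have hMp : 0 < M := by positivity
  set o : Euc 3 := (x₁ / 2 / M) • A₁ + (x₂ / 2 / M) • A₂ + (y₂ / M) • B₂ + (z₂ / M) • C₂ with ho
  have va := ha.val IA (by rw [← add_div, ← add_div, ← add_div, ← hM, div_self hMp.ne']) ho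
  have vb := hb.val IB (x := o) (a := y₁ / 2 / M) (b := y₂ / 2 / M) (c := z₂ / M) (d := x₂ / M)
    (by
      rw [← add_div, ← add_div, ← add_div, div_eq_one_iff_eq hMp.ne', hM]
      linarith) (by
      rw [ho]
      linear_combination (norm := skip) (-1 / 2 / M) • r1
      clear_value M
      match_scalars <;> field_simp <;> ring)
  have vc := hc.val IC (x := o) (a := z₁ / 2 / M) (b := z₂ / 2 / M) (c := x₂ / M) (d := y₂ / M)
    (by
      rw [← add_div, ← add_div, ← add_div, div_eq_one_iff_eq hMp.ne', hM]
      linarith) (by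
      rw [ho]
      linear_combination (norm := skip) (-1 / 2 / M) • r2
      clear_value M
      match_scalars <;> field_simp <;> ring)
  refine ⟨{x | 0 < a₀ x ∧ 0 < a₁ x ∧ 0 < a₂ x ∧ 0 < a₃ x} ∩
    ({x | 0 < b₀ x ∧ 0 < b₁ x ∧ 0 < b₂ x ∧ 0 < b₃ x} ∩
      {x | 0 < c₀ x ∧ 0 < c₁ x ∧ 0 < c₂ x ∧ 0 < c₃ x}),
    pos_open.inter (pos_open.inter pos_open), ?_, o, ?_, A₁, P.mA₁, B₁, P.mB₁, C₁, P.mC₁, p, q, r,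
    ?_, ?_, ?_, ?_⟩
  · rintro x ⟨⟨h0, h1, h2, h3⟩, -⟩
    rw [ha.eq x]
    exact h.int4 IA P.mA₁.1 P.mA₂.1 P.mB₂.1 P.mC₂.1 h0 h1 h2 h3 (ha.sum x)
  · simp only [mem_inter_iff, mem_ofPred_eq, va, vb, vc]
    refine ⟨⟨?_, ?_, ?_, ?_⟩, ⟨?_, ?_, ?_, ?_⟩, ⟨?_, ?_, ?_, ?_⟩⟩ <;> positivity
  · -- `o = (½ x₁A₁ + ½ x₂A₂ + y₁B₁ + z₁C₁ + 2(x₂A₂ - x₁A₁)) / M`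
    refine P.ind.swap01.replace (k := o) (a := 5 / 2 * x₂ / M) (b := -(3 / 2 * x₁) / M)
      (c := y₁ / M) (d := z₁ / M) ?_ ?_ (by positivity)
    · rw [← add_div, ← add_div, ← add_div, div_eq_one_iff_eq hMp.ne', hM]
      linarith
    · rw [ho]
      linear_combination (norm := skip) (-1 / M) • r1 + (-1 / M) • r2
      clear_value M
      match_scalars <;> field_simp <;> ring
  · rintro x ⟨⟨h0, h1, h2, h3⟩, -⟩
    rw [ha.eq x]
    exact hp _ _ _ _ h0 h1 h2 h3 (ha.sum x)
  · rintro x ⟨-, ⟨h0, h1, h2, h3⟩, -⟩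
    rw [hb.eq x]
    exact hq _ _ _ _ h0 h1 h2 h3 (hb.sum x)
  · rintro x ⟨-, -, ⟨h0, h1, h2, h3⟩⟩
    rw [hc.eq x]
    exact hr _ _ _ _ h0 h1 h2 h3 (hc.sum x)

/-! ### Conclusion -/

lemma projective_of_not_extCone (h : Dom Ω) (h' : Dom Ω') (hτ : IsHilbertIsometry Ω Ω' τ)
    (hc : ¬ ExtCone Ω) : IsProjectiveBetween Ω Ω' τ := by
  by_cases hv : NoVis Ω
  · obtain ⟨A₁, A₂, B₁, B₂, C₁, C₂, P⟩ := hv.exists_prism h hc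
    exact projective_of_locFoc h h' hτ (hv.locFoc h h' hτ P)
  · unfold NoVis at hv
    push Not at hv
    obtain ⟨e, he, f, hf, a, b, ha, hb, hab, hm⟩ := hv
    -- an extreme point is not in `Ω`, so the weights are positive
    have ha' : 0 < a := by
      rcases ha.eq_or_lt with rfl | ha
      · obtain rfl : b = 1 := by linarith
        exact absurd (ext3 h hf) (h.not_frontier (by simpa using hm))
      · exact ha
    have hb' : 0 < b := by
      rcases hb.eq_or_lt with rfl | hb
      · obtain rfl : a = 1 := by linarith
        exact absurd (ext3 h he) (h.not_frontier (by simpa using hm))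
      · exact hb
    exact projective_of_locFoc h h' hτ (locFoc_of_visible h h' hτ he hf
      (h.openSegment he.1 hf.1 ha' hb' hab hm (by norm_num) (by norm_num) (by norm_num)))

lemma dom_of_compact (hne : Ω.Nonempty)
    (hK : ∃ K : Set (Euc 3), IsCompact K ∧ Convex ℝ K ∧ Ω = interior K) : Dom Ω := by
  obtain ⟨K, hK, hcv, rfl⟩ := hK
  exact ⟨isOpen_interior, hcv.interior, hK.isBounded.subset interior_subset, hne⟩

end prismmain

/-- If `Ω, Ω'` are interiors of compact convex sets in `ℝ³` which are
isometric for their Hilbert metrics and `Ω` is not a cone, then `Ω'` is not a cone and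
`Isom(Ω,Ω') = PGL(Ω,Ω')`: a map `τ` is an isometry from `(Ω,d_Ω)` to `(Ω',d_{Ω'})` iff
it is the restriction of a projective transformation mapping `Ω` onto `Ω'`. -/
theorem stmt_5 (Ω Ω' : Set (Euc 3)) (hne : Ω.Nonempty) (hne' : Ω'.Nonempty)
    (hK : ∃ K : Set (Euc 3), IsCompact K ∧ Convex ℝ K ∧ Ω = interior K)
    (hK' : ∃ K' : Set (Euc 3), IsCompact K' ∧ Convex ℝ K' ∧ Ω' = interior K')
    (hiso : ∃ τ : Euc 3 → Euc 3, IsHilbertIsometry Ω Ω' τ)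
    (hcone : ¬ IsCone Ω) :
    ¬ IsCone Ω' ∧
      ∀ τ : Euc 3 → Euc 3, IsHilbertIsometry Ω Ω' τ ↔ IsProjectiveBetween Ω Ω' τ := by
  have h := dom_of_compact hne hK
  have h' := dom_of_compact hne' hK'
  have hE : ¬ ExtCone Ω := fun hh => hcone (isCone_of_extCone h hh)
  have hproj : ∀ τ : Euc 3 → Euc 3, IsHilbertIsometry Ω Ω' τ → IsProjectiveBetween Ω Ω' τ :=
    fun τ hτ => projective_of_not_extCone h h' hτ hE
  obtain ⟨τ, hτ⟩ := hiso
  exact ⟨fun hc => hE (extCone_of_projective h h' (hproj τ hτ) (extCone_of_isCone h' hc)),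
    fun σ => ⟨hproj σ, fun hp => isometry_of_projective h h' hp⟩⟩
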